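/- arXiv:1304.1639 — 2 statements merged into one kernel-verified Lean document; each statement's English description precedes it below -/
import Mathlib

section
/- Let X be a d-box and F ⊆ X a polybox. If 𝔉 is a proper suit for F which contains no twin pair of boxes and |𝔉| ≤ 11, then every proper suit 𝔊 for F either contains a twin pair of boxes or is equal to 𝔉. -/
/-- The subset of the `d`-box `X₁ × ⋯ × X_d` determined by a box
`K = K₁ × ⋯ × K_d`. -/
def boxSet {d : ℕ} {X : Fin d → Type*} (K : ∀ i, Set (X i)) :
    Set (∀ i, X i) :=
  {x | ∀ i, x i ∈ K i}

/-- `K` is a box: each factor is nonempty. -/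
def IsBox {d : ℕ} {X : Fin d → Type*} (K : ∀ i, Set (X i)) : Prop :=
  ∀ i, (K i).Nonempty

/-- `K` is a proper box: each factor is nonempty and proper. -/
def IsProperBox {d : ℕ} {X : Fin d → Type*} (K : ∀ i, Set (X i)) : Prop :=
  ∀ i, (K i).Nonempty ∧ K i ≠ Set.univ

/-- Boxes `K` and `G` are dichotomous: `K_i = X_i \ G_i` for some `i`. -/
def BoxDichotomous {d : ℕ} {X : Fin d → Type*}
    (K G : ∀ i, Set (X i)) : Prop :=
  ∃ i, K i = (G i)ᶜ

/-- A suit: a family of pairwise dichotomous boxes. -/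
def IsSuit {d : ℕ} {X : Fin d → Type*} (𝓕 : Set (∀ i, Set (X i))) : Prop :=
  (∀ K ∈ 𝓕, IsBox K) ∧ 𝓕.Pairwise BoxDichotomous

/-- Boxes `K` and `G` form a twin pair. -/
def BoxTwinPair {d : ℕ} {X : Fin d → Type*}
    (K G : ∀ i, Set (X i)) : Prop :=
  ∃ j, K j = (G j)ᶜ ∧ ∀ i, i ≠ j → K i = G i

/-! ### Words over paired letters and generic points -/

set_option linter.unusedSectionVars false

namespace PB

variable {ι P : Type*} [Fintype ι] [DecidableEq ι] [DecidableEq P]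

/-- The complementary letter. -/
def neg (l : P × Bool) : P × Bool := (l.1, !l.2)

@[simp] theorem neg_neg' (l : P × Bool) : neg (neg l) = l := by simp [neg]
@[simp] theorem neg_fst (l : P × Bool) : (neg l).1 = l.1 := rfl
@[simp] theorem neg_snd (l : P × Bool) : (neg l).2 = !l.2 := rfl
@[simp] theorem neg_ne (l : P × Bool) : neg l ≠ l := by
  intro h; have := congrArg Prod.snd h; simp at this
@[simp] theorem ne_neg (l : P × Bool) : l ≠ neg l := fun h => neg_ne l h.symm
theorem neg_inj {l m : P × Bool} (h : neg l = neg m) : l = m := by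
  rw [← neg_neg' l, h, neg_neg']
theorem eq_or_neg {l m : P × Bool} (h : l.1 = m.1) : l = m ∨ l = neg m := by
  rcases l with ⟨a, b⟩; rcases m with ⟨c, d⟩
  simp only at h; subst h
  cases b <;> cases d <;> simp [neg]

/-- The point `x` lies in the word `v`. -/
def inn (x : ι → P → Bool) (v : ι → P × Bool) : Prop := ∀ i, x i (v i).1 = (v i).2

/-- Restricted indicator. -/
def indOn (J : Finset ι) (v : ι → P × Bool) (x : ι → P → Bool) : ℤ :=
  if ∀ i ∈ J, x i (v i).1 = (v i).2 then 1 else 0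

/-- Dichotomous words. -/
def Dich (u v : ι → P × Bool) : Prop := ∃ i, u i = neg (v i)

/-- Codes. -/
def Code (V : Finset (ι → P × Bool)) : Prop := ∀ u ∈ V, ∀ v ∈ V, u ≠ v → Dich u v

/-- Twin pair freeness. -/
def TF (V : Finset (ι → P × Bool)) : Prop :=
  ∀ u ∈ V, ∀ j, Function.update u j (neg (u j)) ∉ V

/-- The sum of indicators. -/
def sm (V : Finset (ι → P × Bool)) (x : ι → P → Bool) : ℤ := ∑ v ∈ V, indOn Finset.univ v x

theorem sat (M : ι → P × Bool → Prop) (h : ∀ l m, M l m → ¬ M l (neg m)) :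
    ∃ x : ι → P → Bool, ∀ l m, M l m → x l m.1 = m.2 := by
  classical
  refine ⟨fun l r => decide (M l (r, true)), fun l m hm => ?_⟩
  rcases m with ⟨r, b⟩
  cases b
  · simpa [neg] using h l _ hm
  · simpa using hm

theorem avoid (p : ι → P × Bool) (M : ι → P × Bool → Prop) (h : ∀ l m, M l m → ¬ M l (neg m))
    (hp : ∀ l m, M l m → m ≠ p l) :
    ∃ x, inn x p ∧ ∀ l m, M l m → x l m.1 ≠ m.2 := by
  obtain ⟨x, hx⟩ := sat (fun l m => m = p l ∨ M l (neg m)) (by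
    rintro l m (h1 | h1) (h2 | h2)
    · subst h1; exact neg_ne _ h2
    · exact hp l _ h2 (by simpa using h1)
    · exact hp l _ h1 h2
    · exact h _ _ h1 h2)
  refine ⟨x, fun i => hx i _ (Or.inl rfl), fun l m hm => ?_⟩
  have := hx l (neg m) (Or.inr (by simpa using hm))
  simp only [neg_fst, neg_snd] at this
  rw [this]; simp

theorem exists_inn (p : ι → P × Bool) : ∃ x, inn x p := by
  obtain ⟨x, hx, _⟩ := avoid p (fun _ _ => False) (by simp) (by simp)
  exact ⟨x, hx⟩

theorem not_both {x : ι → P → Bool} {u v : ι → P × Bool} (h : Dich u v) (hu : inn x u)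
    (hv : inn x v) : False := by
  obtain ⟨i, hi⟩ := h
  have h1 := hu i; have h2 := hv i
  rw [hi] at h1; simp [h2] at h1

theorem code_unique {V : Finset (ι → P × Bool)} (hV : Code V) {x : ι → P → Bool}
    {u v : ι → P × Bool} (hu : u ∈ V) (hv : v ∈ V) (h1 : inn x u) (h2 : inn x v) : u = v := by
  by_contra h; exact not_both (hV u hu v hv h) h1 h2

theorem inn_ne {x : ι → P → Bool} {u v : ι → P × Bool} (hu : inn x u) (hv : inn x v) (i : ι)
    (h : u i ≠ v i) : (u i).1 ≠ (v i).1 := by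
  intro h'
  exact h (Prod.ext h' (by rw [← hu i, ← hv i, h']))

/-- change one bit -/
def setp (x : ι → P → Bool) (l : ι) (r : P) (b : Bool) : ι → P → Bool :=
  fun i s => if i = l ∧ s = r then b else x i s

theorem setp_ne {x : ι → P → Bool} {l : ι} {r : P} {b : Bool} {i : ι} {s : P}
    (h : i = l → s ≠ r) : setp x l r b i s = x i s := by
  unfold setp; rw [if_neg]; tauto

@[simp] theorem setp_eq {x : ι → P → Bool} {l : ι} {r : P} {b : Bool} :
    setp x l r b l r = b := by simp [setp]

theorem inn_setp {x : ι → P → Bool} {l : ι} {r : P} {b : Bool} {v : ι → P × Bool}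
    (h : (v l).1 ≠ r) : inn (setp x l r b) v ↔ inn x v := by
  unfold inn
  refine forall_congr' fun i => ?_
  rw [setp_ne]; rintro rfl; exact h

theorem inn_setp_eq {x : ι → P → Bool} {l : ι} {r : P} {b : Bool} {v : ι → P × Bool}
    (h : v l = (r, b)) : inn (setp x l r b) v ↔ ∀ i, i ≠ l → x i (v i).1 = (v i).2 := by
  unfold inn
  constructor
  · intro H i hi
    have := H i; rwa [setp_ne (fun h => absurd h hi)] at this
  · intro H i
    by_cases hi : i = l
    · subst hi; rw [h]; simp
    · rw [setp_ne (fun h => absurd h hi)]; exact H i hi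

theorem inn_upd {x : ι → P → Bool} {v : ι → P × Bool} {j : ι} {m : P × Bool} :
    inn x (Function.update v j m) ↔ x j m.1 = m.2 ∧ ∀ i, i ≠ j → x i (v i).1 = (v i).2 := by
  unfold inn
  constructor
  · intro H
    refine ⟨by simpa using H j, fun i hi => by simpa [hi] using H i⟩
  · rintro ⟨h1, h2⟩ i
    by_cases hi : i = j
    · subst hi; simpa using h1
    · simpa [hi] using h2 i hi

theorem indOn_one {J : Finset ι} {v : ι → P × Bool} {x : ι → P → Bool}
    (h : ∀ i ∈ J, x i (v i).1 = (v i).2) : indOn J v x = 1 := if_pos h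
theorem indOn_zero {J : Finset ι} {v : ι → P × Bool} {x : ι → P → Bool}
    (h : ¬ ∀ i ∈ J, x i (v i).1 = (v i).2) : indOn J v x = 0 := if_neg h
theorem indOn_nonneg (J : Finset ι) (v : ι → P × Bool) (x : ι → P → Bool) :
    0 ≤ indOn J v x := by unfold indOn; split_ifs <;> simp
theorem ind_univ_pos {v : ι → P × Bool} {x : ι → P → Bool} :
    0 < indOn Finset.univ v x ↔ inn x v := by
  unfold indOn inn; split_ifs with h <;> simpa using h
theorem ind_univ_one {v : ι → P × Bool} {x : ι → P → Bool} (h : inn x v) :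
    indOn Finset.univ v x = 1 := indOn_one fun i _ => h i
theorem ind_univ_zero {v : ι → P × Bool} {x : ι → P → Bool} (h : ¬ inn x v) :
    indOn Finset.univ v x = 0 := indOn_zero fun H => h fun i => H i (by simp)

theorem sm_pos {V : Finset (ι → P × Bool)} {x : ι → P → Bool} :
    0 < sm V x ↔ ∃ v ∈ V, inn x v := by
  unfold sm
  constructor
  · intro h
    obtain ⟨v, hv, h⟩ := Finset.exists_lt_of_sum_lt (s := V) (f := fun _ => (0:ℤ))
      (g := fun v => indOn Finset.univ v x) (by simpa using h)
    exact ⟨v, hv, ind_univ_pos.1 h⟩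
  · rintro ⟨v, hv, h⟩
    exact Finset.sum_pos' (fun _ _ => indOn_nonneg _ _ _) ⟨v, hv, ind_univ_pos.2 h⟩

theorem sm_nonneg (V : Finset (ι → P × Bool)) (x : ι → P → Bool) : 0 ≤ sm V x :=
  Finset.sum_nonneg fun _ _ => indOn_nonneg _ _ _

theorem sm_empty (x : ι → P → Bool) : sm (∅ : Finset (ι → P × Bool)) x = 0 := by simp [sm]

/-- Equal sums have equal numbers of terms. -/
theorem card_of_sum {α β : Type*} (S : Finset α) (T : Finset β) (f : α → ι → P × Bool)
    (g : β → ι → P × Bool) (J : Finset ι)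
    (h : ∀ x, ∑ a ∈ S, indOn J (f a) x = ∑ b ∈ T, indOn J (g b) x) : S.card = T.card := by
  induction J using Finset.induction_on with
  | empty =>
    have := h (fun _ _ => true)
    simp only [indOn, Finset.notMem_empty, false_imp_iff, implies_true, if_true] at this
    simpa using this
  | insert j J hj ih =>
    refine ih fun x => ?_
    have key : ∀ v : ι → P × Bool, indOn J v x = indOn (insert j J) v x +
        indOn (insert j J) v (fun i r => if i = j then !x i r else x i r) := by
      intro v
      have e : ∀ y : ι → P → Bool, indOn (insert j J) v y =
          if y j (v j).1 = (v j).2 then indOn J v y else 0 := by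
        intro y; unfold indOn; simp only [Finset.forall_mem_insert]
        split_ifs <;> tauto
      have e2 : indOn J v (fun i r => if i = j then !x i r else x i r) = indOn J v x := by
        unfold indOn
        congr 1
        apply propext
        refine forall_congr' fun i => forall_congr' fun hi => ?_
        have hne : i ≠ j := by rintro rfl; exact hj hi
        simp [hne]
      rw [e, e, e2]
      simp only [if_true]
      cases x j (v j).1 <;> cases (v j).2 <;> simp
    simp only [key, Finset.sum_add_distrib, h]

theorem card_of_sm {V W : Finset (ι → P × Bool)} (h : ∀ x, sm V x = sm W x) :
    V.card = W.card := card_of_sum V W id id Finset.univ h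

/-- `u ⊆ v` forces equality. -/
theorem cover_one {u v : ι → P × Bool} (h : ∀ x, inn x u → inn x v) : v = u := by
  by_contra hne
  obtain ⟨l, hl⟩ := Function.ne_iff.1 hne
  obtain ⟨x, hx, hx'⟩ := avoid u (fun i m => i = l ∧ m = v l)
    (by rintro i m ⟨rfl, rfl⟩ ⟨_, h⟩; exact neg_ne _ h) (by rintro i m ⟨rfl, rfl⟩; exact hl)
  exact hx' l _ ⟨rfl, rfl⟩ (h x hx l)

theorem cover_two {u v w : ι → P × Bool} (h : ∀ x, inn x u → inn x v ∨ inn x w)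
    (hv : v ≠ u) (hw : w ≠ u) :
    ∃ k z, z.1 ≠ (u k).1 ∧ v = Function.update u k z ∧ w = Function.update u k (neg z) := by
  have key : ∀ l m, v l ≠ u l → w m ≠ u m → l = m ∧ v l = neg (w l) := by
    intro l m hl hm
    by_contra hc
    obtain ⟨x, hx, hx'⟩ := avoid u (fun i a => (i = l ∧ a = v l) ∨ (i = m ∧ a = w m)) (by
      rintro i a (⟨rfl, rfl⟩ | ⟨rfl, rfl⟩) (⟨h1, h2⟩ | ⟨h1, h2⟩)
      · exact neg_ne _ h2
      · subst h1; exact hc ⟨rfl, by rw [← h2]; simp⟩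
      · subst h1; exact hc ⟨rfl, h2.symm⟩
      · exact neg_ne _ h2)
      (by rintro i m (⟨rfl, rfl⟩ | ⟨rfl, rfl⟩) <;> assumption)
    rcases h x hx with h1 | h1
    · exact hx' l _ (Or.inl ⟨rfl, rfl⟩) (h1 l)
    · exact hx' m _ (Or.inr ⟨rfl, rfl⟩) (h1 m)
  obtain ⟨l, hl⟩ := Function.ne_iff.1 hv
  obtain ⟨m, hm⟩ := Function.ne_iff.1 hw
  obtain ⟨rfl, hlm⟩ := key l m hl hm
  refine ⟨l, v l, ?_, ?_, ?_⟩
  · intro h'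
    rcases eq_or_neg h' with h' | h'
    · exact hl h'
    · rw [h'] at hlm; exact hm (neg_inj hlm.symm)
  · funext i
    by_cases hi : i = l
    · subst hi; simp
    · simp only [Function.update_of_ne hi]
      by_contra hc; exact hi (key i l hc hm).1
  · funext i
    by_cases hi : i = l
    · subst hi; simp [hlm]
    · simp only [Function.update_of_ne hi]
      by_contra hc; exact hi (key l i hl hc).1.symm

/-- Zero sums with four words. -/
theorem four {u1 u2 v1 v2 : ι → P × Bool}
    (h : ∀ x, indOn Finset.univ u1 x + indOn Finset.univ u2 x =
      indOn Finset.univ v1 x + indOn Finset.univ v2 x) :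
    (v1 = u1 ∧ v2 = u2) ∨ (v2 = u1 ∧ v1 = u2) ∨
    ∃ k z, z.1 ≠ (u1 k).1 ∧ u2 = Function.update u1 k (neg (u1 k)) ∧
      v1 = Function.update u1 k z ∧ v2 = Function.update u1 k (neg z) := by
  have aux : ∀ u v : ι → P × Bool, (∀ x, indOn Finset.univ u x = indOn Finset.univ v x) →
      v = u := fun u v h => cover_one fun x hx => by
    rw [← ind_univ_pos, ← h x]; exact ind_univ_pos.2 hx
  have aux2 : ∀ u u' v w : ι → P × Bool, (∀ x, indOn Finset.univ u x + indOn Finset.univ u' x =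
      indOn Finset.univ v x + indOn Finset.univ w x) → ∀ x, inn x u → inn x v ∨ inn x w := by
    intro u u' v w h x hx
    by_contra hc
    push Not at hc
    have h1 := h x
    rw [ind_univ_one hx, ind_univ_zero hc.1, ind_univ_zero hc.2] at h1
    have := indOn_nonneg Finset.univ u' x
    omega
  by_cases h1 : v1 = u1
  · left; subst h1; exact ⟨rfl, aux _ _ fun x => by have := h x; omega⟩
  by_cases h2 : v2 = u1
  · right; left; subst h2; exact ⟨rfl, aux _ _ fun x => by have := h x; omega⟩
  right; right
  obtain ⟨k, z, hz, e1, e2⟩ := cover_two (aux2 _ _ _ _ h) h1 h2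
  refine ⟨k, z, hz, ?_, e1, e2⟩
  have h3 : u2 ≠ v1 := by
    intro h3; subst h3
    exact h2 (aux _ _ fun x => by have := h x; omega)
  obtain ⟨k', z', hz', f1, f2⟩ := cover_two (aux2 v1 v2 u1 u2 fun x => (h x).symm) (Ne.symm h1) h3
  have hk : k' = k := by
    by_contra hk
    have e := congrFun f1 k
    rw [Function.update_of_ne (Ne.symm hk), e1] at e
    simp at e; rw [← e] at hz; exact hz rfl
  subst hk
  have e := congrFun f1 k'
  simp at e
  rw [f2, e1, e]; simp

end PB

set_option linter.unusedSectionVars false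

namespace PB

variable {ι P : Type*} [Fintype ι] [DecidableEq ι] [DecidableEq P]

theorem Code.mono {C D : Finset (ι → P × Bool)} (h : Code C) (hs : D ⊆ C) : Code D :=
  fun u hu v hv => h u (hs hu) v (hs hv)
theorem TF.mono {C D : Finset (ι → P × Bool)} (h : TF C) (hs : D ⊆ C) : TF D :=
  fun u hu j hj => h u (hs hu) j (hs hj)

theorem TF.elim {C : Finset (ι → P × Bool)} (h : TF C) {u v : ι → P × Bool} (hu : u ∈ C)
    (hv : v ∈ C) (j : ι) (hj : v j = neg (u j)) (ho : ∀ l, l ≠ j → v l = u l) : False := by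
  refine h u hu j ?_
  have : Function.update u j (neg (u j)) = v := by
    funext l
    by_cases hl : l = j
    · subst hl; simp [hj]
    · simp [hl, ho l hl]
  rwa [this]

/-- Two words touch: they have a common point. -/
def Touch (u v : ι → P × Bool) : Prop := ∃ x, inn x u ∧ inn x v

theorem Touch.symm {u v : ι → P × Bool} (h : Touch u v) : Touch v u := by
  obtain ⟨x, h1, h2⟩ := h; exact ⟨x, h2, h1⟩

theorem Touch.ne {u v : ι → P × Bool} (h : Touch u v) (i : ι) (hi : u i ≠ v i) :
    (u i).1 ≠ (v i).1 := by
  obtain ⟨x, h1, h2⟩ := h; exact inn_ne h1 h2 i hi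

theorem Touch.neg_ne {u v : ι → P × Bool} (h : Touch u v) (i : ι) : u i ≠ neg (v i) := by
  intro hi
  refine h.ne i (by rw [hi]; simp) (by rw [hi]; simp)

theorem Touch.not_dich {u v : ι → P × Bool} (h : Touch u v) : ¬ Dich u v := by
  rintro ⟨i, hi⟩; exact h.neg_ne i hi

theorem touch_of_not_dich {u v : ι → P × Bool} (h : ¬ Dich u v) : Touch u v := by
  obtain ⟨x, hx⟩ := sat (fun l m => m = u l ∨ m = v l) (by
    rintro l m (h1 | h1) (h2 | h2)
    · subst h1; exact neg_ne _ h2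
    · subst h1; exact h ⟨l, by rw [← h2]; simp⟩
    · subst h1; exact h ⟨l, by rw [← h2]⟩
    · subst h1; exact neg_ne _ h2)
  exact ⟨x, fun i => hx i _ (Or.inl rfl), fun i => hx i _ (Or.inr rfl)⟩

theorem avoid2 {p q : ι → P × Bool} (ht : Touch p q) (M : ι → P × Bool → Prop)
    (h : ∀ l m, M l m → ¬ M l (neg m))
    (hp : ∀ l m, M l m → m ≠ p l) (hq : ∀ l m, M l m → m ≠ q l) :
    ∃ x, inn x p ∧ inn x q ∧ ∀ l m, M l m → x l m.1 ≠ m.2 := by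
  obtain ⟨x, hx⟩ := sat (fun l m => m = p l ∨ m = q l ∨ M l (neg m)) (by
    rintro l m (h1 | h1 | h1) (h2 | h2 | h2)
    · subst h1; exact neg_ne _ h2
    · subst h1; exact ht.neg_ne l (by rw [← h2]; simp)
    · exact hp l _ h2 (by simpa using h1)
    · subst h1; exact ht.neg_ne l (by rw [← h2])
    · subst h1; exact neg_ne _ h2
    · exact hq l _ h2 (by simpa using h1)
    · exact hp l _ h1 h2
    · exact hq l _ h1 h2
    · exact h _ _ h1 h2)
  refine ⟨x, fun i => hx i _ (Or.inl rfl), fun i => hx i _ (Or.inr (Or.inl rfl)),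
    fun l m hm => ?_⟩
  have := hx l (neg m) (Or.inr (Or.inr (by simpa using hm)))
  simp only [neg_fst, neg_snd] at this
  rw [this]; simp

/-- one extra constraint -/
theorem avoid21 {p q : ι → P × Bool} (ht : Touch p q) (l : ι) (m : P × Bool)
    (hp : m ≠ p l) (hq : m ≠ q l) : ∃ x, inn x p ∧ inn x q ∧ x l m.1 ≠ m.2 := by
  obtain ⟨x, h1, h2, h3⟩ := avoid2 ht (fun i a => i = l ∧ a = m)
    (by rintro i a ⟨rfl, rfl⟩ ⟨_, h⟩; exact PB.neg_ne _ h)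
    (by rintro i a ⟨rfl, rfl⟩; exact hp) (by rintro i a ⟨rfl, rfl⟩; exact hq)
  exact ⟨x, h1, h2, h3 l m ⟨rfl, rfl⟩⟩

theorem flip_cover {C : Finset (ι → P × Bool)} (hC : Code C) {q : ι → P × Bool}
    (hq : ∀ x, inn x q → ∃ c ∈ C, inn x c) {c1 : ι → P × Bool} (hc1 : c1 ∈ C) {j : ι}
    (hj : (c1 j).1 ≠ (q j).1) {x : ι → P → Bool} (hxq : inn x q) (hx1 : inn x c1) :
    ∃ c ∈ C, c j = neg (c1 j) ∧ ∀ i, i ≠ j → x i (c i).1 = (c i).2 := by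
  obtain ⟨c, hc, hxc⟩ := hq (setp x j (c1 j).1 (!(c1 j).2)) ((inn_setp (Ne.symm hj)).2 hxq)
  by_cases h : (c j).1 = (c1 j).1
  · refine ⟨c, hc, ?_, fun i hi => ?_⟩
    · rcases eq_or_neg h with h | h
      · have := hxc j; rw [h] at this; simp at this
      · exact h
    · have := hxc i; rwa [setp_ne (fun h => absurd h hi)] at this
  · have := (inn_setp h).1 hxc
    have e := code_unique hC hc hc1 this hx1
    exact absurd (by rw [e]) h

theorem L1_aux {C : Finset (ι → P × Bool)} (hC : Code C) (hT : TF C) {q : ι → P × Bool}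
    (hq : ∀ x, inn x q → ∃ c ∈ C, inn x c) (ht : ∀ c ∈ C, Touch c q)
    {c1 : ι → P × Bool} (hc1 : c1 ∈ C) {j : ι}
    (hj : (c1 j).1 ≠ (q j).1) (h1 : ∀ c ∈ C, c j = c1 j → c = c1)
    (h2 : (C.filter (fun c => c j = neg (c1 j))).card ≤ 2) : False := by
  have F1 := fun x => @flip_cover _ _ _ _ _ C hC q hq c1 hc1 j hj x
  have F2 : ∀ c ∈ C, c j = neg (c1 j) → ∀ x, inn x q → inn x c →
      ∀ i, i ≠ j → x i (c1 i).1 = (c1 i).2 := by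
    intro c hc hcj x hx hxc
    obtain ⟨c', hc', e, h⟩ := flip_cover hC hq hc (j := j) (by rw [hcj]; simpa using hj) hx hxc
    rw [hcj, neg_neg'] at e
    have := h1 c' hc' e
    subst this; exact h
  have G2 : ∀ c ∈ C, c j = neg (c1 j) → ∀ l, l ≠ j → c1 l = q l ∨ c1 l = c l := by
    intro c hc hcj l hl
    by_contra hcon
    push Not at hcon
    obtain ⟨x, hx1, hx2, hx3⟩ := avoid21 (ht c hc).symm l (c1 l) hcon.1 hcon.2
    exact hx3 (F2 c hc hcj x hx1 hx2 l hl)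
  set D := C.filter (fun c => c j = neg (c1 j)) with hD
  have memD : ∀ c, c ∈ D ↔ c ∈ C ∧ c j = neg (c1 j) := by simp [hD]
  have hDne : D.card ≠ 0 := by
    obtain ⟨x, hx1, hx2⟩ := ht c1 hc1
    obtain ⟨c, hc, e, _⟩ := F1 x hx2 hx1
    exact Finset.card_ne_zero_of_mem ((memD c).2 ⟨hc, e⟩)
  rcases (show D.card = 1 ∨ D.card = 2 by omega) with hd | hd
  · obtain ⟨c2, hc2⟩ := Finset.card_eq_one.1 hd
    have m2 := (memD c2).1 (by simp [hc2])
    refine hT.elim hc1 m2.1 j m2.2 fun l hl => ?_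
    rcases G2 c2 m2.1 m2.2 l hl with h | h
    · by_contra hne
      obtain ⟨x, hx1, hx2, hx3⟩ := avoid21 (ht c1 hc1) l (c2 l) hne (by rwa [← h])
      obtain ⟨c, hc, e, hh⟩ := F1 x hx2 hx1
      have : c = c2 := by simpa [hc2] using (memD c).2 ⟨hc, e⟩
      subst this
      exact hx3 (hh l hl)
    · exact h.symm
  · obtain ⟨c2, c3, h23, hDe⟩ := Finset.card_eq_two.1 hd
    have m2 := (memD c2).1 (by simp [hDe])
    have m3 := (memD c3).1 (by simp [hDe])
    obtain ⟨l0, hl0⟩ := hC c2 m2.1 c3 m3.1 h23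
    have hl0j : l0 ≠ j := by
      rintro rfl; rw [m2.2, m3.2] at hl0; exact neg_ne _ hl0.symm
    have e0 : c1 l0 = q l0 := by
      rcases G2 c2 m2.1 m2.2 l0 hl0j with h | h
      · exact h
      rcases G2 c3 m3.1 m3.2 l0 hl0j with h' | h'
      · exact h'
      · rw [← h, ← h'] at hl0; simp at hl0
    have n2 : c2 l0 ≠ q l0 := by
      intro h
      exact (ht c3 m3.1).neg_ne l0 (by rw [← h, hl0]; simp)
    have n3 : c3 l0 ≠ q l0 := by
      intro h
      exact (ht c2 m2.1).neg_ne l0 (by rw [← h, hl0])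
    have key : ∀ a b : ι → P × Bool, D = {a, b} → b l0 ≠ q l0 → ∀ l, l ≠ l0 → c1 l = q l →
        a l ≠ q l → l ≠ j → False := by
      intro a b hab hb l hl hc1l hal hlj
      obtain ⟨x, hx1, hx2, hx3⟩ := avoid2 (ht c1 hc1)
        (fun i m => (i = l ∧ m = a l) ∨ (i = l0 ∧ m = b l0)) (by
          rintro i m (⟨rfl, rfl⟩ | ⟨rfl, rfl⟩) (⟨h1, h2⟩ | ⟨h1, h2⟩)
          · exact neg_ne _ h2
          · exact hl h1
          · exact hl h1.symm
          · exact neg_ne _ h2)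
        (by rintro i m (⟨rfl, rfl⟩ | ⟨rfl, rfl⟩)
            · rwa [hc1l]
            · rwa [e0])
        (by rintro i m (⟨rfl, rfl⟩ | ⟨rfl, rfl⟩) <;> assumption)
      obtain ⟨c, hc, e, hh⟩ := F1 x hx2 hx1
      have : c = a ∨ c = b := by simpa [hab] using (memD c).2 ⟨hc, e⟩
      rcases this with rfl | rfl
      · exact hx3 l _ (Or.inl ⟨rfl, rfl⟩) (hh l hlj)
      · exact hx3 l0 _ (Or.inr ⟨rfl, rfl⟩) (hh l0 hl0j)
    refine hT.elim m3.1 m2.1 l0 hl0 fun l hl => ?_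
    by_cases hlj : l = j
    · subst hlj; rw [m2.2, m3.2]
    by_contra hne
    have e1 : c1 l = q l := by
      rcases G2 c2 m2.1 m2.2 l hlj with h | h
      · exact h
      rcases G2 c3 m3.1 m3.2 l hlj with h' | h'
      · exact h'
      · exact absurd (by rw [← h, ← h']) hne
    by_cases ha : c2 l = q l
    · exact key c3 c2 (by rw [hDe, Finset.pair_comm]) n2 l hl e1
        (fun h => hne (ha.trans h.symm)) hlj
    · exact key c2 c3 hDe n3 l hl e1 ha hlj

/-- A twin pair free code with at most four words covers a word only trivially. -/
theorem L1 {q : ι → P × Bool} (n : ℕ) : ∀ C : Finset (ι → P × Bool), C.card = n → Code C →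
    TF C → n ≤ 4 → (∀ x, inn x q → ∃ c ∈ C, inn x c) → q ∈ C := by
  induction n using Nat.strong_induction_on generalizing q with
  | _ n ih =>
  intro C hn hC hT h4 hq
  have IH : ∀ q' : ι → P × Bool, ∀ D, D ⊆ C → D.card < n →
      (∀ x, inn x q' → ∃ c ∈ D, inn x c) → q' ∈ D := fun q' D hD hlt hc =>
    ih _ hlt D rfl (hC.mono hD) (hT.mono hD) (by omega) hc
  by_cases ht : ∀ c ∈ C, Touch c q
  swap
  · push Not at ht
    obtain ⟨c, hc, hct⟩ := ht
    have := IH q (C.erase c) (Finset.erase_subset _ _) (by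
      rw [Finset.card_erase_of_mem hc]
      have := Finset.card_pos.2 ⟨c, hc⟩; omega) (fun x hx => by
        obtain ⟨c', hc', h⟩ := hq x hx
        refine ⟨c', Finset.mem_erase.2 ⟨?_, hc'⟩, h⟩
        rintro rfl; exact hct ⟨x, h, hx⟩)
    exact Finset.mem_of_mem_erase this
  obtain ⟨x0, hx0⟩ := exists_inn q
  obtain ⟨c1, hc1, _⟩ := hq x0 hx0
  by_cases hone : ∀ c ∈ C, c = c1
  · have : c1 = q := cover_one fun x hx => by
      obtain ⟨c, hc, h⟩ := hq x hx
      rw [hone c hc] at h; exact h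
    rwa [← this]
  push Not at hone
  obtain ⟨c2, hc2, h12⟩ := hone
  obtain ⟨j, hj⟩ := hC c2 hc2 c1 hc1 h12
  have hq1 : (c1 j).1 ≠ (q j).1 := by
    by_cases h : c1 j = q j
    · rw [h] at hj; exact absurd hj ((ht c2 hc2).neg_ne j)
    · exact (ht c1 hc1).ne j h
  exfalso
  by_cases hR : ∀ c ∈ C, (c j).1 = (c1 j).1
  · have cov : ∀ y : P × Bool, y.1 = (c1 j).1 → ∀ d ∈ C, d j = neg y →
        Function.update q j y ∈ C := by
      intro y hy d hd hdy
      have := IH (Function.update q j y) (C.filter (fun c => c j = y)) (Finset.filter_subset _ _)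
        (by
          rw [← hn]; apply Finset.card_lt_card
          refine ⟨Finset.filter_subset _ _, fun h => ?_⟩
          have := (Finset.mem_filter.1 (h hd)).2
          rw [this] at hdy; exact ne_neg _ hdy)
        (fun x hx => by
          rw [inn_upd] at hx
          obtain ⟨c, hc, h⟩ := hq (setp x j (q j).1 (q j).2) ((inn_setp_eq (v := q) rfl).2 hx.2)
          have hcj := hR c hc
          rw [inn_setp (by rw [hcj]; exact hq1)] at h
          refine ⟨c, Finset.mem_filter.2 ⟨hc, ?_⟩, h⟩
          refine Prod.ext (hcj.trans hy.symm) ?_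
          rw [← h j, hcj, ← hy, hx.1])
      exact (Finset.mem_filter.1 this).1
    have a1 := cov (c1 j) rfl c2 hc2 hj
    have a2 := cov (neg (c1 j)) rfl c1 hc1 (by simp)
    refine hT.elim a1 a2 j (by simp) fun l hl => by simp [hl]
  · push Not at hR
    obtain ⟨r, hr, hrj⟩ := hR
    set A := C.filter (fun c => c j = c1 j) with hA
    set B := C.filter (fun c => c j = neg (c1 j)) with hB
    have hAB : A.card + B.card + 1 ≤ 4 := by
      have hd : Disjoint A B := by
        rw [Finset.disjoint_left]
        intro a ha hb
        simp only [hA, hB, Finset.mem_filter] at ha hb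
        rw [ha.2] at hb; exact ne_neg _ hb.2
      have hrn : r ∉ A ∪ B := by
        simp only [hA, hB, Finset.mem_union, Finset.mem_filter]
        rintro (⟨_, h⟩ | ⟨_, h⟩) <;> rw [h] at hrj <;> simp at hrj
      rw [← Finset.card_union_of_disjoint hd, ← Finset.card_insert_of_notMem hrn]
      refine (Finset.card_le_card ?_).trans (hn.trans_le h4)
      intro c hc
      simp only [hA, hB, Finset.mem_insert, Finset.mem_union, Finset.mem_filter] at hc
      rcases hc with rfl | hc | hc
      · exact hr
      · exact hc.1
      · exact hc.1
    have hA1 : c1 ∈ A := by simp [hA, hc1]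
    have hB1 : c2 ∈ B := by simp [hB, hc2, hj]
    have pa := Finset.card_pos.2 ⟨_, hA1⟩
    have pb := Finset.card_pos.2 ⟨_, hB1⟩
    by_cases h1 : A.card = 1
    · refine L1_aux hC hT hq ht hc1 hq1 (fun c hc e => ?_) (show B.card ≤ 2 by omega)
      exact Finset.card_le_one.1 h1.le _ (by simp [hA, hc, e]) _ hA1
    · refine L1_aux hC hT hq ht hc2 (by rw [hj]; exact hq1) (fun c hc e => ?_) ?_
      · exact Finset.card_le_one.1 (show B.card ≤ 1 by omega) _
          (by simp [hB, hc, e, hj]) _ hB1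
      · rw [hj]; simp only [neg_neg']; exact (show A.card ≤ 2 by omega)

theorem L1' {q : ι → P × Bool} {C : Finset (ι → P × Bool)} (hC : Code C) (hT : TF C)
    (h4 : C.card ≤ 4) (hq : ∀ x, inn x q → ∃ c ∈ C, inn x c) : q ∈ C :=
  L1 _ C rfl hC hT h4 hq

end PB

set_option linter.unusedSectionVars false

namespace PB

variable {ι P : Type*} [Fintype ι] [DecidableEq ι] [DecidableEq P]

/-- The words of `V` with letter `(a, f)` at `i`, normalised at `i`. -/
def cs (V : Finset (ι → P × Bool)) (i : ι) (a : P) (f : Bool) : Finset (ι → P × Bool) :=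
  (V.filter (fun v => v i = (a, f))).image (fun v => Function.update v i (a, true))

theorem mem_cs {V : Finset (ι → P × Bool)} {i : ι} {a : P} {f : Bool} {u : ι → P × Bool} :
    u ∈ cs V i a f ↔ u i = (a, true) ∧ Function.update u i (a, f) ∈ V := by
  unfold cs
  simp only [Finset.mem_image, Finset.mem_filter]
  constructor
  · rintro ⟨v, ⟨hv, hvi⟩, rfl⟩
    refine ⟨by simp, ?_⟩
    rw [Function.update_idem, ← hvi, Function.update_eq_self]; exact hv
  · rintro ⟨h1, h2⟩
    refine ⟨_, ⟨h2, by simp⟩, ?_⟩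
    rw [Function.update_idem, ← h1, Function.update_eq_self]

theorem cs_injOn (V : Finset (ι → P × Bool)) (i : ι) (a : P) (f : Bool) :
    Set.InjOn (fun v => Function.update v i (a, true))
      (V.filter (fun v => v i = (a, f)) : Set (ι → P × Bool)) := by
  intro u hu v hv h
  simp only [Finset.coe_filter, Set.mem_ofPred_eq] at hu hv
  funext l
  by_cases hl : l = i
  · subst hl; rw [hu.2, hv.2]
  · have := congrFun h l; simpa [hl] using this

theorem card_cs (V : Finset (ι → P × Bool)) (i : ι) (a : P) (f : Bool) :
    (cs V i a f).card = (V.filter (fun v => v i = (a, f))).card :=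
  Finset.card_image_of_injOn (cs_injOn V i a f)

theorem code_cs {V : Finset (ι → P × Bool)} (hV : Code V) (i : ι) (a : P) (f : Bool) :
    Code (cs V i a f) := by
  intro u hu v hv huv
  rw [mem_cs] at hu hv
  have hne : Function.update u i (a, f) ≠ Function.update v i (a, f) := by
    intro h; apply huv; funext l
    by_cases hl : l = i
    · subst hl; rw [hu.1, hv.1]
    · have := congrFun h l; simpa [hl] using this
  obtain ⟨l, hl⟩ := hV _ hu.2 _ hv.2 hne
  by_cases h : l = i
  · subst h; simp at hl
  · exact ⟨l, by simpa [h] using hl⟩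

theorem tf_cs {V : Finset (ι → P × Bool)} (hV : TF V) (i : ι) (a : P) (f : Bool) :
    TF (cs V i a f) := by
  intro u hu j hj
  rw [mem_cs] at hu hj
  by_cases h : j = i
  · subst h; have := hj.1; rw [Function.update_self, hu.1] at this; simp [neg] at this
  · refine hV _ hu.2 j ?_
    rw [Function.update_of_ne h, Function.update_comm (Ne.symm h)]; exact hj.2

theorem dj1_cs {V : Finset (ι → P × Bool)} (hV : TF V) (i : ι) (a : P) (f : Bool) :
    Disjoint (cs V i a f) (cs V i a (!f)) := by
  rw [Finset.disjoint_left]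
  intro u hu hu'
  rw [mem_cs] at hu hu'
  exact hV.elim hu.2 hu'.2 i (by simp [neg]) fun l hl => by simp [hl]

theorem dj2_cs {V W : Finset (ι → P × Bool)} (h : Disjoint V W) (i : ι) (a : P) (f : Bool) :
    Disjoint (cs V i a f) (cs W i a f) := by
  rw [Finset.disjoint_left] at h ⊢
  intro u hu hu'
  rw [mem_cs] at hu hu'
  exact h hu.2 hu'.2

theorem cs_sm (V : Finset (ι → P × Bool)) (i : ι) (a : P) (f : Bool) (x : ι → P → Bool)
    (hx : x i a = true) : sm (cs V i a f) x + sm (V.filter (fun v => (v i).1 ≠ a)) x =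
      sm V (setp x i a f) := by
  unfold sm
  rw [cs, Finset.sum_image (cs_injOn V i a f), Finset.sum_filter, Finset.sum_filter,
    ← Finset.sum_add_distrib]
  refine Finset.sum_congr rfl fun v _ => ?_
  by_cases h1 : (v i).1 = a
  · by_cases h2 : (v i).2 = f
    · have hv : v i = (a, f) := Prod.ext h1 h2
      rw [if_pos hv, if_neg (by simpa using h1), add_zero]
      by_cases h3 : inn x (Function.update v i (a, true))
      · rw [ind_univ_one h3, ind_univ_one]
        rw [inn_setp_eq hv]; exact (inn_upd.1 h3).2
      · rw [ind_univ_zero h3, ind_univ_zero]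
        rw [inn_setp_eq hv]; intro h; exact h3 (inn_upd.2 ⟨hx, h⟩)
    · rw [if_neg (fun h => h2 (by rw [h])), if_neg (by simpa using h1), ind_univ_zero]; · simp
      intro h; have := h i; rw [h1] at this; simp at this; exact h2 this.symm
  · rw [if_neg (fun h => h1 (by rw [h])), if_pos h1, zero_add]
    by_cases h3 : inn x v
    · rw [ind_univ_one h3, ind_univ_one ((inn_setp h1).2 h3)]
    · rw [ind_univ_zero h3, ind_univ_zero (fun h => h3 ((inn_setp h1).1 h))]

theorem cs_sm_zero (V : Finset (ι → P × Bool)) (i : ι) (a : P) (f : Bool) (x : ι → P → Bool)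
    (hx : x i a ≠ true) : sm (cs V i a f) x = 0 := by
  refine Finset.sum_eq_zero fun v hv => ind_univ_zero fun h => hx ?_
  have := h i; rwa [(mem_cs.1 hv).1] at this

theorem cs_eq {V W : Finset (ι → P × Bool)} (h : ∀ x, sm V x = sm W x) (i : ι) (a : P) (f : Bool)
    (x : ι → P → Bool) : sm (cs V i a f) x + sm (cs W i a (!f)) x =
      sm (cs V i a (!f)) x + sm (cs W i a f) x := by
  by_cases hx : x i a = true
  · have h1 := cs_sm V i a f x hx
    have h2 := cs_sm V i a (!f) x hx
    have h3 := cs_sm W i a f x hx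
    have h4 := cs_sm W i a (!f) x hx
    have h5 := h (setp x i a f)
    have h6 := h (setp x i a (!f))
    linarith
  · simp [cs_sm_zero _ _ _ _ _ hx]

/-- Four small codes in balance. -/
structure Pack (C : Bool → Bool → Finset (ι → P × Bool)) : Prop where
  eq : ∀ e f x, sm (C e f) x + sm (C (!e) (!f)) x = sm (C e (!f)) x + sm (C (!e) f) x
  code : ∀ e f, Code (C e f)
  tf : ∀ e f, TF (C e f)
  dj1 : ∀ e f, Disjoint (C e f) (C e (!f))
  dj2 : ∀ e f, Disjoint (C e f) (C (!e) f)

theorem sum_disjSum_sm (A B : Finset (ι → P × Bool)) (x : ι → P → Bool) :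
    ∑ a ∈ A.disjSum B, indOn Finset.univ (Sum.elim id id a) x = sm A x + sm B x := by
  rw [Finset.sum_disjSum]; rfl

theorem card_add_of_sm {A B C D : Finset (ι → P × Bool)}
    (h : ∀ x, sm A x + sm B x = sm C x + sm D x) : A.card + B.card = C.card + D.card := by
  rw [← Finset.card_disjSum, ← Finset.card_disjSum]
  refine card_of_sum _ _ (Sum.elim id id) (Sum.elim id id) Finset.univ fun x => ?_
  rw [sum_disjSum_sm, sum_disjSum_sm, h]

theorem Pack.card {C : Bool → Bool → Finset (ι → P × Bool)} (h : Pack C) (e f : Bool) :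
    (C e f).card + (C (!e) (!f)).card = (C e (!f)).card + (C (!e) f).card :=
  card_add_of_sm (h.eq e f)

/-- Lemma M2. -/
theorem Pack.nonempty {C : Bool → Bool → Finset (ι → P × Bool)} (h : Pack C)
    (h5 : ∀ e f, (C e f).card + (C (!e) (!f)).card ≤ 5)
    (hI1 : ∀ e f, (∀ x, sm (C e f) x = sm (C e (!f)) x) → C e f = ∅)
    (hI2 : ∀ e f, (∀ x, sm (C e f) x = sm (C (!e) f) x) → C e f = ∅)
    (hne : ∃ e f, (C e f).Nonempty) (e f : Bool) : (C e f).Nonempty := by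
  by_contra hemp
  rw [Finset.not_nonempty_iff_eq_empty] at hemp
  have E : ∀ x, sm (C (!e) (!f)) x = sm (C e (!f)) x + sm (C (!e) f) x := fun x => by
    have := h.eq e f x; rw [hemp, sm_empty] at this; linarith
  have allE : C e (!f) = ∅ → C (!e) f = ∅ → C (!e) (!f) = ∅ → False := by
    intro h1 h2 h3
    obtain ⟨e', f', h'⟩ := hne
    rw [Finset.nonempty_iff_ne_empty] at h'
    apply h'
    have he : e' = e ∨ e' = !e := by cases e <;> cases e' <;> simp
    have hf : f' = f ∨ f' = !f := by cases f <;> cases f' <;> simp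
    rcases he with rfl | rfl <;> rcases hf with rfl | rfl <;> assumption
  by_cases h1 : C e (!f) = ∅
  · have E' : ∀ x, sm (C (!e) (!f)) x = sm (C (!e) f) x := fun x => by
      rw [E, h1, sm_empty, zero_add]
    exact allE h1 (hI1 (!e) f fun x => (E' x).symm)
      (hI1 (!e) (!f) fun x => by rw [Bool.not_not]; exact E' x)
  by_cases h2 : C (!e) f = ∅
  · have E' : ∀ x, sm (C (!e) (!f)) x = sm (C e (!f)) x := fun x => by
      rw [E, h2, sm_empty, add_zero]
    exact allE (hI2 e (!f) fun x => (E' x).symm) h2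
      (hI2 (!e) (!f) fun x => by rw [Bool.not_not]; exact E' x)
  set A := C (!e) (!f) with hA
  have hA5 : A.card ≤ 5 := by have := h5 e f; rw [← hA] at this; omega
  have hcard : A.card = (C e (!f)).card + (C (!e) f).card := by
    have := h.card e f; rw [hemp] at this; simpa using this
  have hQ : ∀ q, q ∈ C e (!f) ∨ q ∈ C (!e) f → q ∉ A ∧ ∀ x, inn x q → ∃ c ∈ A, inn x c := by
    intro q hq
    constructor
    · intro hqA
      rcases hq with hq | hq
      · exact Finset.disjoint_left.1 (h.dj2 e (!f)) hq hqA
      · exact Finset.disjoint_left.1 (h.dj1 (!e) f) hq hqA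
    · intro x hx
      rw [← sm_pos, E]
      rcases hq with hq | hq
      · have := sm_pos.2 ⟨q, hq, hx⟩
        have := sm_nonneg (C (!e) f) x
        omega
      · have := sm_pos.2 ⟨q, hq, hx⟩
        have := sm_nonneg (C e (!f)) x
        omega
  have hT : ∀ q, q ∈ C e (!f) ∨ q ∈ C (!e) f → ∀ c ∈ A, Touch c q := by
    intro q hq c hc
    by_contra hct
    obtain ⟨hqA, hcov⟩ := hQ q hq
    have := L1' (C := A.erase c) (q := q) ((h.code _ _).mono (Finset.erase_subset _ _))
      ((h.tf _ _).mono (Finset.erase_subset _ _)) (by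
        rw [Finset.card_erase_of_mem hc]; omega) (fun x hx => by
        obtain ⟨c', hc', hxc⟩ := hcov x hx
        refine ⟨c', Finset.mem_erase.2 ⟨?_, hc'⟩, hxc⟩
        rintro rfl; exact hct ⟨x, hxc, hx⟩)
    exact hqA (Finset.mem_of_mem_erase this)
  have c1 := Finset.card_pos.2 (Finset.nonempty_iff_ne_empty.2 h1)
  have c2 := Finset.card_pos.2 (Finset.nonempty_iff_ne_empty.2 h2)
  obtain ⟨p1, hp1, p2, hp2, h12⟩ := Finset.one_lt_card.1 (show 1 < A.card by omega)
  obtain ⟨j, hj⟩ := h.code _ _ p2 hp2 p1 hp1 (Ne.symm h12)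
  have hqj : ∀ q, q ∈ C e (!f) ∨ q ∈ C (!e) f → (q j).1 ≠ (p1 j).1 := by
    intro q hq
    by_cases hh : p1 j = q j
    · rw [hh] at hj
      exact absurd hj ((hT q hq p2 hp2).neg_ne j)
    · exact Ne.symm ((hT q hq p1 hp1).ne j hh)
  have := L1' (C := A.erase p1) (q := Function.update p1 j (neg (p1 j)))
    ((h.code _ _).mono (Finset.erase_subset _ _))
    ((h.tf _ _).mono (Finset.erase_subset _ _)) (by
        rw [Finset.card_erase_of_mem hp1]; omega) (fun x hx => by
      rw [inn_upd] at hx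
      have hx1 : inn (setp x j (p1 j).1 (p1 j).2) p1 := (inn_setp_eq (v := p1) rfl).2 hx.2
      have hpos := sm_pos.2 ⟨p1, hp1, hx1⟩
      rw [E] at hpos
      have : ∃ q, (q ∈ C e (!f) ∨ q ∈ C (!e) f) ∧ inn (setp x j (p1 j).1 (p1 j).2) q := by
        rcases (show 0 < sm (C e (!f)) (setp x j (p1 j).1 (p1 j).2) ∨
          0 < sm (C (!e) f) (setp x j (p1 j).1 (p1 j).2) by omega) with h' | h'
        · obtain ⟨q, hq, hh⟩ := sm_pos.1 h'; exact ⟨q, Or.inl hq, hh⟩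
        · obtain ⟨q, hq, hh⟩ := sm_pos.1 h'; exact ⟨q, Or.inr hq, hh⟩
      obtain ⟨q, hq, hxq⟩ := this
      rw [inn_setp (hqj q hq)] at hxq
      obtain ⟨c, hc, hxc⟩ := (hQ q hq).2 x hxq
      refine ⟨c, Finset.mem_erase.2 ⟨?_, hc⟩, hxc⟩
      rintro rfl
      have h1 := hx.1
      rw [neg_fst, neg_snd, hxc j] at h1; simp at h1)
  exact h.tf _ _ p1 hp1 j (Finset.mem_of_mem_erase this)

end PB

set_option linter.unusedSectionVars false

namespace PB

variable {ι P : Type*} [Fintype ι] [DecidableEq ι] [DecidableEq P]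

/-- A minimal counterexample to the combinatorial theorem. -/
structure Sys (V : Bool → Finset (ι → P × Bool)) (n : ℕ) : Prop where
  code : ∀ e, Code (V e)
  tf : ∀ e, TF (V e)
  eq : ∀ e x, sm (V e) x = sm (V (!e)) x
  dj : ∀ e, Disjoint (V e) (V (!e))
  cd : ∀ e, (V e).card = n
  le : n ≤ 11
  ih : ∀ D E : Finset (ι → P × Bool), Code D → TF D → Code E → TF E → Disjoint D E →
    (∀ x, sm D x = sm E x) → D.card < n → D = ∅

/-- the four codes at coordinate `i` and pair `a` -/
def cc (V : Bool → Finset (ι → P × Bool)) (i : ι) (a : P) (e f : Bool) :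
    Finset (ι → P × Bool) := cs (V e) i a f

theorem mem_cc {V : Bool → Finset (ι → P × Bool)} {i : ι} {a : P} {e f : Bool}
    {u : ι → P × Bool} :
    u ∈ cc V i a e f ↔ u i = (a, true) ∧ Function.update u i (a, f) ∈ V e := mem_cs

/-- half the number of words with pair `a` at `i` -/
def S (V : Bool → Finset (ι → P × Bool)) (i : ι) (a : P) : ℕ :=
  (cc V i a true true).card + (cc V i a false false).card

theorem bool_cases (e e' : Bool) : e' = e ∨ e' = !e := by cases e <;> cases e' <;> simp

namespace Sys

variable {V : Bool → Finset (ι → P × Bool)} {n : ℕ}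

theorem pack (h : Sys V n) (i : ι) (a : P) : Pack (cc V i a) where
  eq e f x := cs_eq (h.eq e) i a f x
  code e f := code_cs (h.code e) i a f
  tf e f := tf_cs (h.tf e) i a f
  dj1 e f := dj1_cs (h.tf e) i a f
  dj2 e f := dj2_cs (h.dj e) i a f

theorem S_eq (h : Sys V n) (i : ι) (a : P) (e f : Bool) :
    (cc V i a e f).card + (cc V i a (!e) (!f)).card = S V i a := by
  have h1 := (h.pack i a).card true true
  simp only [Bool.not_true] at h1
  unfold S
  cases e <;> cases f <;> simp only [Bool.not_true, Bool.not_false] <;> omega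

theorem cnt (h : Sys V n) (i : ι) (a : P) (e : Bool) :
    ((V e).filter (fun v => (v i).1 = a)).card =
      (cc V i a e true).card + (cc V i a e false).card := by
  unfold cc
  rw [card_cs, card_cs, ← Finset.card_union_of_disjoint]
  · congr 1
    ext v
    simp only [Finset.mem_union, Finset.mem_filter]
    rcases hv : v i with ⟨b, f⟩
    cases f <;> simp
  · rw [Finset.disjoint_left]
    intro v h1 h2
    simp only [Finset.mem_filter] at h1 h2
    rw [h1.2] at h2; simp at h2

theorem cnt2 (h : Sys V n) (i : ι) (a : P) : ((V true).filter (fun v => (v i).1 = a)).card +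
    ((V false).filter (fun v => (v i).1 = a)).card = 2 * S V i a := by
  rw [h.cnt, h.cnt]
  have h1 := h.S_eq i a true true
  have h2 := h.S_eq i a true false
  simp only [Bool.not_true, Bool.not_false] at h1 h2
  omega

theorem S_pos (h : Sys V n) (i : ι) (e : Bool) (v : ι → P × Bool) (hv : v ∈ V e) : 0 < S V i (v i).1 := by
  have h1 := h.cnt2 i (v i).1
  have : 0 < ((V e).filter (fun w => (w i).1 = (v i).1)).card :=
    Finset.card_pos.2 ⟨v, by simp [hv]⟩
  cases e <;> omega

theorem cnt_three (h : Sys V n) (e : Bool) (i : ι) (T : Finset P) :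
    ∑ a ∈ T, ((V e).filter (fun v => (v i).1 = a)).card ≤ n := by
  rw [← h.cd e]
  rw [← Finset.card_biUnion]
  · apply Finset.card_le_card
    intro v hv
    simp only [Finset.mem_biUnion, Finset.mem_filter] at hv
    obtain ⟨_, _, h, _⟩ := hv; exact h
  · intro a _ b _ hab
    rw [Function.onFun, Finset.disjoint_left]
    intro v h1 h2
    simp only [Finset.mem_filter] at h1 h2
    exact hab (h1.2.symm.trans h2.2)

theorem S_sum (h : Sys V n) (i : ι) (T : Finset P) : ∑ a ∈ T, S V i a ≤ 11 := by
  have h1 := h.cnt_three true i T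
  have h2 := h.cnt_three false i T
  have h3 : ∑ a ∈ T, 2 * S V i a ≤ 2 * n := by
    simp only [← h.cnt2, Finset.sum_add_distrib]; omega
  rw [← Finset.mul_sum] at h3
  have := h.le
  omega

theorem S_two (h : Sys V n) (i : ι) {a b : P} (hab : a ≠ b) : S V i a + S V i b ≤ 11 := by
  have := h.S_sum i {a, b}
  rwa [Finset.sum_pair hab] at this

theorem S_three (h : Sys V n) (i : ι) {a b c : P} (hab : a ≠ b) (hac : a ≠ c) (hbc : b ≠ c) :
    S V i a + S V i b + S V i c ≤ 11 := by
  have := h.S_sum i {a, b, c}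
  rw [Finset.sum_insert (by simp [hab, hac]), Finset.sum_pair hbc] at this
  omega

theorem ne (h : Sys V n) (i : ι) (a : P) (hm : ∃ e, ∃ v ∈ V e, (v i).1 ≠ a) (ha : ∃ e, ∃ v ∈ V e, (v i).1 = a)
    (hs : S V i a ≤ 5) (e f : Bool) : (cc V i a e f).Nonempty := by
  have hp := h.pack i a
  refine hp.nonempty (fun e f => by rw [h.S_eq]; exact hs) ?_ ?_ ?_ e f
  · intro e f hx
    have hc := card_of_sm hx
    by_contra hne
    have hpos := Finset.card_pos.2 (Finset.nonempty_iff_ne_empty.2 hne)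
    refine hne (h.ih _ _ (hp.code _ _) (hp.tf _ _) (hp.code _ _) (hp.tf _ _) (hp.dj1 _ _) hx ?_)
    have h1 := h.cnt i a e
    have h2 := Finset.card_filter_le (V e) (fun v => (v i).1 = a)
    rw [h.cd e] at h2
    cases f <;> simp only [Bool.not_true, Bool.not_false] at * <;> omega
  · intro e f hx
    have hc := card_of_sm hx
    refine h.ih _ _ (hp.code _ _) (hp.tf _ _) (hp.code _ _) (hp.tf _ _) (hp.dj2 _ _) hx ?_
    by_contra hlt
    obtain ⟨e', v, hv, hva⟩ := hm
    have key : ∀ e', n ≤ (cc V i a e' f).card → ∀ v ∈ V e', (v i).1 = a := by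
      intro e' he' v hv
      unfold cc at he'
      rw [card_cs, ← h.cd e'] at he'
      have := Finset.eq_of_subset_of_card_le (Finset.filter_subset _ _) he'
      rw [← this] at hv
      rw [(Finset.mem_filter.1 hv).2]
    rcases bool_cases e e' with rfl | rfl
    · exact hva (key _ (by omega) v hv)
    · exact hva (key _ (by omega) v hv)
  · obtain ⟨e, v, hv, hva⟩ := ha
    refine ⟨e, (v i).2, Function.update v i (a, true), mem_cc.2 ⟨by simp, ?_⟩⟩
    rw [Function.update_idem, ← hva]; simpa using hv

theorem F1_aux (h : Sys V n) (i : ι) (e : Bool) {v w : ι → P × Bool} (hv : v ∈ V e) (hw : w ∈ V (!e))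
    (hne : (w i).1 ≠ (v i).1) (ho : ∀ l, l ≠ i → w l = v l) : 6 ≤ S V i (w i).1 := by
  by_contra hlt
  have hN := h.ne i (w i).1 ⟨e, v, hv, Ne.symm hne⟩ ⟨!e, w, hw, rfl⟩ (by omega)
  set D := (V (!e)).filter (fun c => c i = neg (w i)) with hD
  have hc5 : 5 ≤ D.card := by
    by_contra hD5
    have := L1' (q := Function.update w i (neg (w i))) ((h.code (!e)).mono
      (Finset.filter_subset _ _)) ((h.tf (!e)).mono (Finset.filter_subset _ _))
      (show D.card ≤ 4 by omega) (fun x hx => by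
        rw [inn_upd] at hx
        have hxv : inn (setp x i (v i).1 (v i).2) v :=
          (inn_setp_eq (v := v) rfl).2 fun l hl => by rw [← ho l hl]; exact hx.2 l hl
        have hpos := sm_pos.2 ⟨v, hv, hxv⟩
        rw [h.eq e] at hpos
        obtain ⟨c, hc, hxc⟩ := sm_pos.1 hpos
        by_cases hci : (c i).1 = (w i).1
        · have hxc' : inn x c := (inn_setp (by rw [hci]; exact hne)).1 hxc
          refine ⟨c, Finset.mem_filter.2 ⟨hc, ?_⟩, hxc'⟩
          refine Prod.ext hci ?_
          rw [← hxc' i, hci]; exact hx.1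
        · have h1 := (inn_setp (b := (w i).2) hci).2 hxc
          have h2 : inn (setp (setp x i (v i).1 (v i).2) i (w i).1 (w i).2) w :=
            (inn_setp_eq (v := w) rfl).2 fun l hl => by
              rw [setp_ne (fun h => absurd h hl)]; exact hx.2 l hl
          have := code_unique (h.code (!e)) hc hw h1 h2
          exact absurd (by rw [this]) hci)
    exact h.tf (!e) w hw i (Finset.mem_filter.1 this).1
  have hcc : (cc V i (w i).1 (!e) (!(w i).2)).card = D.card := card_cs _ _ _ _
  have h1 := h.S_eq i (w i).1 (!e) (!(w i).2)
  have h2 := Finset.card_pos.2 (hN (!!e) (!!(w i).2))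
  omega

theorem F1 (h : Sys V n) (i : ι) (e : Bool) {v w : ι → P × Bool} (hv : v ∈ V e) (hw : w ∈ V (!e))
    (hne : (w i).1 ≠ (v i).1) (ho : ∀ l, l ≠ i → w l = v l) : False := by
  have h1 := h.F1_aux i e hv hw hne ho
  have h2 := h.F1_aux i (!e) hw (by simpa using hv) (Ne.symm hne) (fun l hl => (ho l hl).symm)
  have h3 := h.S_two i hne
  omega

theorem nohalf (h : Sys V n) (i : ι) (a : P) (e f : Bool) {u v : ι → P × Bool} (hu : u ∈ cc V i a e f)
    (hv : v ∈ cc V i a (!e) f) (k : ι) (hne : (v k).1 ≠ (u k).1) (ho : ∀ l, l ≠ k → v l = u l) :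
    False := by
  rw [mem_cc] at hu hv
  have hki : k ≠ i := by
    rintro rfl; rw [hu.1, hv.1] at hne; exact hne rfl
  refine h.F1 k e hu.2 hv.2 (by simpa [hki] using hne) fun l hl => ?_
  by_cases hli : l = i
  · subst hli; simp
  · simp [hli, ho l hl]

theorem gprop (h : Sys V n) (i : ι) (a : P) (e f : Bool) {p : ι → P × Bool} (hp : p ∈ cc V i a e f)
    {x : ι → P → Bool} (hx : inn x p) (hnot : ∀ t ∈ cc V i a (!e) f, ¬ inn x t) :
    ∃ w, inn x w ∧ ∀ g, ∀ t ∈ cc V i a (!e) g, Dich w t := by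
  rw [mem_cc] at hp
  have hxi : x i a = true := by have := hx i; rwa [hp.1] at this
  have h1 : inn (setp x i a f) (Function.update p i (a, f)) :=
    (inn_setp_eq (by simp)).2 fun l hl => by simpa [hl] using hx l
  have hpos := sm_pos.2 ⟨_, hp.2, h1⟩
  rw [h.eq e] at hpos
  obtain ⟨w, hw, hxw⟩ := sm_pos.1 hpos
  have hwi : (w i).1 ≠ a := by
    intro hwa
    have hwf : w i = (a, f) := by
      refine Prod.ext hwa ?_
      rw [← hxw i, hwa]; simp
    refine hnot (Function.update w i (a, true)) (mem_cc.2 ⟨by simp, ?_⟩) ?_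
    · rw [Function.update_idem, ← hwf]; simpa using hw
    · rw [inn_upd]; exact ⟨hxi, (inn_setp_eq hwf).1 hxw⟩
  have hxw' : inn x w := (inn_setp hwi).1 hxw
  refine ⟨Function.update w i (a, true), inn_upd.2 ⟨hxi, fun l _ => hxw' l⟩, fun g t ht => ?_⟩
  rw [mem_cc] at ht
  have hne : w ≠ Function.update t i (a, g) := by
    rintro rfl; simp at hwi
  obtain ⟨l, hl⟩ := h.code _ w hw _ ht.2 hne
  have hli : l ≠ i := by
    rintro rfl; rw [hl] at hwi; simp at hwi
  exact ⟨l, by simpa [hli] using hl⟩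

end Sys

end PB

set_option linter.unusedSectionVars false

namespace PB

variable {ι P : Type*} [Fintype ι] [DecidableEq ι] [DecidableEq P]

theorem avoid3 {p q t1 t2 : ι → P × Bool}
    (hcov : ∀ x, inn x p → inn x q ∨ inn x t1 ∨ inn x t2) {j k1 k2 : ι} (hj : q j ≠ p j)
    (h1 : t1 k1 ≠ p k1) (h2 : t2 k2 ≠ p k2) :
    (j = k1 ∧ q j = neg (t1 j)) ∨ (j = k2 ∧ q j = neg (t2 j)) ∨
      (k1 = k2 ∧ t1 k1 = neg (t2 k1)) := by
  by_contra hc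
  push Not at hc
  obtain ⟨c1, c2, c3⟩ := hc
  obtain ⟨x, hx, hM⟩ := avoid p
    (fun i m => (i = j ∧ m = q j) ∨ (i = k1 ∧ m = t1 k1) ∨ (i = k2 ∧ m = t2 k2)) (by
      rintro i m (⟨rfl, rfl⟩ | ⟨rfl, rfl⟩ | ⟨rfl, rfl⟩) (⟨e, e'⟩ | ⟨e, e'⟩ | ⟨e, e'⟩)
      · exact neg_ne _ e'
      · subst e; exact c1 rfl (by rw [← e']; simp)
      · subst e; exact c2 rfl (by rw [← e']; simp)
      · subst e; exact c1 rfl (by rw [← e'])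
      · exact neg_ne _ e'
      · subst e; exact c3 rfl (by rw [← e']; simp)
      · subst e; exact c2 rfl (by rw [← e'])
      · subst e; exact c3 rfl (by rw [← e'])
      · exact neg_ne _ e')
    (by rintro i m (⟨rfl, rfl⟩ | ⟨rfl, rfl⟩ | ⟨rfl, rfl⟩) <;> assumption)
  rcases hcov x hx with h | h | h
  · exact hM j _ (Or.inl ⟨rfl, rfl⟩) (h j)
  · exact hM k1 _ (Or.inr (Or.inl ⟨rfl, rfl⟩)) (h k1)
  · exact hM k2 _ (Or.inr (Or.inr ⟨rfl, rfl⟩)) (h k2)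

theorem three_core {p q t1 t2 : ι → P × Bool} {T : Finset (ι → P × Bool)} (hT : TF T)
    (m1 : t1 ∈ T) (m2 : t2 ∈ T)
    (hcov : ∀ x, inn x p → inn x q ∨ inn x t1 ∨ inn x t2) (hq : q ≠ p)
    (n1 : t1 ≠ p) (n2 : t2 ≠ p)
    (h1 : ∀ k, (t1 k).1 ≠ (p k).1 → (∀ l, l ≠ k → t1 l = p l) → False)
    (h2 : ∀ k, (t2 k).1 ≠ (p k).1 → (∀ l, l ≠ k → t2 l = p l) → False) : False := by
  obtain ⟨j, hj⟩ := Function.ne_iff.1 hq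
  have pick : ∀ t : ι → P × Bool, t ≠ p →
      (∀ k, (t k).1 ≠ (p k).1 → (∀ l, l ≠ k → t l = p l) → False) →
      ∀ j, ∃ k, t k ≠ p k ∧ (k ≠ j ∨ t k = neg (p k)) := by
    intro t n hh j
    by_contra hc
    push Not at hc
    have ho : ∀ l, l ≠ j → t l = p l := by
      intro l hl; by_contra hl'
      exact (hc l hl').1 |> hl
    have htj : t j ≠ p j := by
      intro h; apply n; funext l
      by_cases hl : l = j
      · subst hl; exact h
      · exact ho l hl
    refine hh j (fun he => ?_) ho
    rcases eq_or_neg he with he | he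
    · exact htj he
    · exact (hc j htj).2 he
  obtain ⟨l, a1, b1⟩ := pick t1 n1 h1 j
  obtain ⟨l', a2, b2⟩ := pick t2 n2 h2 j
  have C : ∀ k1 k2, t1 k1 ≠ p k1 → (k1 ≠ j ∨ t1 k1 = neg (p k1)) → t2 k2 ≠ p k2 →
      (k2 ≠ j ∨ t2 k2 = neg (p k2)) → k1 = k2 ∧ t1 k1 = neg (t2 k1) := by
    intro k1 k2 a1 b1 a2 b2
    rcases avoid3 hcov hj a1 a2 with ⟨e, e'⟩ | ⟨e, e'⟩ | e
    · subst e
      rcases b1 with b | b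
      · exact absurd rfl b
      · rw [b] at e'; simp at e'; exact absurd e' hj
    · subst e
      rcases b2 with b | b
      · exact absurd rfl b
      · rw [b] at e'; simp at e'; exact absurd e' hj
    · exact e
  obtain ⟨rfl, e12⟩ := C l l' a1 b1 a2 b2
  have d1 : t1 l ≠ neg (p l) := by
    intro h; rw [h] at e12; exact a2 (neg_inj e12).symm
  have d2 : t2 l ≠ neg (p l) := by
    intro h; rw [h] at e12; simp at e12; exact a1 e12
  have hlj : l ≠ j := by tauto
  have o1 : ∀ k, k ≠ j → k ≠ l → t1 k = p k := by
    intro k hk hkl; by_contra hne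
    exact hkl (C k l hne (Or.inl hk) a2 b2).1
  have o2 : ∀ k, k ≠ j → k ≠ l → t2 k = p k := by
    intro k hk hkl; by_contra hne
    exact hkl (C l k a1 b1 hne (Or.inl hk)).1.symm
  have j1 : t1 j ≠ p j := by
    obtain ⟨k, x1, x2⟩ := pick t1 n1 h1 l
    by_cases hkj : k = j
    · subst hkj; exact x1
    · obtain ⟨rfl, _⟩ := C k l x1 (Or.inl hkj) a2 b2
      tauto
  have j2 : t2 j ≠ p j := by
    obtain ⟨k, x1, x2⟩ := pick t2 n2 h2 l
    by_cases hkj : k = j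
    · subst hkj; exact x1
    · obtain ⟨rfl, _⟩ := C l k a1 b1 x1 (Or.inl hkj)
      tauto
  have f1 : q j = neg (t1 j) := by
    rcases avoid3 hcov hj j1 a2 with ⟨e, e'⟩ | ⟨e, e'⟩ | ⟨e, e'⟩
    · exact e'
    · exact absurd e.symm hlj
    · exact absurd e.symm hlj
  have f2 : q j = neg (t2 j) := by
    rcases avoid3 hcov hj a1 j2 with ⟨e, e'⟩ | ⟨e, e'⟩ | ⟨e, e'⟩
    · exact absurd e.symm hlj
    · exact e'
    · exact absurd e hlj
  refine hT.elim m2 m1 l e12 fun k hk => ?_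
  by_cases hkj : k = j
  · subst hkj; rw [f1] at f2; exact neg_inj f2
  · rw [o1 k hkj hk, o2 k hkj hk]

theorem Pack.four_le {C : Bool → Bool → Finset (ι → P × Bool)} (h : Pack C)
    (hne : ∀ e f, (C e f).Nonempty)
    (nh : ∀ e f, ∀ u ∈ C e f, ∀ v ∈ C (!e) f, ∀ k, (v k).1 ≠ (u k).1 →
      (∀ l, l ≠ k → v l = u l) → False) {s : ℕ}
    (hs : ∀ e f, (C e f).card + (C (!e) (!f)).card = s) : 4 ≤ s := by
  by_contra hlt
  have hpos : ∀ e f, 0 < (C e f).card := fun e f => Finset.card_pos.2 (hne e f)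
  obtain ⟨e, f, h1⟩ : ∃ e f, (C e (!f)).card = 1 := by
    have a := hs true true
    have b := hpos true true
    have c := hpos (!true) (!true)
    rcases (show (C true true).card = 1 ∨ (C (!true) (!true)).card = 1 by omega) with h | h
    · exact ⟨true, false, h⟩
    · exact ⟨!true, true, h⟩
  have h2 : (C (!e) f).card ≤ 2 := by
    have a := hs e (!f)
    rw [Bool.not_not] at a
    omega
  obtain ⟨q, hq⟩ := Finset.card_eq_one.1 h1
  obtain ⟨p, hp⟩ := hne e f
  obtain ⟨t1, t2, hT⟩ : ∃ t1 t2, C (!e) f = {t1, t2} := by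
    rcases (show (C (!e) f).card = 1 ∨ (C (!e) f).card = 2 by have := hpos (!e) f; omega)
      with h | h
    · obtain ⟨t, ht⟩ := Finset.card_eq_one.1 h; exact ⟨t, t, by simp [ht]⟩
    · obtain ⟨t, t', _, ht⟩ := Finset.card_eq_two.1 h; exact ⟨t, t', ht⟩
  have m1 : t1 ∈ C (!e) f := by simp [hT]
  have m2 : t2 ∈ C (!e) f := by simp [hT]
  have mq : q ∈ C e (!f) := by simp [hq]
  refine three_core (h.tf _ _) m1 m2 (p := p) (q := q) ?_ ?_ ?_ ?_
    (nh e f p hp t1 m1) (nh e f p hp t2 m2)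
  · intro x hx
    have hx1 := h.eq e f x
    have hx2 := sm_pos.2 ⟨p, hp, hx⟩
    have hx3 := sm_nonneg (C (!e) (!f)) x
    rcases (show 0 < sm (C e (!f)) x ∨ 0 < sm (C (!e) f) x by omega) with h' | h'
    · obtain ⟨c, hc, hxc⟩ := sm_pos.1 h'
      rw [hq, Finset.mem_singleton] at hc; subst hc; exact Or.inl hxc
    · obtain ⟨c, hc, hxc⟩ := sm_pos.1 h'
      rw [hT, Finset.mem_insert, Finset.mem_singleton] at hc
      rcases hc with rfl | rfl
      · exact Or.inr (Or.inl hxc)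
      · exact Or.inr (Or.inr hxc)
  · rintro rfl; exact Finset.disjoint_left.1 (h.dj1 e f) hp mq
  · rintro rfl; exact Finset.disjoint_left.1 (h.dj2 e f) hp m1
  · rintro rfl; exact Finset.disjoint_left.1 (h.dj2 e f) hp m2

/-- The final configuration. -/
structure Conf (C : Bool → Bool → Finset (ι → P × Bool)) : Prop extends Pack C where
  nohalf : ∀ e f, ∀ u ∈ C e f, ∀ v ∈ C (!e) f, ∀ k, (v k).1 ≠ (u k).1 →
    (∀ l, l ≠ k → v l = u l) → False
  g : ∀ e f, ∀ p ∈ C e f, ∀ x, inn x p → (∀ t ∈ C (!e) f, ¬ inn x t) →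
    ∃ w, inn x w ∧ ∀ g, ∀ t ∈ C (!e) g, Dich w t
  ne : ∀ e f, (C e f).Nonempty
  le5 : ∀ e f, (C e f).card + (C (!e) (!f)).card ≤ 5
  two : ∀ j, ∀ e1 f1, ∀ u1 ∈ C e1 f1, ∀ e2 f2, ∀ u2 ∈ C e2 f2, ∀ e3 f3, ∀ u3 ∈ C e3 f3,
    (u1 j).1 = (u2 j).1 ∨ (u1 j).1 = (u3 j).1 ∨ (u2 j).1 = (u3 j).1

namespace Sys

variable {V : Bool → Finset (ι → P × Bool)} {n : ℕ}

theorem S_ge (h : Sys V n) (i : ι) (a : P) (hm : ∃ e, ∃ v ∈ V e, (v i).1 ≠ a)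
    (ha : ∃ e, ∃ v ∈ V e, (v i).1 = a) : 4 ≤ S V i a := by
  by_contra hlt
  have hN := h.ne i a hm ha (by omega)
  have := (h.pack i a).four_le hN (fun e f u hu v hv k => h.nohalf i a e f hu hv k)
    (fun e f => h.S_eq i a e f)
  omega

theorem twoP (h : Sys V n) (j : ι) (e1 e2 e3 : Bool) (u1 u2 u3 : ι → P × Bool) (h1 : u1 ∈ V e1)
    (h2 : u2 ∈ V e2) (h3 : u3 ∈ V e3) :
    (u1 j).1 = (u2 j).1 ∨ (u1 j).1 = (u3 j).1 ∨ (u2 j).1 = (u3 j).1 := by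
  by_contra hc
  push Not at hc
  obtain ⟨c1, c2, c3⟩ := hc
  have := h.S_three j c1 c2 c3
  have a1 := h.S_ge j (u1 j).1 ⟨e2, u2, h2, Ne.symm c1⟩ ⟨e1, u1, h1, rfl⟩
  have a2 := h.S_ge j (u2 j).1 ⟨e1, u1, h1, c1⟩ ⟨e2, u2, h2, rfl⟩
  have a3 := h.S_ge j (u3 j).1 ⟨e1, u1, h1, c2⟩ ⟨e3, u3, h3, rfl⟩
  omega

theorem conf (h : Sys V n) (i : ι) (a : P) (hm : ∃ e, ∃ v ∈ V e, (v i).1 ≠ a)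
    (ha : ∃ e, ∃ v ∈ V e, (v i).1 = a) (hs : S V i a ≤ 5) : Conf (cc V i a) where
  toPack := h.pack i a
  nohalf e f u hu v hv k := h.nohalf i a e f hu hv k
  g e f p hp x hx hn := h.gprop i a e f hp hx hn
  ne := h.ne i a hm ha hs
  le5 e f := by rw [h.S_eq]; exact hs
  two j e1 f1 u1 h1 e2 f2 u2 h2 e3 f3 u3 h3 := by
    rw [mem_cc] at h1 h2 h3
    by_cases hji : j = i
    · subst hji; left; rw [h1.1, h2.1]
    · simpa [hji] using h.twoP j e1 e2 e3 _ _ _ h1.2 h2.2 h3.2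

end Sys

theorem comb_aux (hconf : ∀ C : Bool → Bool → Finset (ι → P × Bool), Conf C → False) (n : ℕ) :
    ∀ D E : Finset (ι → P × Bool), Code D → TF D → Code E → TF E → Disjoint D E →
    (∀ x, sm D x = sm E x) → D.card = n → n ≤ 11 → D = ∅ := by
  induction n using Nat.strong_induction_on with
  | _ n ih =>
  intro D E hD hDT hE hET hdj hsm hn h11
  have hnE := card_of_sm hsm
  have hS : Sys (fun e => if e then D else E) n :=
    { code := by intro e; cases e <;> simpa
      tf := by intro e; cases e <;> simpa
      eq := by intro e x; cases e <;> simp [hsm x]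
      dj := by intro e; cases e <;> simp [hdj, hdj.symm]
      cd := by intro e; cases e <;> simp <;> omega
      le := h11
      ih := fun D' E' a b c d e f g => ih _ g D' E' a b c d e f rfl (by omega) }
  by_contra hne
  obtain ⟨v, hv⟩ := Finset.nonempty_iff_ne_empty.2 hne
  obtain ⟨x, hx⟩ := exists_inn v
  have hpos := sm_pos.2 ⟨v, hv, hx⟩
  rw [hsm] at hpos
  obtain ⟨w, hw, hxw⟩ := sm_pos.1 hpos
  have hvw : v ≠ w := by rintro rfl; exact Finset.disjoint_left.1 hdj hv hw
  obtain ⟨i, hi⟩ := Function.ne_iff.1 hvw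
  have hi' := inn_ne hx hxw i hi
  have := hS.S_two i hi'
  have mv : ∃ e, ∃ v ∈ (fun e => if e then D else E : Bool → Finset (ι → P × Bool)) e,
      (v i).1 = _ := ⟨true, v, hv, rfl⟩
  have mw : ∃ e, ∃ v ∈ (fun e => if e then D else E : Bool → Finset (ι → P × Bool)) e,
      (v i).1 = _ := ⟨false, w, by simpa using hw, rfl⟩
  rcases Nat.lt_or_ge 5 (S (fun e => if e then D else E) i (v i).1) with h5 | h5
  · exact hconf _ (hS.conf i (w i).1 ⟨true, v, hv, hi'⟩ mw (by omega))
  · exact hconf _ (hS.conf i (v i).1 ⟨false, w, by simpa using hw, Ne.symm hi'⟩ mv h5)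

end PB

set_option linter.unusedSectionVars false

namespace PB

variable {ι P : Type*} [Fintype ι] [DecidableEq ι] [DecidableEq P]

namespace Conf

variable {C : Bool → Bool → Finset (ι → P × Bool)}

theorem gw (h : Conf C) {e f : Bool} {p : ι → P × Bool} (hp : p ∈ C e f) (j k : ι) :
    ∃ w : ι → P × Bool, (∀ l, w l ≠ neg (p l)) ∧ ∀ g, ∀ t ∈ C (!e) g,
      (∀ l, l ≠ j → l ≠ k → t l = p l) → w j = neg (t j) ∨ w k = neg (t k) := by
  have hx : ∃ x, inn x p ∧ ∀ t ∈ C (!e) f, ¬ inn x t := by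
    by_contra hc
    push Not at hc
    have h1 := h.le5 (!e) f
    have h2 := Finset.card_pos.2 (h.ne (!!e) (!f))
    have := L1' (h.code (!e) f) (h.tf _ _) (by omega) hc
    exact Finset.disjoint_left.1 (h.dj2 e f) hp this
  obtain ⟨x, hx, hn⟩ := hx
  obtain ⟨w, hxw, hw⟩ := h.g e f p hp x hx hn
  have ht : Touch w p := ⟨x, hxw, hx⟩
  refine ⟨w, ht.neg_ne, fun g t htm ho => ?_⟩
  obtain ⟨l, hl⟩ := hw g t htm
  by_cases hj : l = j
  · subst hj; exact Or.inl hl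
  by_cases hk : l = k
  · subst hk; exact Or.inr hl
  rw [ho l hj hk] at hl
  exact absurd hl (ht.neg_ne l)

theorem dich2 (h : Conf C) {e f : Bool} {u v : ι → P × Bool} (hu : u ∈ C e f) (hv : v ∈ C e f)
    {j k : ι} (ho : ∀ l, l ≠ j → l ≠ k → u l = v l) (hne : u k ≠ v k) :
    u j = neg (v j) ∨ u k = neg (v k) := by
  obtain ⟨l, hl⟩ := h.code e f u hu v hv (by rintro rfl; exact hne rfl)
  by_cases hj : l = j
  · subst hj; exact Or.inl hl
  by_cases hk : l = k
  · subst hk; exact Or.inr hl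
  rw [ho l hj hk] at hl
  exact absurd hl (ne_neg _)

theorem disj (h : Conf C) {e f e' f' : Bool} {u : ι → P × Bool} (hu : u ∈ C e f)
    (hv : u ∈ C e' f') (hne : xor e f ≠ xor e' f') : False := by
  rcases bool_cases e e' with rfl | rfl <;> rcases bool_cases f f' with rfl | rfl
  · exact hne rfl
  · exact Finset.disjoint_left.1 (h.dj1 _ _) hu hv
  · exact Finset.disjoint_left.1 (h.dj2 _ _) hu hv
  · simp at hne

/-- two elements equal off `j`, same pair at `j`, opposite effective signs -/
theorem matchL (h : Conf C) {e f e' f' : Bool} {u v : ι → P × Bool} (hu : u ∈ C e f)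
    (hv : v ∈ C e' f') {j : ι} (hp : (v j).1 = (u j).1) (ho : ∀ l, l ≠ j → v l = u l)
    (hs : xor (xor e' f') (v j).2 ≠ xor (xor e f) (u j).2) :
    e' = !e ∧ f' = !f ∧ v j = neg (u j) := by
  rcases eq_or_neg hp with hj | hj
  · exfalso
    have : v = u := by
      funext l
      by_cases hl : l = j
      · subst hl; exact hj
      · exact ho l hl
    subst this
    exact h.disj hu hv (by intro h'; rw [h'] at hs; exact hs rfl)
  · have hs' : xor e' f' = xor e f := by
      rw [hj] at hs
      simp only [neg_snd] at hs
      revert hs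
      generalize (u j).2 = b
      cases e <;> cases f <;> cases e' <;> cases f' <;> cases b <;> simp
    rcases bool_cases e e' with rfl | rfl
    · have : f' = f := by
        revert hs'; cases e' <;> cases f <;> cases f' <;> simp
      subst this
      exact ((h.tf _ _).elim hu hv j hj ho).elim
    · refine ⟨rfl, ?_, hj⟩
      revert hs'; cases e <;> cases f <;> cases f' <;> simp

/-- E1 -/
theorem e1 (h : Conf C) {e f : Bool} {p p' v : ι → P × Bool} (hp : p ∈ C e f)
    (hp' : p' ∈ C (!e) (!f)) {j : ι} (hop : ∀ l, l ≠ j → p' l = p l) (hj : (p' j).1 = (p j).1)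
    (hv : v ∈ C e (!f) ∨ v ∈ C (!e) f) (ho : ∀ l, l ≠ j → v l = p l)
    (hne : (v j).1 ≠ (p j).1) : False := by
  rcases hv with hv | hv
  · exact h.nohalf (!e) (!f) p' hp' v (by simpa using hv) j (by rwa [hj])
      fun l hl => by rw [ho l hl, hop l hl]
  · exact h.nohalf e f p hp v hv j hne ho

/-- Kill -/
theorem kill (h : Conf C) {e f : Bool} {u v1 v2 : ι → P × Bool}
    (hu : u ∈ C e f ∨ u ∈ C (!e) (!f))
    (h1 : v1 ∈ C e (!f) ∨ v1 ∈ C (!e) f) (h2 : v2 ∈ C e (!f) ∨ v2 ∈ C (!e) f) {k : ι}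
    (hk : v2 k = neg (v1 k)) (hz : (v1 k).1 ≠ (u k).1) (o1 : ∀ l, l ≠ k → v1 l = u l)
    (o2 : ∀ l, l ≠ k → v2 l = u l) : False := by
  have o : ∀ l, l ≠ k → v2 l = v1 l := fun l hl => by rw [o1 l hl, o2 l hl]
  have hz2 : (v2 k).1 ≠ (u k).1 := by rw [hk]; simpa using hz
  rcases h1 with h1 | h1 <;> rcases h2 with h2 | h2
  · exact (h.tf _ _).elim h1 h2 k hk o
  · rcases hu with hu | hu
    · exact h.nohalf e f u hu v2 h2 k hz2 o2
    · exact h.nohalf (!e) (!f) u hu v1 (by simpa using h1) k hz o1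
  · rcases hu with hu | hu
    · exact h.nohalf e f u hu v1 h1 k hz o1
    · exact h.nohalf (!e) (!f) u hu v2 (by simpa using h2) k hz2 o2
  · exact (h.tf _ _).elim h1 h2 k hk o

theorem t2i (h : Conf C) {e f : Bool} {p1 p2 v1 v2 : ι → P × Bool} (hp1 : p1 ∈ C e f)
    (hp2 : p2 ∈ C e f) (hv1 : v1 ∈ C (!e) f) (hv2 : v2 ∈ C e (!f)) {j k : ι}
    (a1 : p2 j = neg (p1 j)) (a2 : p2 k = neg (p1 k)) (a3 : v2 j = v1 j)
    (a4 : v2 k = neg (v1 k)) (hz : (v1 k).1 ≠ (p1 k).1)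
    (o1 : ∀ l, l ≠ j → l ≠ k → p1 l = v1 l) (o2 : ∀ l, l ≠ j → l ≠ k → p2 l = v1 l)
    (o3 : ∀ l, l ≠ j → l ≠ k → v2 l = v1 l) : False := by
  obtain ⟨w, ht, hw⟩ := h.gw hv1 j k
  rw [Bool.not_not] at hw
  have b1 := hw f p1 hp1 o1
  have b2 := hw f p2 hp2 o2
  have b3 := hw _ v2 hv2 o3
  have tj := ht j
  rw [a3] at b3
  have c3 : w k = v1 k := by
    rcases b3 with b | b
    · exact absurd b tj
    · rw [b, a4]; simp
  have d1 : w j = neg (p1 j) := by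
    rcases b1 with b | b
    · exact b
    · rw [c3] at b; rw [b] at hz; simp at hz
  rcases b2 with b | b
  · rw [a1, d1] at b; simp at b
  · rw [c3, a2] at b; rw [b] at hz; simp at hz

theorem t2iii (h : Conf C) {e f : Bool} {p q q' u v : ι → P × Bool} (hp : p ∈ C e f)
    (hq : q ∈ C e (!f)) (hq' : q' ∈ C (!e) f) (hu : u ∈ C e f) (hv : v ∈ C e (!f)) {j k : ι}
    (hjk : j ≠ k)
    (eq' : q' = Function.update q j (neg (q j))) (hqj : (q j).1 = (p j).1)
    (hvu : v j = u j) (huj : (u j).1 ≠ (p j).1) (huk : u k = neg (p k))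
    (hvk : v k = neg (q k)) (hz : (q k).1 ≠ (p k).1)
    (o1 : ∀ l, l ≠ j → l ≠ k → q l = p l) (o2 : ∀ l, l ≠ j → l ≠ k → u l = p l)
    (o3 : ∀ l, l ≠ j → l ≠ k → v l = p l) : False := by
  have q'j : q' j = neg (q j) := by rw [eq']; simp
  have q'o : ∀ l, l ≠ j → q' l = q l := by intro l hl; rw [eq']; simp [hl]
  have q'k : q' k = q k := q'o k hjk.symm
  have hqy : q j = p j := by
    rcases eq_or_neg hqj with h1 | h1
    · exact h1
    · exfalso
      refine h.nohalf e f p hp q' hq' k (by rw [q'k]; exact hz) fun l hl => ?_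
      by_cases hlj : l = j
      · subst hlj; rw [q'j, h1]; simp
      · rw [q'o l hlj, o1 l hlj hl]
  have oo : ∀ l, l ≠ j → l ≠ k → p l = q' l := fun l hl hk => by rw [q'o l hl, o1 l hl hk]
  obtain ⟨w, ht, hw⟩ := h.gw hq' j k
  rw [Bool.not_not] at hw
  have b1 := hw _ q hq fun l hl _ => (q'o l hl).symm
  have b3 := hw _ u hu fun l hl hk => by rw [o2 l hl hk, oo l hl hk]
  have b4 := hw _ v hv fun l hl hk => by rw [o3 l hl hk, oo l hl hk]
  have tk := ht k
  rw [q'k] at tk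
  have wj : w j = neg (p j) := by
    rcases b1 with b | b
    · rw [b, hqy]
    · exact absurd b tk
  have nl : ∀ m : P × Bool, m = u j → w j ≠ neg m := by
    rintro m rfl hm
    rw [wj] at hm; exact huj (by rw [neg_inj hm])
  have k1 := b3.resolve_left (nl _ rfl)
  have k2 := b4.resolve_left (nl _ hvu)
  rw [k1, huk, hvk] at k2
  simp at k2
  exact hz (by rw [k2])

/-- N1 -/
theorem n1 (h : Conf C) {e f : Bool} {p1 p2 q1 q2 v : ι → P × Bool} (hp1 : p1 ∈ C e f)
    (hp2 : p2 ∈ C (!e) (!f)) (hq1 : q1 ∈ C e f) (hq2 : q2 ∈ C (!e) (!f)) (hv : v ∈ C (!e) f)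
    {j k : ι} (a1 : p2 j = p1 j) (a2 : p2 k = neg (p1 k)) (a3 : q1 j = neg (p1 j))
    (a4 : q2 j = neg (p1 j)) (a5 : q2 k = neg (q1 k)) (hz : (q1 k).1 ≠ (p1 k).1)
    (hvj : (v j).1 ≠ (p1 j).1)
    (o1 : ∀ l, l ≠ j → l ≠ k → p2 l = p1 l) (o2 : ∀ l, l ≠ j → l ≠ k → q1 l = p1 l)
    (o3 : ∀ l, l ≠ j → l ≠ k → q2 l = p1 l) (o4 : ∀ l, l ≠ j → l ≠ k → v l = p1 l) :
    False := by
  by_cases hvk : v k = p1 k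
  · refine h.nohalf e f p1 hp1 v hv j hvj fun l hl => ?_
    by_cases hk : l = k
    · subst hk; exact hvk
    · exact o4 l hl hk
  by_cases hvk' : v k = neg (p1 k)
  · obtain ⟨w, ht, hw⟩ := h.gw hq1 j k
    have b1 := hw _ p2 hp2 fun l hl hk => by rw [o1 l hl hk, o2 l hl hk]
    have b2 := hw _ q2 hq2 fun l hl hk => by rw [o3 l hl hk, o2 l hl hk]
    have b3 := hw _ v hv fun l hl hk => by rw [o4 l hl hk, o2 l hl hk]
    have wk : w k = q1 k := by
      rcases b2 with b | b
      · exact absurd b (by rw [a4, ← a3]; exact ht j)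
      · rw [b, a5]; simp
    have wj : w j = neg (p1 j) := by
      rcases b1 with b | b
      · rw [b, a1]
      · rw [wk, a2] at b; simp at b; rw [b] at hz; exact absurd rfl hz
    rcases b3 with b | b
    · rw [wj] at b; exact hvj (by rw [neg_inj b])
    · rw [wk, hvk'] at b; simp at b; rw [b] at hz; exact absurd rfl hz
  · have hvp : (v k).1 ≠ (p1 k).1 := fun he => by
      rcases eq_or_neg he with h1 | h1
      · exact hvk h1
      · exact hvk' h1
    obtain ⟨w, ht, hw⟩ := h.gw hp1 j k
    have b1 := hw _ p2 hp2 o1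
    have b2 := hw _ q2 hq2 o3
    have b3 := hw _ v hv o4
    have wk : w k = p1 k := by
      rcases b1 with b | b
      · exact absurd b (by rw [a1]; exact ht j)
      · rw [b, a2]; simp
    have wj : w j = p1 j := by
      rcases b2 with b | b
      · rw [b, a4]; simp
      · rw [wk, a5] at b; simp at b; rw [b] at hz; exact absurd rfl hz
    rcases b3 with b | b
    · rw [wj] at b; exact hvj (by rw [b]; simp)
    · rw [wk] at b; exact hvp (by rw [b]; simp)

/-- N2 and N3, the element `v ~ p` -/
theorem n2v (h : Conf C) {e f : Bool} {p q v : ι → P × Bool} (hp : p ∈ C e f)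
    (hq : q ∈ C e (!f)) (hv : v ∈ C e (!f) ∨ v ∈ C (!e) f) {j k : ι}
    (a1 : q j = p j) (hz : (q k).1 ≠ (p k).1) (hvj : (v j).1 ≠ (p j).1)
    (hvk : v k = p k)
    (o1 : ∀ l, l ≠ j → l ≠ k → q l = p l) (o2 : ∀ l, l ≠ j → l ≠ k → v l = p l) : False := by
  rcases hv with hv | hv
  · rcases h.dich2 hv hq (j := j) (k := k) (fun l hl hk => by rw [o1 l hl hk, o2 l hl hk])
      (by rw [hvk]; intro h; rw [h] at hz; exact hz rfl) with b | b
    · rw [b, a1] at hvj; exact hvj rfl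
    · rw [hvk] at b; rw [b] at hz; exact hz rfl
  · refine h.nohalf e f p hp v hv j hvj fun l hl => ?_
    by_cases hk : l = k
    · subst hk; exact hvk
    · exact o2 l hl hk

/-- the element `u`: `p2` has the same word as `u` off `j`, `q1` is not dichotomous to `u` -/
theorem n2u (h : Conf C) {e f : Bool} {p2 q1 u : ι → P × Bool}
    (hp2 : p2 ∈ C (!e) f) (hq1 : q1 ∈ C (!e) (!f))
    (hu : u ∈ C e f ∨ u ∈ C (!e) (!f)) {j k : ι}
    (hz : (q1 k).1 ≠ (u k).1) (huj : (u j).1 ≠ (p2 j).1) (huq : (u j).1 ≠ (q1 j).1)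
    (huk : p2 k = u k)
    (o1 : ∀ l, l ≠ j → l ≠ k → q1 l = u l) (o2 : ∀ l, l ≠ j → l ≠ k → p2 l = u l) : False := by
  rcases hu with hu | hu
  · refine h.nohalf e f u hu p2 hp2 j (Ne.symm huj) fun l hl => ?_
    by_cases hk : l = k
    · subst hk; exact huk
    · exact o2 l hl hk
  · rcases h.dich2 hq1 hu (j := j) (k := k) o1 (by intro h; rw [h] at hz; exact hz rfl)
      with b | b
    · rw [b] at huq; exact huq rfl
    · rw [b] at hz; exact hz rfl

end Conf

end PB

set_option linter.unusedSectionVars false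

namespace PB

variable {ι P : Type*} [Fintype ι] [DecidableEq ι] [DecidableEq P]

/-- restricted indicator, via resetting the letter at `j` -/
def ri (j : ι) (m : P × Bool) (v : ι → P × Bool) (x : ι → P → Bool) : ℤ :=
  indOn Finset.univ (Function.update v j m) x

theorem upd_eq_iff {j : ι} {m : P × Bool} {u v : ι → P × Bool} :
    Function.update u j m = Function.update v j m ↔ ∀ l, l ≠ j → u l = v l := by
  constructor
  · intro h l hl
    have := congrFun h l; simpa [hl] using this
  · intro h; funext l
    by_cases hl : l = j
    · subst hl; simp
    · simp [hl, h l hl]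

theorem two' {j : ι} {m : P × Bool} {u v : ι → P × Bool} (h : ∀ x, ri j m u x = ri j m v x) :
    ∀ l, l ≠ j → v l = u l := by
  rw [← upd_eq_iff (m := m)]
  exact cover_one fun x hx => by
    rw [← ind_univ_pos]; have := h x; unfold ri at this; rw [← this]; exact ind_univ_pos.2 hx

theorem four' {j : ι} {m : P × Bool} {u1 u2 v1 v2 : ι → P × Bool}
    (h : ∀ x, ri j m u1 x + ri j m u2 x = ri j m v1 x + ri j m v2 x) :
    ((∀ l, l ≠ j → v1 l = u1 l) ∧ (∀ l, l ≠ j → v2 l = u2 l)) ∨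
    ((∀ l, l ≠ j → v2 l = u1 l) ∧ (∀ l, l ≠ j → v1 l = u2 l)) ∨
    ∃ k, k ≠ j ∧ (v1 k).1 ≠ (u1 k).1 ∧ u2 k = neg (u1 k) ∧ v2 k = neg (v1 k) ∧
      (∀ l, l ≠ j → l ≠ k → u2 l = u1 l) ∧ (∀ l, l ≠ j → l ≠ k → v1 l = u1 l) ∧
      (∀ l, l ≠ j → l ≠ k → v2 l = u1 l) := by
  rcases four h with ⟨h1, h2⟩ | ⟨h1, h2⟩ | ⟨k, z, hz, h2, h3, h4⟩
  · left; exact ⟨upd_eq_iff.1 h1, upd_eq_iff.1 h2⟩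
  · right; left; exact ⟨upd_eq_iff.1 h1, upd_eq_iff.1 h2⟩
  · right; right
    have hk : k ≠ j := by
      rintro rfl
      have := congrFun h3 k
      simp at this; rw [← this] at hz; simp at hz
    have g2 := fun l => congrFun h2 l
    have g3 := fun l => congrFun h3 l
    have g4 := fun l => congrFun h4 l
    have k2 := g2 k
    have k3 := g3 k
    have k4 := g4 k
    simp only [Function.update_self, Function.update_of_ne hk] at k2 k3 k4 hz
    refine ⟨k, hk, by rw [k3]; exact hz, k2, by rw [k3, k4], ?_, ?_, ?_⟩
    · intro l hl hl'; have := g2 l; simpa [hl, hl'] using this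
    · intro l hl hl'; have := g3 l; simpa [hl, hl'] using this
    · intro l hl hl'; have := g4 l; simpa [hl, hl'] using this

/-- tagged elements -/
def El (C : Bool → Bool → Finset (ι → P × Bool)) : Finset (Σ _ : Bool × Bool, ι → P × Bool) :=
  Finset.univ.sigma (fun t => C t.1 t.2)

/-- sign of an element -/
def sgn (z : Σ _ : Bool × Bool, ι → P × Bool) : Bool := xor z.1.1 z.1.2

/-- fibres -/
def fib (C : Bool → Bool → Finset (ι → P × Bool)) (j : ι) (s : Bool) (l : P × Bool) :
    Finset (Σ _ : Bool × Bool, ι → P × Bool) :=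
  (El C).filter (fun z => sgn z = s ∧ z.2 j = l)

/-- elements with pair `b` and effective sign `t` -/
def dD (C : Bool → Bool → Finset (ι → P × Bool)) (j : ι) (b : P) (t : Bool) :
    Finset (Σ _ : Bool × Bool, ι → P × Bool) :=
  (El C).filter (fun z => (z.2 j).1 = b ∧ xor (sgn z) (z.2 j).2 = t)

/-- fibre sums -/
def sg (C : Bool → Bool → Finset (ι → P × Bool)) (j : ι) (m : P × Bool) (s : Bool)
    (l : P × Bool) (x : ι → P → Bool) : ℤ := ∑ z ∈ fib C j s l, ri j m z.2 x

variable {C : Bool → Bool → Finset (ι → P × Bool)}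

theorem mem_El {z : Σ _ : Bool × Bool, ι → P × Bool} : z ∈ El C ↔ z.2 ∈ C z.1.1 z.1.2 := by
  simp [El]

theorem mem_fib {j : ι} {s : Bool} {l : P × Bool} {z : Σ _ : Bool × Bool, ι → P × Bool} :
    z ∈ fib C j s l ↔ z.2 ∈ C z.1.1 z.1.2 ∧ sgn z = s ∧ z.2 j = l := by
  simp [fib, mem_El]

theorem mem_dD {j : ι} {b : P} {t : Bool} {z : Σ _ : Bool × Bool, ι → P × Bool} :
    z ∈ dD C j b t ↔ z.2 ∈ C z.1.1 z.1.2 ∧ (z.2 j).1 = b ∧ xor (sgn z) (z.2 j).2 = t := by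
  simp [dD, mem_El]

theorem sum_sgn (g : (ι → P × Bool) → ℤ) (e f : Bool) :
    ∑ z ∈ (El C).filter (fun z => sgn z = xor e f), g z.2 =
      ∑ v ∈ C e f, g v + ∑ v ∈ C (!e) (!f), g v := by
  rw [Finset.sum_filter, El, Finset.sum_sigma, Fintype.sum_prod_type]
  simp only [Fintype.sum_bool, sgn]
  cases e <;> cases f <;> simp [add_comm]

theorem Conf.tot (h : Conf C) (s : Bool) (x : ι → P → Bool) :
    ∑ z ∈ (El C).filter (fun z => sgn z = s), indOn Finset.univ z.2 x =
      ∑ z ∈ (El C).filter (fun z => sgn z = !s), indOn Finset.univ z.2 x := by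
  have h1 := sum_sgn (C := C) (fun v => indOn Finset.univ v x) s false
  have h2 := sum_sgn (C := C) (fun v => indOn Finset.univ v x) s true
  simp only [Bool.xor_false, Bool.xor_true] at h1 h2
  rw [h1, h2]
  exact h.eq s false x

theorem Conf.slice (h : Conf C) {j : ι} {b c : P} (hbc : b ≠ c)
    (hall : ∀ e f, ∀ u ∈ C e f, (u j).1 = b ∨ (u j).1 = c) (m : P × Bool) (s : Bool)
    {l l' : P × Bool} (hl : l.1 = b) (hl' : l'.1 = c) (x : ι → P → Bool) :
    sg C j m s l x + sg C j m s l' x = sg C j m (!s) l x + sg C j m (!s) l' x := by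
  by_cases hx : x j m.1 = m.2
  swap
  · have : ∀ v : ι → P × Bool, ri j m v x = 0 := fun v =>
      ind_univ_zero fun h => hx (inn_upd.1 h).1
    simp [sg, this]
  have hll : l.1 ≠ l'.1 := by rw [hl, hl']; exact hbc
  set x' := setp (setp x j l.1 l.2) j l'.1 l'.2 with hx'
  have key : ∀ s, sg C j m s l x + sg C j m s l' x =
      ∑ z ∈ (El C).filter (fun z => sgn z = s), indOn Finset.univ z.2 x' := by
    intro s
    unfold sg fib
    rw [← Finset.filter_filter, ← Finset.filter_filter, Finset.sum_filter,
      Finset.sum_filter (p := fun z : (Σ _ : Bool × Bool, ι → P × Bool) => z.2 j = l'), ← Finset.sum_add_distrib]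
    refine Finset.sum_congr rfl fun z hz => ?_
    have hz' := mem_El.1 (Finset.mem_filter.1 hz).1
    have hxl : x' j l.1 = l.2 := by
      rw [hx', setp_ne (fun _ => hll)]; simp
    have hxl' : x' j l'.1 = l'.2 := by rw [hx']; simp
    have hoff : ∀ i, i ≠ j → x' i (z.2 i).1 = x i (z.2 i).1 := by
      intro i hi
      rw [hx', setp_ne (fun h => absurd h hi), setp_ne (fun h => absurd h hi)]
    have e1 : (z.2 j = l ∨ z.2 j = l') → ri j m z.2 x = indOn Finset.univ z.2 x' := by
      intro hz
      have hiff : inn x (Function.update z.2 j m) ↔ inn x' z.2 := by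
        rw [inn_upd]
        constructor
        · rintro ⟨_, h2⟩ i
          by_cases hi : i = j
          · subst hi
            rcases hz with hz | hz <;> rw [hz] <;> assumption
          · rw [hoff i hi]; exact h2 i hi
        · intro h2
          exact ⟨hx, fun i hi => by rw [← hoff i hi]; exact h2 i⟩
      unfold ri
      by_cases hin : inn x' z.2
      · rw [ind_univ_one hin, ind_univ_one (hiff.2 hin)]
      · rw [ind_univ_zero hin, ind_univ_zero (fun h => hin (hiff.1 h))]
    by_cases c1 : z.2 j = l
    · rw [if_pos c1, if_neg, e1 (Or.inl c1), add_zero]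
      rw [c1]; intro h; exact hll (by rw [h])
    · by_cases c2 : z.2 j = l'
      · rw [if_neg c1, if_pos c2, e1 (Or.inr c2), zero_add]
      · rw [if_neg c1, if_neg c2, ind_univ_zero]; · rfl
        intro hin
        have hj := hin j
        rcases hall _ _ _ hz' with hb | hb
        · rw [hb, ← hl, hxl] at hj
          exact c1 (Prod.ext (hb.trans hl.symm) hj.symm)
        · rw [hb, ← hl', hxl'] at hj
          exact c2 (Prod.ext (hb.trans hl'.symm) hj.symm)
  rw [key, key]; exact h.tot s x'

theorem dD_sum (j : ι) (b : P) (t : Bool) (g : (Σ _ : Bool × Bool, ι → P × Bool) → ℤ) :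
    ∑ z ∈ dD C j b t, g z = ∑ z ∈ fib C j t (b, false), g z + ∑ z ∈ fib C j (!t) (b, true), g z := by
  rw [← Finset.sum_union]
  · refine Finset.sum_congr ?_ fun _ _ => rfl
    ext z
    rw [Finset.mem_union, mem_dD, mem_fib, mem_fib]
    rcases hz : z.2 j with ⟨b', f⟩
    cases f <;> cases sgn z <;> cases t <;> simp
  · rw [Finset.disjoint_left]
    intro z h1 h2
    rw [mem_fib] at h1 h2
    rw [h1.2.2] at h2; simp at h2

theorem dD_card (j : ι) (b : P) (t : Bool) :
    (dD C j b t).card = (fib C j t (b, false)).card + (fib C j (!t) (b, true)).card := by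
  have := dD_sum (C := C) j b t (fun _ => 1)
  simp at this; exact_mod_cast this

theorem fib_eq (j : ι) (s : Bool) (l : P × Bool) :
    fib C j s l = (dD C j l.1 (xor s l.2)).filter (fun z => sgn z = s) := by
  ext z
  rw [Finset.mem_filter, mem_dD, mem_fib]
  constructor
  · rintro ⟨h1, h2, h3⟩; exact ⟨⟨h1, by rw [h3], by rw [h2, h3]⟩, h2⟩
  · rintro ⟨⟨h1, h2, h3⟩, h4⟩
    refine ⟨h1, h4, Prod.ext h2 ?_⟩
    rw [h4] at h3; simpa using h3

theorem Conf.dD_eq (h : Conf C) {j : ι} {b c : P} (hbc : b ≠ c)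
    (hall : ∀ e f, ∀ u ∈ C e f, (u j).1 = b ∨ (u j).1 = c) (m : P × Bool) (t : Bool)
    (x : ι → P → Bool) :
    ∑ z ∈ dD C j b t, ri j m z.2 x = ∑ z ∈ dD C j b (!t), ri j m z.2 x := by
  rw [dD_sum, dD_sum]
  have h1 := h.slice hbc hall m t (l := (b, false)) (l' := (c, true)) rfl rfl x
  have h2 := h.slice hbc hall m t (l := (b, true)) (l' := (c, true)) rfl rfl x
  unfold sg at h1 h2
  rw [Bool.not_not]
  linarith

theorem Conf.dD_card_eq (h : Conf C) {j : ι} {b c : P} (hbc : b ≠ c)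
    (hall : ∀ e f, ∀ u ∈ C e f, (u j).1 = b ∨ (u j).1 = c) (t : Bool) :
    (dD C j b t).card = (dD C j b (!t)).card :=
  card_of_sum _ _ (fun z => Function.update z.2 j (b, true))
    (fun z => Function.update z.2 j (b, true)) Finset.univ (h.dD_eq hbc hall (b, true) t)

theorem Conf.slice_card (h : Conf C) {j : ι} {b c : P} (hbc : b ≠ c)
    (hall : ∀ e f, ∀ u ∈ C e f, (u j).1 = b ∨ (u j).1 = c) (s : Bool)
    {l l' : P × Bool} (hl : l.1 = b) (hl' : l'.1 = c) :
    (fib C j s l).card + (fib C j s l').card =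
      (fib C j (!s) l).card + (fib C j (!s) l').card := by
  rw [← Finset.card_disjSum, ← Finset.card_disjSum]
  refine card_of_sum _ _ (Sum.elim (fun z => Function.update z.2 j (b, true))
    (fun z => Function.update z.2 j (b, true))) (Sum.elim (fun z => Function.update z.2 j (b, true))
    (fun z => Function.update z.2 j (b, true))) Finset.univ fun x => ?_
  rw [Finset.sum_disjSum, Finset.sum_disjSum]
  exact h.slice hbc hall (b, true) s hl hl' x

theorem Conf.sgn_card (h : Conf C) (s : Bool) :
    ((El C).filter (fun z => sgn z = s)).card ≤ 5 := by
  have h1 := sum_sgn (C := C) (fun _ => 1) s false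
  simp only [Bool.xor_false] at h1
  simp only [Finset.sum_const, nsmul_eq_mul, mul_one] at h1
  have h2 := h.le5 s false
  have : ((El C).filter (fun z => sgn z = s)).card = (C s false).card + (C (!s) (!false)).card := by
    exact_mod_cast h1
  omega

theorem Conf.fib_card (h : Conf C) {j : ι} {b c : P} (hbc : b ≠ c) (s : Bool) :
    (fib C j s (b, true)).card + (fib C j s (b, false)).card +
      ((fib C j s (c, true)).card + (fib C j s (c, false)).card) ≤ 5 := by
  refine le_trans ?_ (h.sgn_card s)
  have key : ∀ l, fib C j s l = ((El C).filter (fun z => sgn z = s)).filter (fun z => z.2 j = l) := by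
    intro l; rw [fib, Finset.filter_filter]
  have := Finset.card_le_card (show (({(b, true), (b, false), (c, true), (c, false)} :
    Finset (P × Bool)).biUnion (fib C j s)) ⊆ (El C).filter (fun z => sgn z = s) by
      intro z hz
      rw [Finset.mem_biUnion] at hz
      obtain ⟨l, _, hz⟩ := hz
      rw [key] at hz
      exact (Finset.mem_filter.1 hz).1)
  rw [Finset.card_biUnion] at this
  · rw [Finset.sum_insert (by simp [hbc]), Finset.sum_insert (by simp [hbc]),
      Finset.sum_pair (by simp)] at this
    omega
  · intro l _ l' _ hne
    rw [Function.onFun, Finset.disjoint_left]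
    intro z h1 h2
    rw [mem_fib] at h1 h2
    exact hne (h1.2.2.symm.trans h2.2.2)

theorem Conf.pick (h : Conf C) {j : ι} {b c : P} (hbc : b ≠ c) (s : Bool) (k : ℕ) (l : P × Bool)
    (hl : l.1 = b) (hk : 5 ≤ (fib C j s l).card + (fib C j s (neg l)).card + 2 * k + 1) :
    ∃ l' : P × Bool, l'.1 = c ∧ (fib C j s l').card ≤ k := by
  have h1 := h.fib_card hbc (j := j) s
  have h2 : (fib C j s l).card + (fib C j s (neg l)).card =
      (fib C j s (b, true)).card + (fib C j s (b, false)).card := by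
    rcases l with ⟨b', f⟩
    simp only at hl; subst hl
    cases f <;> simp [neg, add_comm]
  by_cases h3 : (fib C j s (c, true)).card ≤ k
  · exact ⟨_, rfl, h3⟩
  · exact ⟨(c, false), rfl, by omega⟩

theorem fib_same {j : ι} {e f : Bool} {l : P × Bool} {z : Σ _ : Bool × Bool, ι → P × Bool}
    (hz : z ∈ fib C j (xor e f) l) : z.2 j = l ∧ (z.2 ∈ C e f ∨ z.2 ∈ C (!e) (!f)) := by
  obtain ⟨⟨e', f'⟩, v⟩ := z
  rw [mem_fib] at hz
  obtain ⟨h1, h2, h3⟩ := hz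
  refine ⟨h3, ?_⟩
  simp only [sgn] at h1 h2 ⊢
  rcases bool_cases e e' with rfl | rfl <;> rcases bool_cases f f' with rfl | rfl
  · exact Or.inl h1
  · simp at h2
  · simp at h2
  · exact Or.inr h1

theorem fib_opp {j : ι} {e f : Bool} {l : P × Bool} {z : Σ _ : Bool × Bool, ι → P × Bool}
    (hz : z ∈ fib C j (!(xor e f)) l) : z.2 j = l ∧ (z.2 ∈ C e (!f) ∨ z.2 ∈ C (!e) f) := by
  have : (!(xor e f)) = xor e (!f) := by cases e <;> cases f <;> rfl
  rw [this] at hz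
  have := fib_same hz
  rwa [Bool.not_not] at this

end PB

set_option linter.unusedSectionVars false

namespace PB

variable {ι P : Type*} [Fintype ι] [DecidableEq ι] [DecidableEq P]

namespace Conf

variable {C : Bool → Bool → Finset (ι → P × Bool)}

theorem alpha (h : Conf C) {j : ι} {b c : P} (hbc : b ≠ c)
    (hall : ∀ e f, ∀ u ∈ C e f, (u j).1 = b ∨ (u j).1 = c) (s : Bool) {y : P × Bool}
    (hy : y.1 = b) (h1 : fib C j (!s) y = ∅) (h2 : fib C j (!s) (neg y) = ∅) (m : P × Bool) :
    ∃ l : P × Bool, l.1 = c ∧ (fib C j (!s) l).card ≤ 2 ∧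
      (fib C j s y).card + (fib C j s l).card = (fib C j (!s) l).card ∧
      ∀ x, sg C j m s y x + sg C j m s l x = sg C j m (!s) l x := by
  obtain ⟨l, hl, hk⟩ := h.pick hbc (!s) 2 y hy (j := j) (by rw [h1, h2]; simp)
  refine ⟨l, hl, hk, ?_, fun x => ?_⟩
  · have := h.slice_card hbc hall s hy hl
    rw [h1] at this; simpa using this
  · have := h.slice hbc hall m s hy hl x
    rw [this]; simp [sg, h1]

theorem beta (h : Conf C) {j : ι} {b c : P} (hbc : b ≠ c)
    (hall : ∀ e f, ∀ u ∈ C e f, (u j).1 = b ∨ (u j).1 = c) (s : Bool) {y : P × Bool}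
    (hy : y.1 = b) {p q r : Σ _ : Bool × Bool, ι → P × Bool}
    (h1 : fib C j s y = {p}) (h2 : fib C j s (neg y) = {r}) (h3 : fib C j (!s) y = {q})
    (m : P × Bool) :
    (∀ x, ri j m p.2 x = ri j m q.2 x) ∨ ∃ l : P × Bool, l.1 = c ∧
      ∃ u ∈ fib C j s l, ∃ v ∈ fib C j (!s) l,
      ∀ x, ri j m p.2 x + ri j m u.2 x = ri j m q.2 x + ri j m v.2 x := by
  obtain ⟨l, hl, hk⟩ := h.pick hbc s 1 y hy (j := j) (by rw [h1, h2]; simp)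
  have hc := h.slice_card hbc hall s hy hl
  rw [h1, h3] at hc
  simp only [Finset.card_singleton] at hc
  have hs := h.slice hbc hall m s hy hl
  unfold sg at hs
  rw [h1, h3] at hs
  rcases Nat.le_one_iff_eq_zero_or_eq_one.1 hk with h0 | h0
  · left
    have h0' : (fib C j (!s) l).card = 0 := by omega
    rw [Finset.card_eq_zero] at h0 h0'
    intro x
    have := hs x
    rw [h0, h0'] at this; simpa using this
  · right
    have h0' : (fib C j (!s) l).card = 1 := by omega
    rw [Finset.card_eq_one] at h0 h0'
    obtain ⟨u, hu⟩ := h0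
    obtain ⟨v, hv⟩ := h0'
    refine ⟨l, hl, u, by simp [hu], v, by simp [hv], fun x => ?_⟩
    have := hs x
    rw [hu, hv] at this; simpa using this

theorem t2same (h : Conf C) {e f : Bool} {p1 p1' p2 v1 v2 : ι → P × Bool}
    (hp1 : p1 ∈ C e f) (hp1' : p1' ∈ C (!e) (!f)) {j : ι}
    (ho1 : ∀ l, l ≠ j → p1' l = p1 l) (hj1 : (p1' j).1 = (p1 j).1)
    (hp2 : p2 ∈ C e f) (hb : (p2 j).1 = (p1 j).1)
    (hv1 : v1 ∈ C e (!f) ∨ v1 ∈ C (!e) f) (hv2 : v2 ∈ C e (!f) ∨ v2 ∈ C (!e) f)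
    (hv : v2 j = v1 j) (hne : (v1 j).1 ≠ (p1 j).1) {m : P × Bool}
    (heq : ∀ x, ri j m p1 x + ri j m p2 x = ri j m v1 x + ri j m v2 x) : False := by
  rcases four' heq with ⟨h1, -⟩ | ⟨h1, -⟩ | ⟨k, hk, hz, g1, g2, o1, o2, o3⟩
  · exact h.e1 hp1 hp1' ho1 hj1 hv1 h1 hne
  · exact h.e1 hp1 hp1' ho1 hj1 hv2 h1 (by rw [hv]; exact hne)
  · have hn : p2 j = neg (p1 j) := by
      rcases eq_or_neg hb with h1 | h1
      · exfalso
        refine (h.tf e f).elim hp1 hp2 k g1 fun l hl => ?_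
        by_cases hlj : l = j
        · subst hlj; exact h1
        · exact o1 l hlj hl
      · exact h1
    have ov : ∀ l, l ≠ k → v2 l = v1 l := by
      intro l hl
      by_cases hlj : l = j
      · subst hlj; exact hv
      · rw [o2 l hlj hl, o3 l hlj hl]
    rcases hv1 with hv1 | hv1 <;> rcases hv2 with hv2 | hv2
    · exact (h.tf _ _).elim hv1 hv2 k g2 ov
    · refine h.t2i hp1 hp2 hv2 hv1 hn g1 hv.symm (by rw [g2]; simp) (by rw [g2]; exact hz)
        ?_ ?_ ?_
      · intro l hl hl'; rw [o3 l hl hl']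
      · intro l hl hl'; rw [o3 l hl hl', o1 l hl hl']
      · intro l hl hl'; rw [o3 l hl hl', o2 l hl hl']
    · refine h.t2i hp1 hp2 hv1 hv2 hn g1 hv g2 hz ?_ ?_ ?_
      · intro l hl hl'; rw [o2 l hl hl']
      · intro l hl hl'; rw [o2 l hl hl', o1 l hl hl']
      · intro l hl hl'; rw [o3 l hl hl', o2 l hl hl']
    · exact (h.tf _ _).elim hv1 hv2 k g2 ov

theorem contra0 (h : Conf C) {e f e' f' : Bool} {p p' q : ι → P × Bool} (hp : p ∈ C e f)
    (hp' : p' ∈ C (!e) (!f)) (hq : q ∈ C e' f') (hs : xor e' f' ≠ xor e f) {j : ι}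
    (hop : ∀ l, l ≠ j → p' l = p l) (hj : p' j = neg (p j)) (hqj : (q j).1 = (p j).1)
    (ho : ∀ l, l ≠ j → q l = p l) : False := by
  rcases eq_or_neg hqj with h1 | h1
  · have : q = p := by
      funext l
      by_cases hl : l = j
      · subst hl; exact h1
      · exact ho l hl
    subst this
    exact h.disj hq hp hs
  · have : q = p' := by
      funext l
      by_cases hl : l = j
      · subst hl; rw [h1, hj]
      · rw [ho l hl, hop l hl]
    subst this
    exact h.disj hq hp' (by simpa using hs)

theorem t2diff (h : Conf C) {e f : Bool} {p p' q q' u v : ι → P × Bool}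
    (hp : p ∈ C e f) (hp' : p' ∈ C (!e) (!f)) (hq : q ∈ C e (!f)) (hq' : q' ∈ C (!e) f) {j : ι}
    (hop : ∀ l, l ≠ j → p' l = p l) (hpj : p' j = neg (p j))
    (hoq : ∀ l, l ≠ j → q' l = q l) (hqj : q' j = neg (q j))
    (hb : (q j).1 = (p j).1)
    (hu : u ∈ C e f ∨ u ∈ C (!e) (!f)) (hv : v ∈ C e (!f) ∨ v ∈ C (!e) f)
    (huv : v j = u j) (hne : (u j).1 ≠ (p j).1) {m : P × Bool}
    (heq : ∀ x, ri j m p x + ri j m u x = ri j m q x + ri j m v x) : False := by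
  rcases four' heq with ⟨h1, -⟩ | ⟨h1, -⟩ | ⟨k, hk, hz, g1, g2, o1, o2, o3⟩
  · exact h.contra0 hp hp' hq (by simp) hop hpj hb h1
  · exact h.e1 hp hp' hop (by rw [hpj]; simp) hv h1 (by rw [huv]; exact hne)
  · have ov : ∀ l, l ≠ k → v l = u l := by
      intro l hl
      by_cases hlj : l = j
      · subst hlj; exact huv
      · rw [o1 l hlj hl, o3 l hlj hl]
    have hz' : (v k).1 ≠ (u k).1 := by rw [g1, g2]; exact hz
    rcases hu with hu | hu <;> rcases hv with hv | hv
    · refine h.t2iii hp hq hq' hu hv (Ne.symm hk) ?_ hb huv hne g1 g2 hz o2 o1 o3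
      funext l
      by_cases hl : l = j
      · subst hl; simp [hqj]
      · simp [hl, hoq l hl]
    · exact h.nohalf e f u hu v hv k hz' ov
    · exact h.nohalf (!e) (!f) u hu v (by simpa using hv) k hz' ov
    · refine h.t2iii (e := !e) (f := !f) (p := p') (q := q') (q' := q) (u := u) (v := v) hp'
        (by simpa using hq') (by simpa using hq) hu (by simpa using hv) (Ne.symm hk) ?_ ?_ huv ?_
        (by rw [hop k hk, g1]) (by rw [hoq k hk, g2]) (by rw [hop k hk, hoq k hk]; exact hz)
        ?_ ?_ ?_
      · funext l
        by_cases hl : l = j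
        · subst hl; simp [hqj]
        · simp [hl, hoq l hl]
      · rw [hqj, hpj]; exact hb
      · rw [hpj]; exact hne
      · intro l hl hl'; rw [hoq l hl, hop l hl, o2 l hl hl']
      · intro l hl hl'; rw [hop l hl, o1 l hl hl']
      · intro l hl hl'; rw [hop l hl, o3 l hl hl']

theorem n1fin (h : Conf C) {e f : Bool} {p1 p2 q1 q2 v1 v2 : ι → P × Bool} (hp1 : p1 ∈ C e f)
    (hp2 : p2 ∈ C (!e) (!f)) (hq1 : q1 ∈ C e f) (hq2 : q2 ∈ C (!e) (!f))
    {j k : ι} (hk : k ≠ j)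
    (a1 : p2 j = p1 j) (a2 : p2 k = neg (p1 k)) (a3 : q1 j = neg (p1 j))
    (a4 : q2 j = neg (p1 j)) (a5 : q2 k = neg (q1 k)) (hz : (q1 k).1 ≠ (p1 k).1)
    (o1 : ∀ l, l ≠ j → l ≠ k → p2 l = p1 l) (o2 : ∀ l, l ≠ j → l ≠ k → q1 l = p1 l)
    (o3 : ∀ l, l ≠ j → l ≠ k → q2 l = p1 l)
    (hv1 : v1 ∈ C e (!f) ∨ v1 ∈ C (!e) f) (hv2 : v2 ∈ C e (!f) ∨ v2 ∈ C (!e) f)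
    (hv : v2 j = v1 j) (hne : (v1 j).1 ≠ (p1 j).1) {m : P × Bool}
    (heq : ∀ x, ri j m p1 x + ri j m p2 x = ri j m v1 x + ri j m v2 x) : False := by
  have key : v2 k = neg (v1 k) ∧ (∀ l, l ≠ j → l ≠ k → v1 l = p1 l) ∧
      (∀ l, l ≠ j → l ≠ k → v2 l = p1 l) := by
    rcases four' heq with ⟨h1, h2⟩ | ⟨h1, h2⟩ | ⟨k', hk', hz', g1, g2, r1, r2, r3⟩
    · exact ⟨by rw [h1 k hk, h2 k hk, a2], fun l hl _ => h1 l hl,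
        fun l hl hl' => by rw [h2 l hl, o1 l hl hl']⟩
    · exact ⟨by rw [h1 k hk, h2 k hk, a2]; simp, fun l hl hl' => by rw [h2 l hl, o1 l hl hl'],
        fun l hl _ => h1 l hl⟩
    · have : k' = k := by
        by_contra hkk
        rw [o1 k' hk' hkk] at g1; exact ne_neg _ g1
      subst this
      exact ⟨g2, r2, r3⟩
  obtain ⟨g2, r1, r2⟩ := key
  have ov : ∀ l, l ≠ k → v2 l = v1 l := by
    intro l hl
    by_cases hlj : l = j
    · subst hlj; exact hv
    · rw [r1 l hlj hl, r2 l hlj hl]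
  rcases hv1 with hv1 | hv1
  · rcases hv2 with hv2 | hv2
    · exact (h.tf _ _).elim hv1 hv2 k g2 ov
    · exact h.n1 hp1 hp2 hq1 hq2 hv2 a1 a2 a3 a4 a5 hz (by rw [hv]; exact hne) o1 o2 o3 r2
  · exact h.n1 hp1 hp2 hq1 hq2 hv1 a1 a2 a3 a4 a5 hz hne o1 o2 o3 r1

theorem n23fin (h : Conf C) {e f : Bool} {p q u v : ι → P × Bool} (hp : p ∈ C e f)
    (hq : q ∈ C e (!f)) {j k : ι} (hk : k ≠ j) (a1 : q j = p j) (hz : (q k).1 ≠ (p k).1)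
    (o1 : ∀ l, l ≠ j → l ≠ k → q l = p l)
    (hv : v ∈ C e (!f) ∨ v ∈ C (!e) f)
    (huv : v j = u j) (hne : (u j).1 ≠ (p j).1) {m : P × Bool}
    (heq : ∀ x, ri j m p x + ri j m u x = ri j m q x + ri j m v x)
    (hfin : u k = neg (p k) → (∀ l, l ≠ j → l ≠ k → u l = p l) → False) : False := by
  rcases four' heq with ⟨h1, -⟩ | ⟨h1, -⟩ | ⟨k', hk', hz', g1, g2, r1, r2, r3⟩
  · rw [h1 k hk] at hz; exact hz rfl
  · exact h.n2v hp hq hv a1 hz (by rw [huv]; exact hne) (h1 k hk) o1 fun l hl _ => h1 l hl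
  · have : k' = k := by
      by_contra hkk
      rw [o1 k' hk' hkk] at hz'; exact hz' rfl
    subst this
    exact hfin g1 r1

theorem one (h : Conf C) {j : ι} {b c : P} (hbc : b ≠ c)
    (hall : ∀ e f, ∀ u ∈ C e f, (u j).1 = b ∨ (u j).1 = c)
    (h1 : (dD C j b true).card = 1) : False := by
  have h2 := h.dD_card_eq hbc hall true
  rw [h1] at h2
  have hD := h.dD_eq hbc hall (b, true) true
  obtain ⟨⟨⟨e, f⟩, p⟩, hP⟩ := Finset.card_eq_one.1 h1
  obtain ⟨⟨⟨e', f'⟩, q⟩, hQ⟩ := Finset.card_eq_one.1 h2.symm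
  rw [hP, hQ] at hD
  simp only [Finset.sum_singleton] at hD
  have hp := mem_dD.1 (show _ ∈ dD C j b true by rw [hP]; exact Finset.mem_singleton_self _)
  have hq := mem_dD.1 (show _ ∈ dD C j b (!true) by rw [hQ]; exact Finset.mem_singleton_self _)
  simp only [sgn] at hp hq
  obtain ⟨hp, hpj, hps⟩ := hp
  obtain ⟨hq, hqj, hqs⟩ := hq
  have ho := two' hD
  obtain ⟨rfl, rfl, hj⟩ := h.matchL hp hq (hqj.trans hpj.symm) ho (by rw [hps, hqs]; simp)
  have x1 : fib C j (!(xor e f)) (p j) = ∅ := by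
    rw [fib_eq, hpj, Bool.not_xor, hps, hQ, Finset.filter_singleton, if_neg (by simp [sgn])]
  have x2 : fib C j (!(xor e f)) (neg (p j)) = ∅ := by
    rw [fib_eq, neg_fst, neg_snd, hpj, Bool.not_xor_not, hps, hP,
      Finset.filter_singleton, if_neg (by simp [sgn])]
  have x3 : fib C j (xor e f) (p j) = {⟨(e, f), p⟩} := by
    rw [fib_eq, hpj, hps, hP, Finset.filter_singleton, if_pos (by simp [sgn])]
  obtain ⟨l, hl, hle, hc, hs⟩ := h.alpha hbc hall (xor e f) hpj x1 x2 (b, true)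
  have hne : l.1 ≠ (p j).1 := by rw [hl, hpj]; exact hbc.symm
  unfold sg at hs
  rw [x3] at hc hs
  simp only [Finset.card_singleton, Finset.sum_singleton] at hc hs
  have hj' : (q j).1 = (p j).1 := by rw [hj]; simp
  rcases Nat.eq_zero_or_pos (fib C j (xor e f) l).card with h0 | h0
  · obtain ⟨v, hv⟩ := Finset.card_eq_one.1 (show (fib C j (!(xor e f)) l).card = 1 by omega)
    rw [Finset.card_eq_zero] at h0
    rw [h0, hv] at hs
    simp only [Finset.sum_empty, Finset.sum_singleton, add_zero] at hs
    obtain ⟨v1, v2⟩ := fib_opp (show v ∈ fib C j (!(xor e f)) l by simp [hv])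
    exact h.e1 hp hq ho hj' v2 (two' hs) (by rw [v1]; exact hne)
  · obtain ⟨u, hu⟩ := Finset.card_eq_one.1 (show (fib C j (xor e f) l).card = 1 by omega)
    obtain ⟨v, w, hvw, hv⟩ := Finset.card_eq_two.1
      (show (fib C j (!(xor e f)) l).card = 2 by omega)
    rw [hu, hv] at hs
    simp only [Finset.sum_singleton, Finset.sum_pair hvw] at hs
    obtain ⟨v1, v2⟩ := fib_opp (show v ∈ fib C j (!(xor e f)) l by simp [hv])
    obtain ⟨w1, w2⟩ := fib_opp (show w ∈ fib C j (!(xor e f)) l by simp [hv])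
    obtain ⟨u1, u2⟩ := fib_same (show u ∈ fib C j (xor e f) l by simp [hu])
    rcases four' hs with ⟨g, -⟩ | ⟨g, -⟩ | ⟨k, hk, hz, g1, g2, o1, o2, o3⟩
    · exact h.e1 hp hq ho hj' v2 g (by rw [v1]; exact hne)
    · exact h.e1 hp hq ho hj' w2 g (by rw [w1]; exact hne)
    · refine h.kill u2 v2 w2 g2 (by rw [g1]; exact hz) ?_ ?_
      · intro i hi
        by_cases hij : i = j
        · subst hij; rw [v1, u1]
        · rw [o1 i hij hi, o2 i hij hi]
      · intro i hi
        by_cases hij : i = j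
        · subst hij; rw [w1, u1]
        · rw [o1 i hij hi, o3 i hij hi]

end Conf

end PB

set_option linter.unusedSectionVars false

namespace PB

variable {ι P : Type*} [Fintype ι] [DecidableEq ι] [DecidableEq P]

theorem lt1 {s s' : Bool} {a b : P × Bool} (hp : xor s a.2 = true) (hq : xor s' b.2 = true)
    (h : b.1 = a.1) (hs : s' = s) : b = a := by
  refine Prod.ext h ?_
  subst hs; revert hp hq; generalize a.2 = a; generalize b.2 = b; revert s' a b; decide

theorem lt2 {s s' : Bool} {a b : P × Bool} (hp : xor s a.2 = true) (hq : xor s' b.2 = true)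
    (h : b.1 = a.1) (hs : s' = !s) : b = neg a := by
  refine Prod.ext h ?_
  rw [neg_snd]
  subst hs; revert hp hq; generalize a.2 = a; generalize b.2 = b; revert s a b; decide

theorem lt3 {s s' : Bool} {a b : P × Bool} (hp : xor s a.2 = true) (hq : xor s' b.2 = false)
    (h : b.1 = a.1) (hs : s' = s) : b = neg a := by
  refine Prod.ext h ?_
  rw [neg_snd]
  subst hs; revert hp hq; generalize a.2 = a; generalize b.2 = b; revert s' a b; decide

theorem lt4 {s s' : Bool} {a b : P × Bool} (hp : xor s a.2 = true) (hq : xor s' b.2 = false)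
    (h : b.1 = a.1) (hs : s' = !s) : b = a := by
  refine Prod.ext h ?_
  subst hs; revert hp hq; generalize a.2 = a; generalize b.2 = b; revert s a b; decide

theorem ri_congr {j : ι} {m : P × Bool} {p q : ι → P × Bool} (h : ∀ l, l ≠ j → q l = p l)
    (x : ι → P → Bool) : ri j m q x = ri j m p x := by
  unfold ri; rw [upd_eq_iff.2 h]

theorem tagcases : ∀ e f e2 f2 e3 f3 e4 f4 : Bool,
    ¬ (e2 = e ∧ f2 = f) → ¬ (e4 = e3 ∧ f4 = f3) →
    ¬ (e3 = (!e) ∧ f3 = f) → ¬ (e4 = (!e) ∧ f4 = f) →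
    ¬ (e3 = (!e2) ∧ f3 = f2) → ¬ (e4 = (!e2) ∧ f4 = f2) →
    (e2 = (!e) ∧ f2 = (!f) ∧ ((e3 = e ∧ f3 = f ∧ e4 = (!e) ∧ f4 = (!f)) ∨
      (e4 = e ∧ f4 = f ∧ e3 = (!e) ∧ f3 = (!f)))) ∨
    (e2 = e ∧ f2 = (!f) ∧ ((e3 = e ∧ f3 = f ∧ e4 = e ∧ f4 = (!f)) ∨
      (e4 = e ∧ f4 = f ∧ e3 = e ∧ f3 = (!f)))) ∨
    (e2 = (!e) ∧ f2 = f ∧ ((e3 = (!e) ∧ f3 = (!f) ∧ e4 = e ∧ f4 = (!f)) ∨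
      (e4 = (!e) ∧ f4 = (!f) ∧ e3 = e ∧ f3 = (!f)))) := by
  intro e f e2 f2 e3 f3 e4 f4
  cases e <;> cases f <;> cases e2 <;> cases f2 <;> cases e3 <;> cases f3 <;> cases e4 <;> cases f4 <;> simp

namespace Conf

variable {C : Bool → Bool → Finset (ι → P × Bool)}

theorem alpha2 (h : Conf C) {j : ι} {b c : P} (hbc : b ≠ c)
    (hall : ∀ e f, ∀ u ∈ C e f, (u j).1 = b ∨ (u j).1 = c)
    {e f e2 f2 e3 f3 e4 f4 : Bool} {p1 p2 q1 q2 : ι → P × Bool}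
    (hP : dD C j b true = {⟨(e, f), p1⟩, ⟨(e2, f2), p2⟩})
    (hP2 : (dD C j b true).card = 2)
    (hQ : dD C j b false = {⟨(e3, f3), q1⟩, ⟨(e4, f4), q2⟩})
    (h2 : xor e2 f2 = xor e f) (h3 : xor e3 f3 = xor e f) (h4 : xor e4 f4 = xor e f)
    (hb : (p1 j).1 = b) (ht : xor (xor e f) (p1 j).2 = true) :
    ∃ v1 v2 : ι → P × Bool, (v1 ∈ C e (!f) ∨ v1 ∈ C (!e) f) ∧ (v2 ∈ C e (!f) ∨ v2 ∈ C (!e) f) ∧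
      v2 j = v1 j ∧ (v1 j).1 ≠ (p1 j).1 ∧ ∀ x, ri j (b, true) p1 x + ri j (b, true) p2 x =
        ri j (b, true) v1 x + ri j (b, true) v2 x := by
  have x1 : fib C j (!(xor e f)) (p1 j) = ∅ := by
    rw [fib_eq, hb, Bool.not_xor, ht, Bool.not_true, hQ, Finset.filter_insert,
      if_neg (by simp [sgn, h3]), Finset.filter_singleton, if_neg (by simp [sgn, h4])]
  have x2 : fib C j (!(xor e f)) (neg (p1 j)) = ∅ := by
    rw [fib_eq, neg_fst, neg_snd, hb, Bool.not_xor_not, ht, hP, Finset.filter_insert,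
      if_neg (by simp [sgn]), Finset.filter_singleton, if_neg (by simp [sgn, h2])]
  have x3 : fib C j (xor e f) (p1 j) = {⟨(e, f), p1⟩, ⟨(e2, f2), p2⟩} := by
    rw [fib_eq, hb, ht, hP, Finset.filter_insert, if_pos (by simp [sgn]),
      Finset.filter_singleton, if_pos (by simp [sgn, h2])]
  obtain ⟨l, hl, hle, hc, hs⟩ := h.alpha hbc hall (xor e f) hb x1 x2 (b, true)
  rw [x3, ← hP, hP2] at hc
  have h0 : (fib C j (xor e f) l) = ∅ := Finset.card_eq_zero.1 (by omega)
  obtain ⟨v, w, hvw, hv⟩ := Finset.card_eq_two.1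
    (show (fib C j (!(xor e f)) l).card = 2 by omega)
  have hne : (⟨(e, f), p1⟩ : Σ _ : Bool × Bool, ι → P × Bool) ≠ ⟨(e2, f2), p2⟩ := by
    intro he; rw [hP, he] at hP2; simp at hP2
  unfold sg at hs
  rw [x3, h0, hv] at hs
  simp only [Finset.sum_empty, Finset.sum_pair hvw, Finset.sum_pair hne, add_zero] at hs
  obtain ⟨v1, v2⟩ := fib_opp (show v ∈ fib C j (!(xor e f)) l by simp [hv])
  obtain ⟨w1, w2⟩ := fib_opp (show w ∈ fib C j (!(xor e f)) l by simp [hv])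
  exact ⟨v.2, w.2, v2, w2, by rw [v1, w1], by rw [v1, hl, hb]; exact hbc.symm, hs⟩

theorem beta2 (h : Conf C) {j : ι} {b c : P} (hbc : b ≠ c)
    (hall : ∀ e f, ∀ u ∈ C e f, (u j).1 = b ∨ (u j).1 = c)
    {e f e2 f2 e3 f3 e4 f4 : Bool} {p1 p2 q1 q2 : ι → P × Bool}
    (hP : dD C j b true = {⟨(e, f), p1⟩, ⟨(e2, f2), p2⟩})
    (hQ : dD C j b false = {⟨(e3, f3), q1⟩, ⟨(e4, f4), q2⟩})
    (h2 : xor e2 f2 = !(xor e f)) (h3 : xor e3 f3 = xor e f) (h4 : xor e4 f4 = !(xor e f))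
    (hb : (p1 j).1 = b) (ht : xor (xor e f) (p1 j).2 = true) :
    (∀ x, ri j (b, true) p1 x = ri j (b, true) q2 x) ∨
    ∃ u v : ι → P × Bool, (u ∈ C e f ∨ u ∈ C (!e) (!f)) ∧ (v ∈ C e (!f) ∨ v ∈ C (!e) f) ∧
      v j = u j ∧ (u j).1 ≠ (p1 j).1 ∧ ∀ x, ri j (b, true) p1 x + ri j (b, true) u x =
        ri j (b, true) q2 x + ri j (b, true) v x := by
  have x1 : fib C j (!(xor e f)) (p1 j) = {⟨(e4, f4), q2⟩} := by
    rw [fib_eq, hb, Bool.not_xor, ht, Bool.not_true, hQ, Finset.filter_insert,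
      if_neg (by simp [sgn, h3]), Finset.filter_singleton, if_pos (by simp [sgn, h4])]
  have x2 : fib C j (xor e f) (neg (p1 j)) = {⟨(e3, f3), q1⟩} := by
    rw [fib_eq, neg_fst, neg_snd, hb, Bool.xor_not, ht, Bool.not_true, hQ, Finset.filter_insert,
      if_pos (by simp [sgn, h3]), Finset.filter_singleton, if_neg (by simp [sgn, h4])]
    rfl
  have x3 : fib C j (xor e f) (p1 j) = {⟨(e, f), p1⟩} := by
    rw [fib_eq, hb, ht, hP, Finset.filter_insert, if_pos (by simp [sgn]),
      Finset.filter_singleton, if_neg (by simp [sgn, h2])]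
    rfl
  rcases h.beta hbc hall (xor e f) hb x3 x2 x1 (b, true) with h0 | ⟨l, hl, u, hu, v, hv, hs⟩
  · exact Or.inl h0
  · right
    obtain ⟨v1, v2⟩ := fib_opp hv
    obtain ⟨w1, w2⟩ := fib_same hu
    exact ⟨u.2, v.2, w2, v2, by rw [v1, w1], by rw [w1, hl, hb]; exact hbc.symm, hs⟩

theorem triv (h : Conf C) {j : ι} {b c : P} (hbc : b ≠ c)
    (hall : ∀ e f, ∀ u ∈ C e f, (u j).1 = b ∨ (u j).1 = c)
    {e f e2 f2 e3 f3 e4 f4 : Bool} {p1 p2 q1 q2 : ι → P × Bool}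
    (hP : dD C j b true = {⟨(e, f), p1⟩, ⟨(e2, f2), p2⟩})
    (hP2 : (dD C j b true).card = 2)
    (hQ : dD C j b false = {⟨(e3, f3), q1⟩, ⟨(e4, f4), q2⟩})
    (o1 : ∀ l, l ≠ j → q1 l = p1 l) (o2 : ∀ l, l ≠ j → q2 l = p2 l) : False := by
  obtain ⟨hp1, b1, t1⟩ := mem_dD.1 (show (⟨(e, f), p1⟩ : Σ _ : Bool × Bool, ι → P × Bool) ∈
    dD C j b true by rw [hP]; simp)
  obtain ⟨hp2, b2, t2⟩ := mem_dD.1 (show (⟨(e2, f2), p2⟩ : Σ _ : Bool × Bool, ι → P × Bool) ∈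
    dD C j b true by rw [hP]; simp)
  obtain ⟨hq1, b3, t3⟩ := mem_dD.1 (show (⟨(e3, f3), q1⟩ : Σ _ : Bool × Bool, ι → P × Bool) ∈
    dD C j b false by rw [hQ]; simp)
  obtain ⟨hq2, b4, t4⟩ := mem_dD.1 (show (⟨(e4, f4), q2⟩ : Σ _ : Bool × Bool, ι → P × Bool) ∈
    dD C j b false by rw [hQ]; simp)
  simp only [sgn] at hp1 hp2 hq1 hq2 b1 b2 b3 b4 t1 t2 t3 t4
  obtain ⟨rfl, rfl, j1⟩ := h.matchL hp1 hq1 (b3.trans b1.symm) o1 (by rw [t1, t3]; simp)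
  obtain ⟨rfl, rfl, j2⟩ := h.matchL hp2 hq2 (b4.trans b2.symm) o2 (by rw [t2, t4]; simp)
  have b21 := b2.trans b1.symm
  have b41 := b4.trans b1.symm
  rcases bool_cases e e2 with rfl | rfl <;> rcases bool_cases f f2 with rfl | rfl
  · obtain ⟨v1, v2, hv1, hv2, hv, hne, heq⟩ := h.alpha2 hbc hall hP hP2 hQ rfl (by simp) (by simp) b1 t1
    exact h.t2same hp1 hq1 o1 (b3.trans b1.symm) hp2 b21 hv1 hv2 hv hne heq
  · rcases h.beta2 hbc hall hP hQ (by simp) (by simp) (by simp) b1 t1 with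
      h0 | ⟨u, v, hu, hv, huv, hne, heq⟩
    · exact h.contra0 hp1 hq1 hq2 (by simp) o1 j1 b41 (two' h0)
    · exact h.t2diff hp1 hq1 hp2 (by simpa using hq2) o1 j1 o2 j2 b21 hu hv huv hne
        fun x => by rw [heq x, ri_congr o2]
  · rcases h.beta2 hbc hall hP hQ (by simp) (by simp) (by simp) b1 t1 with
      h0 | ⟨u, v, hu, hv, huv, hne, heq⟩
    · exact h.contra0 hp1 hq1 hq2 (by simp) o1 j1 b41 (two' h0)
    · exact h.t2diff hp1 hq1 (q := q2) (q' := p2) (by simpa using hq2) hp2 o1 j1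
        (fun l hl => (o2 l hl).symm) (by rw [j2]; simp) b41 hu hv huv hne heq
  · obtain ⟨v1, v2, hv1, hv2, hv, hne, heq⟩ := h.alpha2 hbc hall hP hP2 hQ (by simp) (by simp) (by simp) b1 t1
    exact h.t2same (p2 := q2) hp1 hq1 o1 (b3.trans b1.symm) (by simpa using hq2) b41 hv1 hv2 hv hne
      fun x => by rw [← heq x, ri_congr o2]

theorem nontriv (h : Conf C) {j : ι} {b c : P} (hbc : b ≠ c)
    (hall : ∀ e f, ∀ u ∈ C e f, (u j).1 = b ∨ (u j).1 = c)
    {e f e2 f2 e3 f3 e4 f4 : Bool} {p1 p2 q1 q2 : ι → P × Bool}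
    (hP : dD C j b true = {⟨(e, f), p1⟩, ⟨(e2, f2), p2⟩})
    (hP2 : (dD C j b true).card = 2)
    (hQ : dD C j b false = {⟨(e3, f3), q1⟩, ⟨(e4, f4), q2⟩})
    {k : ι} (hk : k ≠ j) (hz : (q1 k).1 ≠ (p1 k).1) (g1 : p2 k = neg (p1 k))
    (g2 : q2 k = neg (q1 k)) (o1 : ∀ l, l ≠ j → l ≠ k → p2 l = p1 l)
    (o2 : ∀ l, l ≠ j → l ≠ k → q1 l = p1 l)
    (o3 : ∀ l, l ≠ j → l ≠ k → q2 l = p1 l)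
    (hc : (e2 = (!e) ∧ f2 = (!f) ∧ (e3 = e ∧ f3 = f ∧ e4 = (!e) ∧ f4 = (!f))) ∨
    (e2 = e ∧ f2 = (!f) ∧ (e3 = e ∧ f3 = f ∧ e4 = e ∧ f4 = (!f))) ∨
    (e2 = (!e) ∧ f2 = f ∧ (e3 = (!e) ∧ f3 = (!f) ∧ e4 = e ∧ f4 = (!f)))) : False := by
  obtain ⟨hp1, b1, t1⟩ := mem_dD.1 (show (⟨(e, f), p1⟩ : Σ _ : Bool × Bool, ι → P × Bool) ∈
    dD C j b true by rw [hP]; simp)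
  obtain ⟨hp2, b2, t2⟩ := mem_dD.1 (show (⟨(e2, f2), p2⟩ : Σ _ : Bool × Bool, ι → P × Bool) ∈
    dD C j b true by rw [hP]; simp)
  obtain ⟨hq1, b3, t3⟩ := mem_dD.1 (show (⟨(e3, f3), q1⟩ : Σ _ : Bool × Bool, ι → P × Bool) ∈
    dD C j b false by rw [hQ]; simp)
  obtain ⟨hq2, b4, t4⟩ := mem_dD.1 (show (⟨(e4, f4), q2⟩ : Σ _ : Bool × Bool, ι → P × Bool) ∈
    dD C j b false by rw [hQ]; simp)
  simp only [sgn] at hp1 hp2 hq1 hq2 b1 b2 b3 b4 t1 t2 t3 t4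
  have b21 := b2.trans b1.symm
  have b31 := b3.trans b1.symm
  have b41 := b4.trans b1.symm
  have hz2 : (q2 k).1 ≠ (p1 k).1 := by rw [g2]; exact hz
  rcases hc with ⟨rfl, rfl, rfl, rfl, rfl, rfl⟩ | ⟨rfl, rfl, rfl, rfl, rfl, rfl⟩ |
    ⟨rfl, rfl, rfl, rfl, rfl, rfl⟩
  · obtain ⟨v1, v2, hv1, hv2, hv, hne, heq⟩ := h.alpha2 hbc hall hP hP2 hQ (by simp) (by simp) (by simp) b1 t1
    exact h.n1fin hp1 hp2 hq1 hq2 hk (lt1 t1 t2 b21 (by simp)) g1 (lt3 t1 t3 b31 rfl)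
      (lt3 t1 t4 b41 (by simp)) g2 hz o1 o2 o3 hv1 hv2 hv hne heq
  · rcases h.beta2 hbc hall hP hQ (by simp) (by simp) (by simp) b1 t1 with
      h0 | ⟨u, v, hu, hv, huv, hne, heq⟩
    · exact hz2 (by rw [two' h0 k hk])
    · refine h.n23fin hp1 hq2 hk (lt4 t1 t4 b41 (by simp)) hz2 o3 hv huv hne heq fun uk uo => ?_
      refine h.n2u (e := !_) (f := !_) (p2 := p2) (q1 := q1) (u := u) (j := j) (k := k)
        (by simpa using hp2) (by simpa using hq1) (by simpa using hu.symm) ?_ ?_ ?_ ?_ ?_ ?_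
      · rw [uk]; exact hz
      · rw [b2, ← b1]; exact hne
      · rw [b3, ← b1]; exact hne
      · rw [uk, g1]
      · intro l hl hl'; rw [o2 l hl hl', uo l hl hl']
      · intro l hl hl'; rw [o1 l hl hl', uo l hl hl']
  · rcases h.beta2 hbc hall hP hQ (by simp) (by simp) (by simp) b1 t1 with
      h0 | ⟨u, v, hu, hv, huv, hne, heq⟩
    · exact hz2 (by rw [two' h0 k hk])
    · refine h.n23fin hp1 hq2 hk (lt4 t1 t4 b41 (by simp)) hz2 o3 hv huv hne heq fun uk uo => ?_
      refine h.n2u (p2 := p2) (q1 := q1) (u := u) (j := j) (k := k)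
        hp2 hq1 hu ?_ ?_ ?_ ?_ ?_ ?_
      · rw [uk]; exact hz
      · rw [b2, ← b1]; exact hne
      · rw [b3, ← b1]; exact hne
      · rw [uk, g1]
      · intro l hl hl'; rw [o2 l hl hl', uo l hl hl']
      · intro l hl hl'; rw [o1 l hl hl', uo l hl hl']

theorem ntagP (h : Conf C) {j k : ι} {e f e2 f2 : Bool} {p p2 : ι → P × Bool} (hp : p ∈ C e f)
    (hp2 : p2 ∈ C e2 f2) (hb : (p2 j).1 = (p j).1)
    (ht : xor (xor e2 f2) (p2 j).2 = xor (xor e f) (p j).2)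
    (hk : p2 k = neg (p k)) (ho : ∀ l, l ≠ j → l ≠ k → p2 l = p l) : ¬ (e2 = e ∧ f2 = f) := by
  rintro ⟨rfl, rfl⟩
  refine (h.tf _ _).elim hp hp2 k hk fun l hl => ?_
  by_cases hlj : l = j
  · subst hlj
    exact Prod.ext hb (by simpa using ht)
  · exact ho l hlj hl

theorem ntagQ (h : Conf C) {j k : ι} {e f e2 f2 : Bool} {p p2 : ι → P × Bool} (hp : p ∈ C e f)
    (hp2 : p2 ∈ C e2 f2) (hb : (p2 j).1 = (p j).1)
    (ht : xor (xor e2 f2) (p2 j).2 = !(xor (xor e f) (p j).2))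
    (hk : (p2 k).1 ≠ (p k).1) (ho : ∀ l, l ≠ j → l ≠ k → p2 l = p l) :
    ¬ (e2 = (!e) ∧ f2 = f) := by
  rintro ⟨rfl, rfl⟩
  refine h.nohalf _ _ _ hp _ hp2 k hk fun l hl => ?_
  by_cases hlj : l = j
  · subst hlj
    exact Prod.ext hb (by simpa using ht)
  · exact ho l hlj hl

theorem twoD (h : Conf C) {j : ι} {b c : P} (hbc : b ≠ c)
    (hall : ∀ e f, ∀ u ∈ C e f, (u j).1 = b ∨ (u j).1 = c)
    (hP2 : (dD C j b true).card = 2) : False := by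
  have h2 := h.dD_card_eq hbc hall true
  rw [hP2] at h2
  have hD := h.dD_eq hbc hall (b, true) true
  obtain ⟨⟨⟨e, f⟩, p1⟩, ⟨⟨e2, f2⟩, p2⟩, hpp, hP⟩ := Finset.card_eq_two.1 hP2
  obtain ⟨⟨⟨e3, f3⟩, q1⟩, ⟨⟨e4, f4⟩, q2⟩, hqq, hQ⟩ := Finset.card_eq_two.1 h2.symm
  rw [hP, hQ] at hD
  simp only [Finset.sum_pair hpp, Finset.sum_pair hqq] at hD
  rw [Bool.not_true] at hQ
  have hQ' := hQ
  rw [Finset.pair_comm] at hQ'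
  obtain ⟨hp1, b1, t1⟩ := mem_dD.1 (show (⟨(e, f), p1⟩ : Σ _ : Bool × Bool, ι → P × Bool) ∈
    dD C j b true by rw [hP]; simp)
  obtain ⟨hp2, b2, t2⟩ := mem_dD.1 (show (⟨(e2, f2), p2⟩ : Σ _ : Bool × Bool, ι → P × Bool) ∈
    dD C j b true by rw [hP]; simp)
  obtain ⟨hq1, b3, t3⟩ := mem_dD.1 (show (⟨(e3, f3), q1⟩ : Σ _ : Bool × Bool, ι → P × Bool) ∈
    dD C j b false by rw [hQ]; simp)
  obtain ⟨hq2, b4, t4⟩ := mem_dD.1 (show (⟨(e4, f4), q2⟩ : Σ _ : Bool × Bool, ι → P × Bool) ∈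
    dD C j b false by rw [hQ]; simp)
  simp only [sgn] at hp1 hp2 hq1 hq2 b1 b2 b3 b4 t1 t2 t3 t4
  rcases four' hD with ⟨o1, o2⟩ | ⟨o1, o2⟩ | ⟨k, hk, hz, g1, g2, o1, o2, o3⟩
  · exact h.triv hbc hall hP hP2 hQ o1 o2
  · exact h.triv hbc hall hP hP2 hQ' o1 o2
  · have hz2 : (q2 k).1 ≠ (p1 k).1 := by rw [g2]; exact hz
    have g2' : q1 k = neg (q2 k) := by rw [g2]; simp
    have c1 := h.ntagP hp1 hp2 (b2.trans b1.symm) (by rw [t1, t2]) g1 o1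
    have c2 := h.ntagP hq1 hq2 (b4.trans b3.symm) (by rw [t3, t4]) g2
      (fun l hl hl' => by rw [o2 l hl hl', o3 l hl hl'])
    have c3 := h.ntagQ hp1 hq1 (b3.trans b1.symm) (by rw [t1, t3]; rfl) hz o2
    have c4 := h.ntagQ hp1 hq2 (b4.trans b1.symm) (by rw [t1, t4]; rfl) hz2 o3
    have c5 := h.ntagQ hp2 hq1 (b3.trans b2.symm) (by rw [t2, t3]; rfl) (by rw [g1]; exact hz)
      (fun l hl hl' => by rw [o2 l hl hl', o1 l hl hl'])
    have c6 := h.ntagQ hp2 hq2 (b4.trans b2.symm) (by rw [t2, t4]; rfl) (by rw [g1]; exact hz2)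
      (fun l hl hl' => by rw [o3 l hl hl', o1 l hl hl'])
    have A := h.nontriv hbc hall hP hP2 hQ hk hz g1 g2 o1 o2 o3
    have B := h.nontriv hbc hall hP hP2 hQ' hk hz2 g1 g2' o1 o3 o2
    rcases tagcases _ _ _ _ _ _ _ _ c1 c2 c3 c4 c5 c6 with ⟨x1, x2, x | x⟩ | ⟨x1, x2, x | x⟩ |
      ⟨x1, x2, x | x⟩
    · exact A (Or.inl ⟨x1, x2, x⟩)
    · exact B (Or.inl ⟨x1, x2, x⟩)
    · exact A (Or.inr (Or.inl ⟨x1, x2, x⟩))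
    · exact B (Or.inr (Or.inl ⟨x1, x2, x⟩))
    · exact A (Or.inr (Or.inr ⟨x1, x2, x⟩))
    · exact B (Or.inr (Or.inr ⟨x1, x2, x⟩))

theorem absurd' (h : Conf C) : False := by
  obtain ⟨p, hp⟩ := h.ne true true
  obtain ⟨x, hx⟩ := exists_inn p
  have heq := h.eq true true x
  have hpos : 0 < sm (C true true) x := sm_pos.2 ⟨p, hp, hx⟩
  have hq : ∃ f, ∃ q ∈ C (!f) f, inn x q := by
    by_contra hc
    push Not at hc
    have z1 : ¬ 0 < sm (C true false) x := fun h' => by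
      obtain ⟨q, hq, hxq⟩ := sm_pos.1 h'
      exact hc false q hq hxq
    have z2 : ¬ 0 < sm (C false true) x := fun h' => by
      obtain ⟨q, hq, hxq⟩ := sm_pos.1 h'
      exact hc true q hq hxq
    have := sm_nonneg (C false false) x
    simp only [Bool.not_true] at heq
    linarith
  obtain ⟨f, q, hq, hxq⟩ := hq
  have hpq : p ≠ q := by
    rintro rfl
    exact h.disj hp hq (by cases f <;> simp)
  have hj : ∃ j, (p j).1 ≠ (q j).1 := by
    by_contra hc
    push Not at hc
    apply hpq
    funext l
    refine Prod.ext (hc l) ?_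
    rw [← hx l, ← hxq l, hc l]
  obtain ⟨j, hbc⟩ := hj
  have hall : ∀ e f, ∀ u ∈ C e f, (u j).1 = (p j).1 ∨ (u j).1 = (q j).1 := by
    intro e' f' u hu
    rcases h.two j _ _ p hp _ _ q hq e' f' u hu with h1 | h1 | h1
    · exact absurd h1 hbc
    · exact Or.inl h1.symm
    · exact Or.inr h1.symm
  have hall' : ∀ e f, ∀ u ∈ C e f, (u j).1 = (q j).1 ∨ (u j).1 = (p j).1 :=
    fun e' f' u hu => (hall e' f' u hu).symm
  have f1 := h.fib_card hbc (j := j) true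
  have f2 := h.fib_card hbc (j := j) false
  have d1 := dD_card (C := C) j (p j).1 true
  have d2 := dD_card (C := C) j (p j).1 false
  have d3 := dD_card (C := C) j (q j).1 true
  have d4 := dD_card (C := C) j (q j).1 false
  have e1 := h.dD_card_eq hbc hall true
  have e2 := h.dD_card_eq hbc.symm hall' true
  simp only [Bool.not_true, Bool.not_false] at d1 d2 d3 d4 e1 e2
  have pos : ∀ e f (u : ι → P × Bool), u ∈ C e f → ∃ t, 0 < (dD C j (u j).1 t).card := by
    intro e f u hu
    exact ⟨_, Finset.card_pos.2 ⟨⟨(e, f), u⟩, mem_dD.2 ⟨hu, rfl, rfl⟩⟩⟩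
  have p1 : 0 < (dD C j (p j).1 true).card := by
    obtain ⟨t, ht⟩ := pos _ _ p hp
    cases t
    · omega
    · exact ht
  have p2 : 0 < (dD C j (q j).1 true).card := by
    obtain ⟨t, ht⟩ := pos _ _ q hq
    cases t
    · omega
    · exact ht
  have : (dD C j (p j).1 true).card = 1 ∨ (dD C j (p j).1 true).card = 2 ∨
      (dD C j (q j).1 true).card = 1 ∨ (dD C j (q j).1 true).card = 2 := by omega
  rcases this with h1 | h1 | h1 | h1
  · exact h.one hbc hall h1
  · exact h.twoD hbc hall h1
  · exact h.one hbc.symm hall' h1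
  · exact h.twoD hbc.symm hall' h1

end Conf

theorem comb {V W : Finset (ι → P × Bool)} (hV : Code V) (tV : TF V) (hW : Code W) (tW : TF W)
    (heq : ∀ x, sm V x = sm W x) (hc : V.card ≤ 11) : V = W := by
  have hd : Disjoint (V \ W) (W \ V) := by
    rw [Finset.disjoint_left]; intro a ha hb
    exact (Finset.mem_sdiff.1 ha).2 (Finset.mem_sdiff.1 hb).1
  have e1 : ∀ x, sm (V \ W) x = sm (W \ V) x := by
    intro x
    have a1 : sm (V \ W) x + sm (V ∩ W) x = sm V x := by
      unfold sm
      rw [← Finset.sum_union (Finset.disjoint_sdiff_inter _ _), Finset.sdiff_union_inter]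
    have a2 : sm (W \ V) x + sm (V ∩ W) x = sm W x := by
      unfold sm
      rw [Finset.inter_comm, ← Finset.sum_union (Finset.disjoint_sdiff_inter _ _),
        Finset.sdiff_union_inter]
    have := heq x
    linarith
  have h1 := comb_aux (fun C hC => hC.absurd') _ (V \ W) (W \ V) (hV.mono Finset.sdiff_subset)
    (tV.mono Finset.sdiff_subset) (hW.mono Finset.sdiff_subset) (tW.mono Finset.sdiff_subset) hd e1
    rfl (le_trans (Finset.card_le_card Finset.sdiff_subset) hc)
  have h2 : (W \ V).card = (V \ W).card := (card_of_sm e1).symm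
  rw [h1, Finset.card_empty, Finset.card_eq_zero] at h2
  exact Finset.Subset.antisymm (Finset.sdiff_eq_empty_iff_subset.1 h1)
    (Finset.sdiff_eq_empty_iff_subset.1 h2)

end PB

set_option linter.unusedSectionVars false

namespace PB

theorem card_le_of_sum {ι P α β : Type*} [Fintype ι] [DecidableEq ι] [DecidableEq P]
    (S : Finset α) (T : Finset β) (f : α → ι → P × Bool)
    (g : β → ι → P × Bool) (J : Finset ι)
    (h : ∀ x, ∑ a ∈ S, indOn J (f a) x ≤ ∑ b ∈ T, indOn J (g b) x) : S.card ≤ T.card := by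
  induction J using Finset.induction_on with
  | empty =>
    have := h (fun _ _ => true)
    simp only [indOn, Finset.notMem_empty, false_imp_iff, implies_true, if_true] at this
    simpa using this
  | insert j J hj ih =>
    refine ih fun x => ?_
    have key : ∀ v : ι → P × Bool, indOn J v x = indOn (insert j J) v x +
        indOn (insert j J) v (fun i r => if i = j then !x i r else x i r) := by
      intro v
      have e : ∀ y : ι → P → Bool, indOn (insert j J) v y =
          if y j (v j).1 = (v j).2 then indOn J v y else 0 := by
        intro y; unfold indOn; simp only [Finset.forall_mem_insert]
        split_ifs <;> tauto
      have e2 : indOn J v (fun i r => if i = j then !x i r else x i r) = indOn J v x := by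
        unfold indOn
        congr 1
        apply propext
        refine forall_congr' fun i => forall_congr' fun hi => ?_
        have hne : i ≠ j := by rintro rfl; exact hj hi
        simp [hne]
      rw [e, e, e2]
      simp only [if_true]
      cases x j (v j).1 <;> cases (v j).2 <;> simp
    simp only [key, Finset.sum_add_distrib]
    exact add_le_add (h _) (h _)

theorem sm_of_code {ι P : Type*} [Fintype ι] [DecidableEq ι] [DecidableEq P]
    {V : Finset (ι → P × Bool)} (hV : Code V) {v : ι → P × Bool} (hv : v ∈ V)
    {x : ι → P → Bool} (hx : inn x v) : sm V x = 1 := by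
  unfold sm
  rw [Finset.sum_eq_single v]
  · exact ind_univ_one hx
  · intro u hu hne
    exact ind_univ_zero fun h => hne (code_unique hV hu hv h hx)
  · intro h; exact absurd hv h

theorem sm_le {ι P : Type*} [Fintype ι] [DecidableEq ι] [DecidableEq P]
    {V W : Finset (ι → P × Bool)} (hV : Code V) (hW : Code W)
    (h : ∀ x, (∃ v ∈ V, inn x v) → ∃ w ∈ W, inn x w) (x : ι → P → Bool) : sm V x ≤ sm W x := by
  by_cases hx : ∃ v ∈ V, inn x v
  · obtain ⟨w, hw, hxw⟩ := h x hx
    obtain ⟨v, hv, hxv⟩ := hx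
    rw [sm_of_code hV hv hxv, sm_of_code hW hw hxw]
  · have : ¬ 0 < sm V x := fun h' => hx (sm_pos.1 h')
    exact (not_lt.1 this).trans (sm_nonneg W x)

section boxes

variable {d : ℕ} {X : Fin d → Type*}

theorem step {𝓕 𝓖 : Set (∀ i, Set (X i))} (hF : 𝓕.Pairwise BoxDichotomous)
    (hG : 𝓖.Pairwise BoxDichotomous) (pF : ∀ K ∈ 𝓕, IsProperBox K)
    (pG : ∀ K ∈ 𝓖, IsProperBox K) (E : ∀ i, Set (X i) → Prop)
    (hE : ∀ i A, E i Aᶜ ↔ ¬ E i A) (i : Fin d)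
    (h : ∀ x : X i, (∃ K ∈ 𝓕, x ∈ K i ∧ ∀ l, l ≠ i → E l (K l)) ↔
      ∃ K ∈ 𝓖, x ∈ K i ∧ ∀ l, l ≠ i → E l (K l))
    (hK : ∃ K ∈ 𝓕, ∀ l, E l (K l)) : ∃ K ∈ 𝓖, ∀ l, E l (K l) := by
  obtain ⟨K, hKF, hKE⟩ := hK
  have uniq : ∀ 𝓗 : Set (∀ i, Set (X i)), 𝓗.Pairwise BoxDichotomous → ∀ A ∈ 𝓗, ∀ B ∈ 𝓗,
      (∀ l, l ≠ i → E l (A l)) → (∀ l, l ≠ i → E l (B l)) → A ≠ B → A i = (B i)ᶜ := by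
    intro 𝓗 h𝓗 A hA B hB eA eB hne
    obtain ⟨l, hl⟩ := h𝓗 hA hB hne
    by_cases hli : l = i
    · subst hli; exact hl
    · exact absurd (eB l hli) ((hE l _).1 (hl ▸ eA l hli))
  obtain ⟨x, hx⟩ := (pF K hKF i).1
  obtain ⟨G, hGG, hxG, hGE⟩ := (h x).1 ⟨K, hKF, hx, fun l _ => hKE l⟩
  by_contra hno
  have full : ∀ A : ∀ i, Set (X i), (∀ l, l ≠ i → E l (A l)) → E i (A i) → ∀ l, E l (A l) := by
    intro A hA hi l
    by_cases hl : l = i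
    · subst hl; exact hi
    · exact hA l hl
  have hGi : ¬ E i (G i) := fun hi => hno ⟨G, hGG, full G hGE hi⟩
  have oneG : ∀ G' ∈ 𝓖, (∀ l, l ≠ i → E l (G' l)) → G' = G := by
    intro G' hG' hE'
    by_contra hne
    have := uniq 𝓖 hG G' hG' G hGG hE' hGE hne
    exact hno ⟨G', hG', full G' hE' (by rw [this]; exact (hE _ _).2 hGi)⟩
  have sub : ∀ K' ∈ 𝓕, (∀ l, l ≠ i → E l (K' l)) → K' i ⊆ G i := by
    intro K' hK' hE' y hy
    obtain ⟨G', hG', hyG, hGE'⟩ := (h y).1 ⟨K', hK', hy, hE'⟩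
    rw [oneG G' hG' hGE'] at hyG; exact hyG
  have oneF : ∀ K' ∈ 𝓕, (∀ l, l ≠ i → E l (K' l)) → K' = K := by
    intro K' hK' hE'
    by_contra hne
    have h1 := uniq 𝓕 hF K' hK' K hKF hE' (fun l _ => hKE l) hne
    have h2 := sub K' hK' hE'
    have h3 := sub K hKF (fun l _ => hKE l)
    refine (pG G hGG i).2 (Set.eq_univ_of_forall fun y => ?_)
    by_cases hy : y ∈ K i
    · exact h3 hy
    · exact h2 (by rw [h1]; exact hy)
  have : G i = K i := by
    refine Set.Subset.antisymm (fun y hy => ?_) (sub K hKF (fun l _ => hKE l))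
    obtain ⟨K', hK', hyK, hE'⟩ := (h y).2 ⟨G, hGG, hy, hGE⟩
    rw [oneF K' hK' hE'] at hyK; exact hyK
  exact hGi (this ▸ hKE i)

theorem transfer {𝓕 𝓖 : Set (∀ i, Set (X i))} (hF : 𝓕.Pairwise BoxDichotomous)
    (hG : 𝓖.Pairwise BoxDichotomous) (pF : ∀ K ∈ 𝓕, IsProperBox K)
    (pG : ∀ K ∈ 𝓖, IsProperBox K) (hU : (⋃ K ∈ 𝓕, boxSet K) = ⋃ K ∈ 𝓖, boxSet K)
    (S : Finset (Fin d)) : ∀ E : ∀ i, Set (X i) → Prop, (∀ i A, E i Aᶜ ↔ ¬ E i A) →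
    (∀ i, i ∉ S → ∃ x : X i, ∀ A, E i A ↔ x ∈ A) →
    ((∃ K ∈ 𝓕, ∀ l, E l (K l)) ↔ ∃ K ∈ 𝓖, ∀ l, E l (K l)) := by
  induction S using Finset.induction_on with
  | empty =>
    intro E hE hS
    choose x hx using fun i => hS i (Finset.notMem_empty i)
    have := Set.ext_iff.1 hU x
    simp only [Set.mem_iUnion, boxSet, Set.mem_setOf_eq, exists_prop] at this
    simp only [hx]
    exact this
  | insert i S hi ih =>
    intro E hE hS
    have key : ∀ x : X i, (∃ K ∈ 𝓕, x ∈ K i ∧ ∀ l, l ≠ i → E l (K l)) ↔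
      ∃ K ∈ 𝓖, x ∈ K i ∧ ∀ l, l ≠ i → E l (K l) := by
      intro x
      have hup : ∀ K : ∀ i, Set (X i), (∀ l, (Function.update E i (fun A => x ∈ A)) l (K l)) ↔
          (x ∈ K i ∧ ∀ l, l ≠ i → E l (K l)) := by
        intro K
        constructor
        · intro hh
          refine ⟨by simpa using hh i, fun l hl => ?_⟩
          have := hh l
          rwa [Function.update_of_ne hl] at this
        · rintro ⟨h1, h2⟩ l
          by_cases hl : l = i
          · subst hl; simpa using h1
          · rw [Function.update_of_ne hl]; exact h2 l hl
      have := ih (Function.update E i (fun A => x ∈ A)) (by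
        intro l A
        by_cases hl : l = i
        · subst hl; simp
        · rw [Function.update_of_ne hl]; exact hE l A) (by
        intro l hl
        by_cases hli : l = i
        · subst hli; exact ⟨x, fun A => by simp⟩
        · rw [Function.update_of_ne hli]
          exact hS l (by simp [hli, hl]))
      simpa only [hup] using this
    exact ⟨step hF hG pF pG E hE i key, step hG hF pG pF E hE i fun x => (key x).symm⟩

open Classical in
/-- letter of a set -/
noncomputable def lett (x0 : ∀ i, X i) (i : Fin d) (A : Set (X i)) : (Σ i, Set (X i)) × Bool :=
  if x0 i ∈ A then (⟨i, A⟩, true) else (⟨i, Aᶜ⟩, false)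

theorem lett_compl (x0 : ∀ i, X i) (i : Fin d) (A : Set (X i)) :
    lett x0 i Aᶜ = neg (lett x0 i A) := by
  unfold lett
  by_cases h : x0 i ∈ A
  · rw [if_pos h, if_neg (by simpa using h)]; simp [neg]
  · rw [if_neg h, if_pos (by simpa using h)]; simp [neg]

theorem lett_inj (x0 : ∀ i, X i) (i : Fin d) {A B : Set (X i)}
    (h : lett x0 i A = lett x0 i B) : A = B := by
  unfold lett at h
  split_ifs at h
  · simpa using h
  · simp at h
  · simp at h
  · simpa using h

theorem lett_neg (x0 : ∀ i, X i) (i : Fin d) {A B : Set (X i)} :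
    lett x0 i A = neg (lett x0 i B) ↔ A = Bᶜ := by
  rw [← lett_compl]
  exact ⟨fun h => lett_inj x0 i h, fun h => by rw [h]⟩

/-- word of a box -/
noncomputable def wd (x0 : ∀ i, X i) (K : ∀ i, Set (X i)) : Fin d → (Σ i, Set (X i)) × Bool :=
  fun i => lett x0 i (K i)

theorem wd_inj (x0 : ∀ i, X i) : Function.Injective (wd x0) := fun K G h =>
  funext fun i => lett_inj x0 i (congrFun h i)

open Classical in
theorem wd_code (x0 : ∀ i, X i) {𝓕 : Set (∀ i, Set (X i))} (hF : 𝓕.Pairwise BoxDichotomous)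
    (V : Finset (∀ i, Set (X i))) (hV : ∀ K ∈ V, K ∈ 𝓕) : Code (V.image (wd x0)) := by
  intro u hu v hv hne
  obtain ⟨K, hK, rfl⟩ := Finset.mem_image.1 hu
  obtain ⟨G, hG, rfl⟩ := Finset.mem_image.1 hv
  obtain ⟨i, hi⟩ := hF (hV K hK) (hV G hG) (by rintro rfl; exact hne rfl)
  exact ⟨i, (lett_neg x0 i).2 hi⟩

open Classical in
theorem wd_tf (x0 : ∀ i, X i) {𝓕 : Set (∀ i, Set (X i))}
    (hF : ∀ K ∈ 𝓕, ∀ G ∈ 𝓕, ¬ BoxTwinPair K G)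
    (V : Finset (∀ i, Set (X i))) (hV : ∀ K ∈ V, K ∈ 𝓕) : TF (V.image (wd x0)) := by
  intro u hu j hj
  obtain ⟨K, hK, rfl⟩ := Finset.mem_image.1 hu
  obtain ⟨G, hG, h⟩ := Finset.mem_image.1 hj
  refine hF G (hV G hG) K (hV K hK) ⟨j, ?_, fun i hi => ?_⟩
  · have := congrFun h j
    rw [Function.update_self] at this
    exact (lett_neg x0 j).1 this
  · have := congrFun h i
    rw [Function.update_of_ne hi] at this
    exact lett_inj x0 i this

theorem wd_transfer (x0 : ∀ i, X i) {𝓕 𝓖 : Set (∀ i, Set (X i))}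
    (hF : 𝓕.Pairwise BoxDichotomous)
    (hG : 𝓖.Pairwise BoxDichotomous) (pF : ∀ K ∈ 𝓕, IsProperBox K)
    (pG : ∀ K ∈ 𝓖, IsProperBox K) (hU : (⋃ K ∈ 𝓕, boxSet K) = ⋃ K ∈ 𝓖, boxSet K)
    (x : Fin d → (Σ i, Set (X i)) → Bool) :
    (∃ K ∈ 𝓕, inn x (wd x0 K)) ↔ ∃ K ∈ 𝓖, inn x (wd x0 K) :=
  transfer hF hG pF pG hU Finset.univ
    (fun i A => x i (lett x0 i A).1 = (lett x0 i A).2)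
    (fun i A => by
      rw [lett_compl, neg_fst, neg_snd]
      cases x i (lett x0 i A).1 <;> cases (lett x0 i A).2 <;> simp)
    (fun i hi => absurd (Finset.mem_univ i) hi)

theorem final {𝓕 𝓖 : Set (∀ i, Set (X i))} (x0 : ∀ i, X i)
    (hF : 𝓕.Pairwise BoxDichotomous)
    (hG : 𝓖.Pairwise BoxDichotomous) (pF : ∀ K ∈ 𝓕, IsProperBox K)
    (pG : ∀ K ∈ 𝓖, IsProperBox K) (hU : (⋃ K ∈ 𝓕, boxSet K) = ⋃ K ∈ 𝓖, boxSet K)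
    (tF : ∀ K ∈ 𝓕, ∀ G ∈ 𝓕, ¬ BoxTwinPair K G) (tG : ∀ K ∈ 𝓖, ∀ G ∈ 𝓖, ¬ BoxTwinPair K G)
    (fin : 𝓕.Finite) (hc : 𝓕.ncard ≤ 11) : 𝓖 = 𝓕 := by
  classical
  have tr := wd_transfer x0 hF hG pF pG hU
  set V := fin.toFinset with hV
  have hVF : ∀ K ∈ V, K ∈ 𝓕 := fun K hK => by simpa [hV] using hK
  have cV := wd_code x0 hF V hVF
  have finG : 𝓖.Finite := by
    by_contra hinf
    obtain ⟨W, hW, hWc⟩ := Set.Infinite.exists_subset_card_eq hinf (V.card + 1)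
    have cW := wd_code x0 hG W (fun K hK => hW hK)
    have hle : ∀ x, sm (W.image (wd x0)) x ≤ sm (V.image (wd x0)) x := sm_le cW cV (by
      rintro x ⟨w, hw, hx⟩
      obtain ⟨K, hK, rfl⟩ := Finset.mem_image.1 hw
      obtain ⟨G, hG', hx'⟩ := (tr x).2 ⟨K, hW hK, hx⟩
      exact ⟨_, Finset.mem_image_of_mem _ (by simpa [hV] using hG'), hx'⟩)
    have := card_le_of_sum _ _ id id Finset.univ hle
    rw [Finset.card_image_of_injective _ (wd_inj x0),
      Finset.card_image_of_injective _ (wd_inj x0)] at this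
    omega
  set W := finG.toFinset with hW
  have hWG : ∀ K ∈ W, K ∈ 𝓖 := fun K hK => by simpa [hW] using hK
  have cW := wd_code x0 hG W hWG
  have ex : ∀ x, (∃ v ∈ V.image (wd x0), inn x v) ↔ ∃ v ∈ W.image (wd x0), inn x v := by
    intro x
    simpa [hV, hW] using tr x
  have heq : ∀ x, sm (V.image (wd x0)) x = sm (W.image (wd x0)) x := fun x =>
    le_antisymm (sm_le cV cW (fun x => (ex x).1) x) (sm_le cW cV (fun x => (ex x).2) x)
  have := comb cV (wd_tf x0 tF V hVF) cW (wd_tf x0 tG W hWG) heq (by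
    rw [Finset.card_image_of_injective _ (wd_inj x0), hV, ← Set.ncard_eq_toFinset_card _ fin]
    exact hc)
  have hVW := Finset.image_injective (wd_inj x0) this
  have := congrArg (fun s : Finset (∀ i, Set (X i)) => (s : Set (∀ i, Set (X i)))) hVW
  simpa [hV, hW] using this.symm

end boxes

end PB

/-- If `𝓕` is a proper suit without twin pairs for a polybox `F` in a `d`-box
`X` and `|𝓕| ≤ 11`, then every proper suit `𝓖` for `F` contains a twin pair or
equals `𝓕`. -/
theorem suit_twinPair_or_eq {d : ℕ} {X : Fin d → Type*}
    [∀ i, Nontrivial (X i)]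
    (F : Set (∀ i, X i)) (𝓕 𝓖 : Set (∀ i, Set (X i)))
    (h𝓕 : IsSuit 𝓕) (h𝓕p : ∀ K ∈ 𝓕, IsProperBox K)
    (h𝓕F : (⋃ K ∈ 𝓕, boxSet K) = F)
    (h𝓕tf : ∀ K ∈ 𝓕, ∀ G ∈ 𝓕, ¬ BoxTwinPair K G)
    (h𝓕fin : 𝓕.Finite) (h𝓕card : 𝓕.ncard ≤ 11)
    (h𝓖 : IsSuit 𝓖) (h𝓖p : ∀ K ∈ 𝓖, IsProperBox K)
    (h𝓖F : (⋃ K ∈ 𝓖, boxSet K) = F) :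
    (∃ K ∈ 𝓖, ∃ G ∈ 𝓖, BoxTwinPair K G) ∨ 𝓖 = 𝓕 := by
  by_cases ht : ∃ K ∈ 𝓖, ∃ G ∈ 𝓖, BoxTwinPair K G
  · exact Or.inl ht
  · right
    push Not at ht
    exact PB.final (fun i => Classical.arbitrary (X i)) h𝓕.2 h𝓖.2 h𝓕p h𝓖p (h𝓕F.trans h𝓖F.symm)
      h𝓕tf ht h𝓕fin h𝓕card
end

section
/- Let S be a finite alphabet with complementation, let V ⊆ S^d be a polybox code without twin pairs, and let u ∈ S^d \ V be such that ǔ ⊆ ⋃_{v ∈ V} v̌ and ǔ ∩ v̌ ≠ ∅ for every v ∈ V. Then |V| ≥ 5, and if |V| = 5 then V is rigid. -/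
/-- `ES` is the set of all `B ⊆ S` containing exactly one letter from each
complementary pair `{s, s'}`. -/
def ESet {S : Type*} (c : S → S) : Set (Set S) :=
  {B | ∀ s, s ∈ B ↔ c s ∉ B}

/-- `Es = {B ∈ ES : s ∈ B}`. -/
def Eltr {S : Type*} (c : S → S) (s : S) : Set (Set S) :=
  {B | B ∈ ESet c ∧ s ∈ B}

/-- The equicomplementary realization `v̌ = Ev₁ × ⋯ × Ev_d` of a word `v ∈ S^d`,
viewed as a box in the `d`-box `(ES)^d`. -/
def realize {S : Type*} (c : S → S) {d : ℕ} (v : Fin d → S) :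
    Set (Fin d → Set S) :=
  {B | ∀ i, B i ∈ Eltr c (v i)}

/-- Words `u, v ∈ S^d` are dichotomous: some coordinate carries complementary
letters. -/
def Dichotomous {S : Type*} (c : S → S) {d : ℕ} (u v : Fin d → S) : Prop :=
  ∃ j, v j = c (u j)

/-- Words `u, v ∈ S^d` form a twin pair. -/
def TwinPair {S : Type*} (c : S → S) {d : ℕ} (u v : Fin d → S) : Prop :=
  ∃ j, v j = c (u j) ∧ ∀ i, i ≠ j → u i = v i

/-- A polybox code: a set of pairwise dichotomous words. -/
def PolyboxCode {S : Type*} (c : S → S) {d : ℕ} (V : Set (Fin d → S)) : Prop :=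
  ∀ u ∈ V, ∀ v ∈ V, u ≠ v → Dichotomous c u v

/-- Polybox codes `V, W ⊆ S^d` are equivalent if
`⋃_{v ∈ V} v̌ = ⋃_{w ∈ W} w̌`. -/
def Equivalent {S : Type*} (c : S → S) {d : ℕ}
    (V W : Set (Fin d → S)) : Prop :=
  (⋃ v ∈ V, realize c v) = ⋃ w ∈ W, realize c w

/-- A polybox code `V ⊆ S^d` is rigid if every polybox code equivalent to `V`
equals `V`. -/
def Rigid {S : Type*} (c : S → S) {d : ℕ} (V : Set (Fin d → S)) : Prop :=
  ∀ W : Set (Fin d → S), PolyboxCode c W → Equivalent c V W → W = V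

open Classical in
/-- A consistent set of letters extends to a member of `ES`. -/
theorem exists_ext {S : Type*} (c : S → S) (hinv : ∀ s, c (c s) = s) (hne : ∀ s, c s ≠ s)
    (L : Set S) (hL : ∀ x ∈ L, c x ∉ L) : ∃ B ∈ ESet c, L ⊆ B := by
  let r : S → S → Prop := WellOrderingRel
  have htri : ∀ a b : S, r a b ∨ a = b ∨ r b a := fun a b => trichotomous_of r a b
  have hasy : ∀ a b : S, r a b → ¬ r b a := fun a b => asymm_of r
  refine ⟨{x | x ∈ L ∨ (c x ∉ L ∧ r x (c x))}, ?_, fun x hx => Or.inl hx⟩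
  intro x
  simp only [Set.mem_ofPred_eq, hinv]
  have h1 := hL x
  have h2 := hL (c x)
  rw [hinv] at h2
  have h3 := htri x (c x)
  have h4 := hasy x (c x)
  have h5 := (hne x).symm
  tauto

theorem exists_point {S : Type*} (c : S → S) (hinv : ∀ s, c (c s) = s) (hne : ∀ s, c s ≠ s)
    {d : ℕ} (L : Fin d → Set S) (hL : ∀ l, ∀ x ∈ L l, c x ∉ L l) :
    ∃ z : Fin d → Set S, ∀ l, z l ∈ ESet c ∧ L l ⊆ z l := by
  choose z hz using fun l => exists_ext c hinv hne (L l) (hL l)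
  exact ⟨z, hz⟩

/-- Two nowhere complementary words have a common point. -/
theorem exists_common {S : Type*} (c : S → S) (hinv : ∀ s, c (c s) = s) (hne : ∀ s, c s ≠ s)
    {d : ℕ} (u v : Fin d → S) (h : ∀ l, v l ≠ c (u l)) :
    ∃ z, z ∈ realize c u ∧ z ∈ realize c v := by
  obtain ⟨z, hz⟩ := exists_point c hinv hne (fun l => {u l, v l}) (by
    intro l x hx hx'
    have := h l; have := hne (u l); have := hne (v l); have := hinv (u l); have := hinv (v l)
    simp only [Set.mem_insert_iff, Set.mem_singleton_iff] at hx hx'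
    grind)
  exact ⟨z, fun l => ⟨(hz l).1, (hz l).2 (by simp)⟩, fun l => ⟨(hz l).1, (hz l).2 (by simp)⟩⟩

/-- Two nowhere complementary words have a common point avoiding a third letter. -/
theorem exists_common_avoid {S : Type*} (c : S → S) (hinv : ∀ s, c (c s) = s)
    (hne : ∀ s, c s ≠ s)
    {d : ℕ} (u v : Fin d → S) (h : ∀ l, v l ≠ c (u l)) (k : Fin d) (q : S)
    (hq : q ≠ u k) (hq' : q ≠ v k) :
    ∃ z, z ∈ realize c u ∧ z ∈ realize c v ∧ q ∉ z k := by
  obtain ⟨z, hz⟩ := exists_point c hinv hne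
    (fun l => {x | x = u l ∨ x = v l ∨ (l = k ∧ x = c q)}) (by
    intro l x hx hx'
    have := h l; have := hne (u l); have := hne (v l); have := hinv (u l); have := hinv (v l)
    have := hinv q; have := hne q; have := hne (c q)
    simp only [Set.mem_ofPred_eq] at hx hx'
    grind)
  refine ⟨z, fun l => ⟨(hz l).1, (hz l).2 (by simp)⟩, fun l => ⟨(hz l).1, (hz l).2 (by simp)⟩, ?_⟩
  intro hmem
  exact ((hz k).1 q).1 hmem ((hz k).2 (by simp))

theorem not_compl_of_mem {S : Type*} (c : S → S) {d : ℕ} {u v : Fin d → S}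
    {z : Fin d → Set S} (hu : z ∈ realize c u) (hv : z ∈ realize c v) (l : Fin d) :
    v l ≠ c (u l) := by
  intro h
  have h1 := (hv l).2
  rw [h] at h1
  exact ((hu l).1 (u l)).1 (hu l).2 h1

/-- Flip the choice between `s` and `c s`. -/
def flipLetter {S : Type*} (c : S → S) (s : S) (B : Set S) : Set S :=
  {x | (x ∈ B ∧ x ≠ s ∧ x ≠ c s) ∨ (x ∉ B ∧ (x = s ∨ x = c s))}

open Classical in
theorem flipLetter_flipLetter {S : Type*} (c : S → S) (s : S) (B : Set S) :
    flipLetter c s (flipLetter c s B) = B := by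
  ext x
  simp only [flipLetter, Set.mem_ofPred_eq]
  tauto

theorem flipLetter_compl {S : Type*} (c : S → S) (hinv : ∀ s, c (c s) = s) (s : S) (B : Set S) :
    flipLetter c (c s) B = flipLetter c s B := by
  ext x
  simp only [flipLetter, Set.mem_ofPred_eq, hinv]
  tauto

theorem flipLetter_mem {S : Type*} (c : S → S) (hinv : ∀ s, c (c s) = s)
    (s : S) (B : Set S) (hB : B ∈ ESet c) : flipLetter c s B ∈ ESet c := by
  intro x
  have h := hB x
  have h1 : c x = s ↔ x = c s := ⟨fun h => by rw [← h, hinv], fun h => by rw [h, hinv]⟩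
  have h2 : c x = c s ↔ x = s := ⟨fun h => by rw [← hinv x, h, hinv], fun h => by rw [h]⟩
  simp only [flipLetter, Set.mem_ofPred_eq, ne_eq, h1, h2]
  tauto

theorem flipLetter_other {S : Type*} (c : S → S) (s x : S) (B : Set S) (h : x ≠ s) (h' : x ≠ c s) :
    x ∈ flipLetter c s B ↔ x ∈ B := by
  simp only [flipLetter, Set.mem_ofPred_eq]
  tauto

theorem realize_flip {S : Type*} (c : S → S) (hinv : ∀ s, c (c s) = s) {d : ℕ} (s : S) (i : Fin d)
    (y : Fin d → S) (z : Fin d → Set S) (hz : z ∈ realize c y) (h : y i ≠ s) (h' : y i ≠ c s) :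
    Function.update z i (flipLetter c s (z i)) ∈ realize c y := by
  intro l
  by_cases hl : l = i
  · subst hl
    rw [Function.update_self]
    exact ⟨flipLetter_mem c hinv s _ (hz l).1, (flipLetter_other c s _ _ h h').2 (hz l).2⟩
  · rw [Function.update_of_ne hl]
    exact hz l

theorem realize_flip_update {S : Type*} (c : S → S) (hinv : ∀ s, c (c s) = s) {d : ℕ} (s : S)
    (i : Fin d) (x : Fin d → S) (z : Fin d → Set S) (hx : x i = s)
    (hz : z ∈ realize c (Function.update x i (c s))) :
    Function.update z i (flipLetter c s (z i)) ∈ realize c x := by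
  intro l
  have h := hz l
  by_cases hl : l = i
  · subst hl
    rw [Function.update_self] at h ⊢
    refine ⟨flipLetter_mem c hinv s _ h.1, ?_⟩
    rw [hx]
    refine Or.inr ⟨?_, Or.inl rfl⟩
    intro hs
    exact (h.1 s).1 hs h.2
  · rw [Function.update_of_ne hl] at h ⊢
    exact h

theorem flip_flip_point {S : Type*} (c : S → S) {d : ℕ} (s : S) (i : Fin d) (z : Fin d → Set S) :
    Function.update (Function.update z i (flipLetter c s (z i))) i
      (flipLetter c s ((Function.update z i (flipLetter c s (z i))) i)) = z := by
  simp [flipLetter_flipLetter]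

/-- `B` is a twin-pair-free code which, inside the box of `u`, partitions the box of `a`. -/
structure Cover {S : Type*} (c : S → S) {d : ℕ} (u a : Fin d → S) (B : Finset (Fin d → S)) :
    Prop where
  code : ∀ x ∈ B, ∀ y ∈ B, x ≠ y → Dichotomous c x y
  tf : ∀ x ∈ B, ∀ y ∈ B, ¬ TwinPair c x y
  hu : ∀ b ∈ B, ∀ l, b l ≠ c (u l)
  within : ∀ b ∈ B, ∀ l, a l ≠ u l → b l = a l
  ha : ∀ l, a l ≠ c (u l)
  cov : ∀ z, z ∈ realize c u → z ∈ realize c a → ∃ b ∈ B, z ∈ realize c b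

section
variable {S : Type*} {c : S → S} {d : ℕ} {u a : Fin d → S} {B : Finset (Fin d → S)}

theorem Cover.eq_of_mem (H : Cover c u a B) {x y : Fin d → S} (hx : x ∈ B) (hy : y ∈ B)
    {z : Fin d → Set S} (hzx : z ∈ realize c x) (hzy : z ∈ realize c y) : x = y := by
  by_contra hne
  obtain ⟨j, hj⟩ := H.code x hx y hy hne
  exact not_compl_of_mem c hzx hzy j hj

theorem Cover.mem_a (H : Cover c u a B) {x : Fin d → S} (hx : x ∈ B)
    {z : Fin d → Set S} (hzu : z ∈ realize c u) (hzx : z ∈ realize c x) : z ∈ realize c a := by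
  intro l
  by_cases h : a l = u l
  · rw [h]; exact hzu l
  · rw [← H.within x hx l h]; exact hzx l

theorem Cover.flip (hinv : ∀ s, c (c s) = s) (H : Cover c u a B) {i : Fin d} (hai : a i = u i)
    {s : S} (hs : s ≠ u i) (hs' : s ≠ c (u i)) {y : Fin d → S} (hy : y ∈ B) (hyi : y i = s)
    {z : Fin d → Set S} (hzu : z ∈ realize c u) (hzy : z ∈ realize c y) :
    ∃ y' ∈ B, y' i = c s ∧ Function.update z i (flipLetter c s (z i)) ∈ realize c y' := by
  have h1 : u i ≠ s := hs.symm
  have h2 : u i ≠ c s := fun h => hs' (by rw [h, hinv])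
  have hza := H.mem_a hy hzu hzy
  obtain ⟨y', hy', hzy'⟩ := H.cov _ (realize_flip c hinv s i u z hzu h1 h2)
    (realize_flip c hinv s i a z hza (hai ▸ h1) (hai ▸ h2))
  refine ⟨y', hy', ?_, hzy'⟩
  by_contra hn
  by_cases hs1 : y' i = s
  · have h3 := (hzy' i).2
    have h4 := (hzy i).2
    rw [Function.update_self, hs1] at h3
    rw [hyi] at h4
    rcases h3 with h3 | h3
    · exact h3.2.1 rfl
    · exact h3.1 h4
  · have h5 := realize_flip c hinv s i y' _ hzy' hs1 hn
    rw [flip_flip_point] at h5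
    have := H.eq_of_mem hy hy' hzy h5
    exact hs1 (this ▸ hyi)

theorem Cover.exists_compl (hinv : ∀ s, c (c s) = s) (hne : ∀ s, c s ≠ s) (H : Cover c u a B)
    {i : Fin d} (hai : a i = u i)
    {y : Fin d → S} (hy : y ∈ B) (hyi : y i ≠ u i) : ∃ y' ∈ B, y' i = c (y i) := by
  obtain ⟨z, hzu, hzy⟩ := exists_common c hinv hne u y (H.hu y hy)
  obtain ⟨y', h1, h2, -⟩ := H.flip hinv hai hyi (H.hu y hy i) hy rfl hzu hzy
  exact ⟨y', h1, h2⟩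

open Classical in
/-- If exactly one word of `B` has letter `s` at `i`, those with `c s` partition its flip. -/
theorem Cover.single (hinv : ∀ s, c (c s) = s) (hne : ∀ s, c s ≠ s) (H : Cover c u a B)
    {i : Fin d} (hai : a i = u i) {s : S} (hs : s ≠ u i) (hs' : s ≠ c (u i))
    {x : Fin d → S} (hx : x ∈ B) (hxi : x i = s) (huniq : ∀ y ∈ B, y i = s → y = x) :
    Cover c u (Function.update x i (c s)) (B.filter (fun y => y i = c s)) := by
  have h1 : u i ≠ s := hs.symm
  have h2 : u i ≠ c s := fun h => hs' (by rw [h, hinv])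
  have h3 : c s ≠ c (u i) := fun h => hs (by rw [← hinv s, h, hinv])
  refine ⟨?_, ?_, ?_, ?_, ?_, ?_⟩
  · intro p hp q hq
    exact H.code p (Finset.mem_filter.1 hp).1 q (Finset.mem_filter.1 hq).1
  · intro p hp q hq
    exact H.tf p (Finset.mem_filter.1 hp).1 q (Finset.mem_filter.1 hq).1
  · intro p hp
    exact H.hu p (Finset.mem_filter.1 hp).1
  · intro y hy l hl
    obtain ⟨hyB, hyi⟩ := Finset.mem_filter.1 hy
    by_cases hli : l = i
    · subst hli; rw [Function.update_self]; exact hyi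
    · rw [Function.update_of_ne hli] at hl ⊢
      by_contra hyx
      obtain ⟨z, hzu, hzy, hzn⟩ := exists_common_avoid c hinv hne u y (H.hu y hyB) l (x l) hl
        (Ne.symm hyx)
      obtain ⟨w, hw, hwi, hzw⟩ := H.flip hinv hai h2.symm h3 hyB hyi hzu hzy
      rw [hinv] at hwi
      have := huniq w hw hwi
      subst this
      have h4 := (hzw l).2
      rw [Function.update_of_ne hli] at h4
      exact hzn h4
  · intro l
    by_cases hli : l = i
    · subst hli; rw [Function.update_self]; exact h3
    · rw [Function.update_of_ne hli]; exact H.hu x hx l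
  · intro z hzu hzx
    have h4 := realize_flip_update c hinv s i x z hxi hzx
    have h5 := realize_flip c hinv s i u z hzu h1 h2
    obtain ⟨y, hy, hyi, hzy⟩ := H.flip hinv hai hs hs' hx hxi h5 h4
    rw [flip_flip_point] at hzy
    exact ⟨y, Finset.mem_filter.2 ⟨hy, hyi⟩, hzy⟩

open Classical in
/-- If all words have letter `s` or `c s` at `i`, those with `s` partition a half box. -/
theorem Cover.full (hinv : ∀ s, c (c s) = s) (H : Cover c u a B)
    {i : Fin d} (hai : a i = u i) {s : S} (hs : s ≠ u i) (hs' : s ≠ c (u i))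
    (hall : ∀ y ∈ B, y i = s ∨ y i = c s) :
    Cover c u (Function.update a i s) (B.filter (fun y => y i = s)) := by
  refine ⟨?_, ?_, ?_, ?_, ?_, ?_⟩
  · intro p hp q hq
    exact H.code p (Finset.mem_filter.1 hp).1 q (Finset.mem_filter.1 hq).1
  · intro p hp q hq
    exact H.tf p (Finset.mem_filter.1 hp).1 q (Finset.mem_filter.1 hq).1
  · intro p hp
    exact H.hu p (Finset.mem_filter.1 hp).1
  · intro y hy l hl
    obtain ⟨hyB, hyi⟩ := Finset.mem_filter.1 hy
    by_cases hli : l = i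
    · subst hli; rw [Function.update_self]; exact hyi
    · rw [Function.update_of_ne hli] at hl ⊢
      exact H.within y hyB l hl
  · intro l
    by_cases hli : l = i
    · subst hli; rw [Function.update_self]; exact hs'
    · rw [Function.update_of_ne hli]; exact H.ha l
  · intro z hzu hzx
    have hza : z ∈ realize c a := by
      intro l
      by_cases hli : l = i
      · subst hli; rw [hai]; exact hzu l
      · have := hzx l
        rwa [Function.update_of_ne hli] at this
    obtain ⟨y, hy, hzy⟩ := H.cov z hzu hza
    refine ⟨y, Finset.mem_filter.2 ⟨hy, ?_⟩, hzy⟩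
    refine (hall y hy).resolve_right ?_
    intro h
    have h1 := (hzx i).2
    rw [Function.update_self] at h1
    have h2 := (hzy i).2
    rw [h] at h2
    exact ((hzy i).1 s).1 h1 h2

theorem twin_update (hinv : ∀ s, c (c s) = s) (x : Fin d → S) (i : Fin d) :
    TwinPair c x (Function.update x i (c (x i))) :=
  ⟨i, by simp, fun l hl => by rw [Function.update_of_ne hl]⟩

open Classical in
/-- The number of words with a given letter is at least two. -/
theorem Cover.two_le (hinv : ∀ s, c (c s) = s) (hne : ∀ s, c s ≠ s) (H : Cover c u a B)
    (IH : ∀ (a' : Fin d → S) (B' : Finset (Fin d → S)), B'.card < B.card → Cover c u a' B' →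
      a' ∈ B')
    {i : Fin d} (hai : a i = u i) {x : Fin d → S} (hx : x ∈ B) (hxi : x i ≠ u i) :
    2 ≤ (B.filter (fun y => y i = x i)).card := by
  by_contra hlt
  have hxf : x ∈ B.filter (fun y => y i = x i) := Finset.mem_filter.2 ⟨hx, rfl⟩
  have hle : (B.filter (fun y => y i = x i)).card ≤ 1 := by omega
  have huniq : ∀ y ∈ B, y i = x i → y = x := fun y hy hyi =>
    Finset.card_le_one.1 hle y (Finset.mem_filter.2 ⟨hy, hyi⟩) x hxf
  have H' := H.single hinv hne hai hxi (H.hu x hx i) hx rfl huniq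
  have hcard : (B.filter (fun y => y i = c (x i))).card < B.card := by
    apply Finset.card_lt_card
    refine Finset.filter_ssubset.2 ⟨x, hx, (hne (x i)).symm⟩
  have hmem := IH _ _ hcard H'
  exact H.tf x hx _ (Finset.mem_filter.1 hmem).1 (twin_update hinv x i)

open Classical in
theorem filter_pair_card (hne : ∀ s, c s ≠ s) (B : Finset (Fin d → S)) (i : Fin d) (s : S) :
    (B.filter (fun y => y i = s)).card + (B.filter (fun y => y i = c s)).card =
      (B.filter (fun y => y i = s ∨ y i = c s)).card := by
  rw [Finset.filter_or, Finset.card_union_of_disjoint]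
  rw [Finset.disjoint_filter]
  intro y _ h h'
  exact hne s (h' ▸ h)

open Classical in
/-- It is impossible that all words have letter `s` or `c s` at `i`. -/
theorem Cover.not_full (hinv : ∀ s, c (c s) = s) (hne : ∀ s, c s ≠ s) (H : Cover c u a B)
    (IH : ∀ (a' : Fin d → S) (B' : Finset (Fin d → S)), B'.card < B.card → Cover c u a' B' →
      a' ∈ B')
    {i : Fin d} (hai : a i = u i) {x : Fin d → S} (hx : x ∈ B) (hxi : x i ≠ u i)
    (hall : ∀ y ∈ B, y i = x i ∨ y i = c (x i)) : False := by
  obtain ⟨x', hx', hxi'⟩ := H.exists_compl hinv hne hai hx hxi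
  have h2 : c (x i) ≠ u i := fun h => H.hu x hx i (by rw [← h, hinv])
  have h3 : c (x i) ≠ c (u i) := fun h => hxi (by rw [← hinv (x i), h, hinv])
  have H1 := H.full hinv hai hxi (H.hu x hx i) hall
  have H2 := H.full hinv hai h2 h3 (fun y hy => by rw [hinv]; exact (hall y hy).symm)
  have m1 := IH _ _ (Finset.card_lt_card
    (Finset.filter_ssubset.2 ⟨x', hx', by rw [hxi']; exact hne _⟩)) H1
  have m2 := IH _ _ (Finset.card_lt_card
    (Finset.filter_ssubset.2 ⟨x, hx, (hne _).symm⟩)) H2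
  refine H.tf _ (Finset.mem_filter.1 m1).1 _ (Finset.mem_filter.1 m2).1 ?_
  refine ⟨i, by simp, fun l hl => ?_⟩
  rw [Function.update_of_ne hl, Function.update_of_ne hl]

open Classical in
theorem Cover.mem_of_card_le (hinv : ∀ s, c (c s) = s) (hne : ∀ s, c s ≠ s) (u : Fin d → S) :
    ∀ (n : ℕ) (a : Fin d → S) (B : Finset (Fin d → S)), B.card = n → n ≤ 4 →
      Cover c u a B → a ∈ B := by
  intro n
  induction n using Nat.strong_induction_on with
  | _ n ih =>
  intro a B hcard hn H
  by_contra haB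
  have IH : ∀ (a' : Fin d → S) (B' : Finset (Fin d → S)), B'.card < B.card → Cover c u a' B' →
      a' ∈ B' := fun a' B' h H' => ih B'.card (by omega) a' B' rfl (by omega) H'
  obtain ⟨z, hzu, hza⟩ := exists_common c hinv hne u a H.ha
  obtain ⟨x, hx, -⟩ := H.cov z hzu hza
  have hxa : x ≠ a := fun h => haB (h ▸ hx)
  obtain ⟨i, hi⟩ := Function.ne_iff.1 hxa
  have hai : a i = u i := by
    by_contra h
    exact hi (H.within x hx i h)
  have hxi : x i ≠ u i := hai ▸ hi
  obtain ⟨x', hx', hxi'⟩ := H.exists_compl hinv hne hai hx hxi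
  have h2 : x' i ≠ u i := fun h => H.hu x hx i (by rw [← h, hxi', hinv])
  have c1 := H.two_le hinv hne IH hai hx hxi
  have c2 := H.two_le hinv hne IH hai hx' h2
  rw [hxi'] at c2
  have c3 := filter_pair_card hne B i (x i)
  have c4 := Finset.card_filter_le B (fun y => y i = x i ∨ y i = c (x i))
  have c5 : (B.filter (fun y => y i = x i ∨ y i = c (x i))).card = B.card := by omega
  exact H.not_full hinv hne IH hai hx hxi (Finset.card_filter_eq_iff.1 c5)

open Classical in
theorem Cover.exists_star (hinv : ∀ s, c (c s) = s) (hne : ∀ s, c s ≠ s)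
    (H : Cover c u u B) (hcard : B.card = 5) (i : Fin d) : ∃ v ∈ B, v i = u i := by
  by_contra! hno
  have IH : ∀ (a' : Fin d → S) (B' : Finset (Fin d → S)), B'.card < B.card → Cover c u a' B' →
      a' ∈ B' := fun a' B' h H' => Cover.mem_of_card_le hinv hne u B'.card a' B' rfl (by omega) H'
  have key : ∀ x ∈ B, 4 ≤ (B.filter (fun y => y i = x i ∨ y i = c (x i))).card := by
    intro x hx
    obtain ⟨x', hx', hxi'⟩ := H.exists_compl hinv hne rfl hx (hno x hx)
    have c1 := H.two_le hinv hne IH rfl hx (hno x hx)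
    have c2 := H.two_le hinv hne IH rfl hx' (hno x' hx')
    rw [hxi'] at c2
    have c3 := filter_pair_card hne B i (x i)
    omega
  obtain ⟨x, hx⟩ : B.Nonempty := Finset.card_pos.1 (by omega)
  by_cases hall : ∀ y ∈ B, y i = x i ∨ y i = c (x i)
  · exact H.not_full hinv hne IH rfl hx (hno x hx) hall
  · push Not at hall
    obtain ⟨y, hy, hy1, hy2⟩ := hall
    have k1 := key x hx
    have k2 := key y hy
    have hdis : Disjoint (B.filter (fun w => w i = x i ∨ w i = c (x i)))
        (B.filter (fun w => w i = y i ∨ w i = c (y i))) := by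
      rw [Finset.disjoint_filter]
      intro w _ h h'
      have := hinv (x i); have := hinv (y i)
      grind
    have h1 := Finset.card_union_of_disjoint hdis
    have h2 : (B.filter (fun w => w i = x i ∨ w i = c (x i)) ∪
        B.filter (fun w => w i = y i ∨ w i = c (y i))).card ≤ B.card :=
      Finset.card_le_card (Finset.union_subset (Finset.filter_subset _ _)
        (Finset.filter_subset _ _))
    omega

end

open Classical in
theorem five_le_card_and_rigid_of_covered {S : Type*} [Fintype S] (c : S → S)
    (hinv : ∀ s, c (c s) = s) (hne : ∀ s, c s ≠ s) {d : ℕ}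
    (V : Set (Fin d → S)) (hV : PolyboxCode c V)
    (hVtf : ∀ u ∈ V, ∀ v ∈ V, ¬ TwinPair c u v)
    (u : Fin d → S) (hu : u ∉ V)
    (hcov : realize c u ⊆ ⋃ v ∈ V, realize c v)
    (hmeet : ∀ v ∈ V, (realize c u ∩ realize c v).Nonempty) :
    5 ≤ V.ncard ∧ (V.ncard = 5 → Rigid c V) := by
  have hfin : V.Finite := V.toFinite
  obtain ⟨F, rfl⟩ : ∃ F : Finset (Fin d → S), V = ↑F := ⟨hfin.toFinset, by simp⟩
  rw [Set.ncard_coe_finset]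
  have hnc : ∀ v ∈ F, ∀ l, v l ≠ c (u l) := by
    intro v hv l
    obtain ⟨z, hz1, hz2⟩ := hmeet v hv
    exact not_compl_of_mem c hz1 hz2 l
  -- every box covered by the code is covered by the words meeting it
  have mk : ∀ w : Fin d → S, realize c w ⊆ (⋃ v ∈ (F : Set (Fin d → S)), realize c v) →
      Cover c w w (F.filter (fun v => ∀ l, v l ≠ c (w l))) := by
    intro w hw
    refine ⟨?_, ?_, ?_, ?_, ?_, ?_⟩
    · intro p hp q hq
      exact hV p (Finset.mem_filter.1 hp).1 q (Finset.mem_filter.1 hq).1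
    · intro p hp q hq
      exact hVtf p (Finset.mem_filter.1 hp).1 q (Finset.mem_filter.1 hq).1
    · intro p hp
      exact (Finset.mem_filter.1 hp).2
    · intro b _ l hl
      exact absurd rfl hl
    · intro l h
      exact hne _ h.symm
    · intro z hz _
      obtain ⟨v, hv, hzv⟩ := Set.mem_iUnion₂.1 (hw hz)
      exact ⟨v, Finset.mem_filter.2 ⟨hv, fun l => not_compl_of_mem c hz hzv l⟩, hzv⟩
  have five : ∀ w : Fin d → S, realize c w ⊆ (⋃ v ∈ (F : Set (Fin d → S)), realize c v) →
      w ∉ F → 5 ≤ (F.filter (fun v => ∀ l, v l ≠ c (w l))).card := by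
    intro w hw hwF
    by_contra hlt
    have := Cover.mem_of_card_le hinv hne w _ w _ rfl (by omega) (mk w hw)
    exact hwF (Finset.mem_filter.1 this).1
  have huF : u ∉ F := hu
  refine ⟨(five u hcov huF).trans (Finset.card_filter_le _ _), ?_⟩
  intro h5 W hW hEq
  have allOf : ∀ w : Fin d → S, realize c w ⊆ (⋃ v ∈ (F : Set (Fin d → S)), realize c v) →
      w ∉ F → Cover c w w F := by
    intro w hw hwF
    have h1 := five w hw hwF
    have h2 := Finset.card_filter_le F (fun v => ∀ l, v l ≠ c (w l))
    have h3 : F.filter (fun v => ∀ l, v l ≠ c (w l)) = F :=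
      Finset.eq_of_subset_of_card_le (Finset.filter_subset _ _) (by omega)
    have h4 := mk w hw
    rwa [h3] at h4
  have Hu := allOf u hcov huF
  have hWsub : ∀ w ∈ W, w ∈ F ∨ w = u := by
    intro w hw
    by_contra! hcon
    obtain ⟨hwF, hwu⟩ := hcon
    have hwc : realize c w ⊆ (⋃ v ∈ (F : Set (Fin d → S)), realize c v) := by
      rw [hEq]
      exact Set.subset_biUnion_of_mem (u := fun w => realize c w) hw
    have Hw := allOf w hwc hwF
    obtain ⟨i, hi⟩ := Function.ne_iff.1 hwu
    obtain ⟨v, hv, hvi⟩ := Hu.exists_star hinv hne h5 i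
    obtain ⟨v', hv', hvi'⟩ := Hw.exists_compl hinv hne rfl hv (by rw [hvi]; exact Ne.symm hi)
    exact hnc v' hv' i (by rw [hvi', hvi])
  have huW : u ∉ W := by
    intro huW
    obtain ⟨v, hv⟩ : F.Nonempty := Finset.card_pos.1 (by omega)
    have hvu : v ≠ u := fun h => huF (h ▸ hv)
    obtain ⟨i, hi⟩ := Function.ne_iff.1 hvu
    obtain ⟨z, hzv, -, hzn⟩ := exists_common_avoid c hinv hne v v (fun l h => hne _ h.symm) i (u i)
      (Ne.symm hi) (Ne.symm hi)
    have hz : z ∈ ⋃ w ∈ W, realize c w := by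
      rw [← hEq]
      exact Set.mem_iUnion₂.2 ⟨v, hv, hzv⟩
    obtain ⟨w, hw, hzw⟩ := Set.mem_iUnion₂.1 hz
    by_cases hwu : w = u
    · subst hwu
      exact hzn (hzw i).2
    · obtain ⟨j, hj⟩ := hW u huW w hw (Ne.symm hwu)
      exact hnc w ((hWsub w hw).resolve_right hwu) j hj
  have hWF : ∀ w ∈ W, w ∈ F := fun w hw =>
    (hWsub w hw).resolve_right (fun h => huW (h ▸ hw))
  apply Set.Subset.antisymm hWF
  intro v hv
  obtain ⟨z, hzv, -⟩ := exists_common c hinv hne v v (fun l h => hne _ h.symm)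
  have hz : z ∈ ⋃ w ∈ W, realize c w := by
    rw [← hEq]
    exact Set.mem_iUnion₂.2 ⟨v, hv, hzv⟩
  obtain ⟨w, hw, hzw⟩ := Set.mem_iUnion₂.1 hz
  have := Hu.eq_of_mem hv (hWF w hw) hzv hzw
  rwa [this]
end
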